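/- Fractional Leibniz rule in Lorentz spaces: let n ≥ 1, s ≥ 0, 1 < p, p₁, p₂, p₃, p₄ < ∞ and 1 ≤ q, q₁, q₂, q₃, q₄ ≤ ∞ with 1/p = 1/p₁ + 1/p₂ = 1/p₃ + 1/p₄ and 1/q = 1/q₁ + 1/q₂ = 1/q₃ + 1/q₄. Then there is a constant C such that for all Schwartz functions f, g on ℝⁿ, ‖(−Δ)^{s/2}(fg)‖_{L^{p,q}} ≤ C ( ‖(−Δ)^{s/2} f‖_{L^{p₁,q₁}} ‖g‖_{L^{p₂,q₂}} + ‖f‖_{L^{p₃,q₃}} ‖(−Δ)^{s/2} g‖_{L^{p₄,q₄}} ). -/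

import Mathlib

/-!
The case `s = 0` is Hölder's inequality in Lorentz spaces (`leibniz_zero`). For `s > 0` fix `N > s`.
The function `F = (-Δ)^{s/2}(fg)` is paired with a bounded test function `h`, namely
`1_E · conj F / |F|` (`dual_test`). By Fourier inversion the pairing is a double frequency integral
of `|ξ+η|^s f^(ξ) g^(η)` against a transform of `h` at `ξ+η` (`fracLap_mul_pair`). Put
`qf = |ξ|² + |η|² + ξ·η`, so that `2 qf = |ξ|² + |η|² + |ξ+η|²`. Two Gamma integrals give
(`lintegral_ker`)

`|ξ+η|^s = c ∫∫ t^{N-1} r^{N-s/2-1} qf^N |ξ+η|^{2N} e^{-t(|ξ|²+|η|²) - (t+r)|ξ+η|²} dt dr`.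

Expanding `qf^N` and `|ξ+η|^{2N}` into monomials (`exists_expand`, `exists_expand_norm`) separates
the variables. With `Q_{L,t}` the operator of multiplier `ξ^L e^{-t|ξ|²}`, the pairing is bounded by
finitely many integrals in `t`, `r` of `∫ |Q_{L1,t} f| |Q_{L2,t} g| |Q_{M,t+r} h|`, where
`|L1| + |L2| = 2N = |M|` (`pairing_le`). This expansion replaces a paraproduct decomposition.

One of `L1`, `L2` has length at least `N`. That factor carries the fractional derivative, through
the representation of `|ξ|^{-s}` as a Gamma integral (`plane_wave`); the other factor is at most
`t^{-|L|/2}` times a maximal function (`Qop_le_Mx`). Hardy's inequality and Cauchy–Schwarz in `dt/t`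
(`bilinear_hardy`, `tri_bound`) bound the pairing by the integral of
`S((-Δ)^{s/2} f) · M g` or `M f · S((-Δ)^{s/2} g)` times `S h`, summed over the monomials, where `S`
are square functions of the heat flow and `M` is the maximal function (`pairing_le_Br`).

The square functions are bounded on enough `L^p` spaces (`sq_strong`) by convexity along the heat
flow. For `1 < p < 2` the energy of `|x|^p` and the maximal theorem suffice (`convex_low`,
`energy_low`, `sq_low_real`); for `p = 2m` a Bellman function gives a dual estimate (`bellman`,
`high_duality`, `sq_high_real`).

Lorentz quasinorms are handled through the dyadic quasinorm `nrm`, which is comparable with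
`lorentz` on bounded functions (`lorentz_le_nrm`, `nrm_le_lorentz`) and satisfies Hölder's inequality
(`nrm_mul`). Real interpolation (`marcinkiewicz`) carries `S` and `M` to Lorentz spaces
(`Sf_lorentz`, `Mx_lorentz`). Finally `dual_interp` turns the estimate tested on sets `E` into the
Lorentz bound for `F`; on the dual side it needs `S` only on two Lebesgue spaces, with exponents on
both sides of the conjugate of `p` (`exists_dual_exps`), so no duality of Lorentz spaces enters.
-/


open MeasureTheory Real FourierTransform
open scoped ENNReal

noncomputable section

variable {n : ℕ}

/-- The distribution function `|{x : |f x| > λ}|`. -/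
def distFn (f : EuclideanSpace ℝ (Fin n) → ℂ) (l : ℝ) : ℝ≥0∞ :=
  volume {x | l < ‖f x‖}

/-- The decreasing rearrangement `f*`. -/
def rearr (f : EuclideanSpace ℝ (Fin n) → ℂ) (t : ℝ) : ℝ :=
  sInf {l : ℝ | 0 < l ∧ distFn f l ≤ ENNReal.ofReal t}

/-- The Lorentz quasinorm `‖f‖_{L^{p,q}}`; the second exponent may be `∞`. -/
def lorentz (p : ℝ) (q : ℝ≥0∞) (f : EuclideanSpace ℝ (Fin n) → ℂ) : ℝ≥0∞ :=
  if q = ∞ then ⨆ t ∈ Set.Ioi (0:ℝ), ENNReal.ofReal (t ^ (1/p) * rearr f t)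
  else (∫⁻ t in Set.Ioi (0:ℝ),
      ENNReal.ofReal (t ^ (1/p) * rearr f t) ^ q.toReal / ENNReal.ofReal t) ^ (1/q.toReal)

/-- The fractional Laplacian `(-Δ)^{s/2}`, the Fourier multiplier with symbol `|ξ|^s`. -/
def fracLap (s : ℝ) (f : EuclideanSpace ℝ (Fin n) → ℂ) : EuclideanSpace ℝ (Fin n) → ℂ :=
  𝓕⁻ (fun ξ => ((‖ξ‖ ^ s : ℝ) : ℂ) * 𝓕 f ξ)

/-- The Bessel operator `(1-Δ)^{s/2}`, the Fourier multiplier with symbol `(1+|ξ|²)^{s/2}`. -/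
def besselOp (s : ℝ) (f : EuclideanSpace ℝ (Fin n) → ℂ) : EuclideanSpace ℝ (Fin n) → ℂ :=
  𝓕⁻ (fun ξ => (((1 + ‖ξ‖ ^ 2) ^ (s/2) : ℝ) : ℂ) * 𝓕 f ξ)

/-- The free Schrödinger propagator `e^{itΔ}`, Fourier multiplier with symbol `e^{-it|ξ|²}`. -/
def schrod (t : ℝ) (f : EuclideanSpace ℝ (Fin n) → ℂ) : EuclideanSpace ℝ (Fin n) → ℂ :=
  𝓕⁻ (fun ξ => Complex.exp (-Complex.I * t * (‖ξ‖ ^ 2 : ℝ)) * 𝓕 f ξ)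

/-- The Riesz kernel `K_α`. -/
def rieszKernel (α : ℝ) (x : EuclideanSpace ℝ (Fin n)) : ℝ :=
  Real.Gamma ((n - α) / 2) /
    (Real.Gamma (α / 2) * Real.pi ^ ((n : ℝ) / 2) * 2 ^ α * ‖x‖ ^ ((n : ℝ) - α))

/-- The Riesz potential `I_α f = K_α ∗ f`. -/
def rieszPot (α : ℝ) (f : EuclideanSpace ℝ (Fin n) → ℂ) (x : EuclideanSpace ℝ (Fin n)) : ℂ :=
  ∫ y, (rieszKernel α (x - y) : ℂ) * f y

/-- The nonlinearity `F(u) = λ (I_α ∗ |·|^{-b}|u|^p) |x|^{-b} |u|^{p-2} u`. -/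
def Fnl (lam α b p : ℝ) (u : EuclideanSpace ℝ (Fin n) → ℂ)
    (x : EuclideanSpace ℝ (Fin n)) : ℂ :=
  lam * rieszPot α (fun y => ((‖y‖ ^ (-b) * ‖u y‖ ^ p : ℝ) : ℂ)) x *
    ((‖x‖ ^ (-b) : ℝ) : ℂ) * ((‖u x‖ ^ (p - 2) : ℝ) : ℂ) * u x

/-- Mixed-norm in time: `‖g‖_{L^q_t(I)}` for an `ℝ≥0∞`-valued `g`. -/
def timeLp (q : ℝ≥0∞) (I : Set ℝ) (g : ℝ → ℝ≥0∞) : ℝ≥0∞ :=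
  if q = ∞ then essSup g (volume.restrict I)
  else (∫⁻ t in I, g t ^ q.toReal) ^ (1/q.toReal)

/-- The `H^s = W^s_{2,2}` norm. -/
def hsNorm (s : ℝ) (f : EuclideanSpace ℝ (Fin n) → ℂ) : ℝ≥0∞ :=
  lorentz 2 2 (besselOp s f)

end

/-! ### Gaussian multipliers and their kernels -/

/-- `ℝⁿ` with the Euclidean norm. -/
abbrev Eu (n : ℕ) := EuclideanSpace ℝ (Fin n)

noncomputable section HeatKernels

variable {n : ℕ}

/-- The monomial `ξ^L = ∏_{j ∈ L} ξ_j`; a multi-index is encoded as the list of its coordinates,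
with repetitions, so that `|L|` is the length of the list. -/
def mon (L : List (Fin n)) (ξ : Eu n) : ℝ := (L.map (fun j => ξ j)).prod

/-- The symbol `ξ^L e^{-t|ξ|²}`. -/
def gsym (L : List (Fin n)) (t : ℝ) (ξ : Eu n) : ℂ :=
  ((mon L ξ * exp (-t * ‖ξ‖ ^ 2) : ℝ) : ℂ)

/-- The convolution kernel with symbol `gsym L t`, that is, its inverse Fourier transform. -/
def kap (L : List (Fin n)) (t : ℝ) : Eu n → ℂ := 𝓕⁻ (gsym L t)

/-- The kernel `(π/t)^{n/2} e^{-π²|x|²/t}` of the multiplier `e^{-t|ξ|²}`, for the Fourier transform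
with `2π` in the exponent. -/
def heat (t : ℝ) (x : Eu n) : ℝ := (π / t) ^ ((n : ℝ) / 2) * exp (-(π ^ 2 / t) * ‖x‖ ^ 2)

/-- The operator `Q_{L,t}` with multiplier `ξ^L e^{-t|ξ|²}`, defined as convolution with `kap L t` so
that it acts on all bounded functions. Up to constants it is a derivative of order `|L|` of the heat
flow. -/
def Qop (L : List (Fin n)) (t : ℝ) (f : Eu n → ℂ) (x : Eu n) : ℂ := ∫ y, kap L t (x - y) * f y

lemma mon_nil (ξ : Eu n) : mon [] ξ = 1 := rfl
lemma mon_cons (j : Fin n) (L : List (Fin n)) (ξ : Eu n) : mon (j :: L) ξ = ξ j * mon L ξ := by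
  simp [mon]
lemma mon_append (L M : List (Fin n)) (ξ : Eu n) : mon (L ++ M) ξ = mon L ξ * mon M ξ := by
  simp [mon]

lemma continuous_mon (L : List (Fin n)) : Continuous (mon L) := by
  induction L with
  | nil => exact continuous_const
  | cons j L ih =>
    have : mon (j :: L) = fun ξ => ξ j * mon L ξ := funext (mon_cons j L)
    rw [this]
    fun_prop

lemma abs_coord_le (ξ : Eu n) (j : Fin n) : |ξ j| ≤ ‖ξ‖ := by
  simpa using PiLp.norm_apply_le ξ j

lemma abs_mon_le (L : List (Fin n)) (ξ : Eu n) : |mon L ξ| ≤ ‖ξ‖ ^ L.length := by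
  induction L with
  | nil => simp [mon]
  | cons j L ih =>
    rw [mon_cons, abs_mul, List.length_cons, pow_succ']
    gcongr
    exact abs_coord_le ξ j

lemma continuous_gsym (L : List (Fin n)) (t : ℝ) : Continuous (gsym L t) := by
  unfold gsym
  have := continuous_mon L
  fun_prop

lemma pow_mul_exp_le (k : ℕ) {t : ℝ} (ht : 0 < t) :
    ∃ C > 0, ∀ r : ℝ, 0 ≤ r → r ^ k * exp (-t * r ^ 2) ≤ C * exp (-(t / 2) * r ^ 2) := by
  refine ⟨1 + k.factorial * (2 / t) ^ k, by positivity, fun r hr => ?_⟩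
  have h1 : r ^ k ≤ 1 + (r ^ 2) ^ k := by
    rw [← pow_mul, mul_comm, pow_mul]
    nlinarith [sq_nonneg (r ^ k - 1), pow_nonneg hr k]
  have h2 : (r ^ 2) ^ k ≤ k.factorial * (2 / t) ^ k * exp (t / 2 * r ^ 2) := by
    have := pow_div_factorial_le_exp (t / 2 * r ^ 2) (by positivity) k
    rw [div_le_iff₀ (by positivity)] at this
    have e : (r ^ 2) ^ k = (2 / t) ^ k * (t / 2 * r ^ 2) ^ k := by
      rw [← mul_pow]; congr 1; field_simp
    rw [e]
    calc _ ≤ (2 / t) ^ k * (exp (t / 2 * r ^ 2) * k.factorial) := by gcongr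
      _ = _ := by ring
  have h3 : 1 ≤ exp (t / 2 * r ^ 2) := Real.one_le_exp (by positivity)
  have h4 : r ^ k ≤ (1 + k.factorial * (2 / t) ^ k) * exp (t / 2 * r ^ 2) := by
    nlinarith
  calc r ^ k * exp (-t * r ^ 2)
      ≤ ((1 + k.factorial * (2 / t) ^ k) * exp (t / 2 * r ^ 2)) * exp (-t * r ^ 2) := by gcongr
    _ = (1 + k.factorial * (2 / t) ^ k) * exp (-(t / 2) * r ^ 2) := by
      rw [mul_assoc, ← exp_add]; congr 2; ring

lemma integrable_gauss {t : ℝ} (ht : 0 < t) : Integrable (fun x : Eu n => exp (-t * ‖x‖ ^ 2)) := by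
  have := GaussianFourier.integrable_cexp_neg_mul_sq_norm_add (V := Eu n) (b := (t : ℂ))
    (by simpa using ht) 0 0
  refine (this.norm).congr (Filter.Eventually.of_forall fun x => ?_)
  simp only [Complex.norm_exp]
  congr 1
  simp [← Complex.ofReal_pow]

lemma norm_gsym_le (L : List (Fin n)) (t : ℝ) (ξ : Eu n) :
    ‖gsym L t ξ‖ ≤ ‖ξ‖ ^ L.length * exp (-t * ‖ξ‖ ^ 2) := by
  unfold gsym
  rw [Complex.norm_real, norm_mul, Real.norm_eq_abs, Real.norm_eq_abs, abs_of_pos (exp_pos _)]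
  gcongr
  exact abs_mon_le L ξ

lemma integrable_gsym (L : List (Fin n)) {t : ℝ} (ht : 0 < t) : Integrable (gsym L t) := by
  obtain ⟨C, hC, h⟩ := pow_mul_exp_le L.length ht
  refine ((integrable_gauss (half_pos ht)).const_mul C).mono'
    (continuous_gsym L t).aestronglyMeasurable (Filter.Eventually.of_forall fun ξ => ?_)
  exact (norm_gsym_le L t ξ).trans (h _ (norm_nonneg _))

lemma continuous_fourierInv {m : Eu n → ℂ} (hm : Integrable m) : Continuous (𝓕⁻ m) := by
  have : 𝓕⁻ m = fun x => 𝓕 m (-x) := funext fun x => Real.fourierInv_eq_fourier_neg m x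
  rw [this]
  have h := VectorFourier.fourierIntegral_continuous (e := Real.fourierChar) (μ := (volume : Measure (Eu n)))
    (L := innerₗ (Eu n)) Real.continuous_fourierChar continuous_inner hm
  exact h.comp continuous_neg

lemma continuous_kap (L : List (Fin n)) {t : ℝ} (ht : 0 < t) : Continuous (kap L t) :=
  continuous_fourierInv (integrable_gsym L ht)

lemma heat_pos {t : ℝ} (ht : 0 < t) (x : Eu n) : 0 < heat t x := by
  unfold heat; positivity

lemma heat_neg (t : ℝ) (x : Eu n) : heat t (-x) = heat t x := by simp [heat]

lemma continuous_heat (t : ℝ) : Continuous (heat t : Eu n → ℝ) := by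
  unfold heat; fun_prop

lemma integrable_heat {t : ℝ} (ht : 0 < t) : Integrable (heat t : Eu n → ℝ) :=
  (integrable_gauss (by positivity)).const_mul _

lemma integral_heat {t : ℝ} (ht : 0 < t) : ∫ x : Eu n, heat t x = 1 := by
  unfold heat
  rw [integral_const_mul, GaussianFourier.integral_rexp_neg_mul_sq_norm (by positivity)]
  rw [finrank_euclideanSpace_fin, ← Real.mul_rpow (by positivity) (by positivity)]
  have : π / t * (π / (π ^ 2 / t)) = 1 := by field_simp
  rw [this, Real.one_rpow]

lemma fourier_gauss {t : ℝ} (ht : 0 < t) (x : Eu n) : 𝓕 (gsym [] t) x = (heat t x : ℂ) := by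
  have h := fourier_gaussian_innerProductSpace (V := Eu n) (b := (t : ℂ)) (by simpa using ht) x
  have e : gsym (n := n) [] t = fun v => Complex.exp (-(t : ℂ) * ‖v‖ ^ 2) := by
    funext v; simp [gsym, mon]
  rw [e, h, heat, finrank_euclideanSpace_fin]
  push_cast
  rw [Complex.ofReal_cpow (by positivity)]
  push_cast
  congr 2
  field_simp

lemma kap_nil {t : ℝ} (ht : 0 < t) (x : Eu n) : kap [] t x = (heat t x : ℂ) := by
  rw [kap, Real.fourierInv_eq_fourier_neg, fourier_gauss ht, heat_neg]

lemma kap_single {t : ℝ} (ht : 0 < t) (j : Fin n) (x : Eu n) :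
    kap [j] t x = Complex.I * ((π / t * x j * heat t x : ℝ) : ℂ) := by
  have hint : Integrable (gsym (n := n) [] t) := integrable_gsym [] ht
  have hint2 : Integrable (fun v : Eu n => ‖v‖ * ‖gsym [] t v‖) := by
    obtain ⟨C, hC, h⟩ := pow_mul_exp_le 1 ht
    refine ((integrable_gauss (n := n) (half_pos ht)).const_mul C).mono'
      (by have := continuous_gsym (n := n) [] t; exact (by fun_prop : Continuous _).aestronglyMeasurable)
      (Filter.Eventually.of_forall fun ξ => ?_)
    have := norm_gsym_le [] t ξ
    have h' := h ‖ξ‖ (norm_nonneg _)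
    rw [Real.norm_of_nonneg (by positivity)]
    simp only [List.length_nil, pow_zero, one_mul, pow_one] at this h'
    exact (mul_le_mul_of_nonneg_left this (norm_nonneg _)).trans h'
  have key := Real.hasFDerivAt_fourier hint hint2 (-x)
  have e0 : 𝓕 (gsym (n := n) [] t) = fun x => (heat t x : ℂ) := funext (fourier_gauss ht)
  rw [e0] at key
  have hd : HasFDerivAt (fun x : Eu n => (heat t x : ℂ))
      (Complex.ofRealCLM.comp ((heat t (-x) * (-(π ^ 2 / t))) • (2 • (innerSL ℝ (-x))))) (-x) := by
    have h1 := (hasStrictFDerivAt_norm_sq (F := Eu n) (-x)).hasFDerivAt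
    have h2 := ((h1.const_mul (-(π ^ 2 / t))).exp).const_mul ((π / t) ^ ((n : ℝ) / 2))
    have h3 := Complex.ofRealCLM.hasFDerivAt.comp (-x) h2
    refine h3.congr_fderiv ?_
    congr 1
    ext v
    simp [heat]
    ring
  have huniq := key.unique hd
  have hev := congrArg (fun T => T (EuclideanSpace.single j (1 : ℝ))) huniq
  have hin : ∀ v : Eu n, ((innerSL ℝ : Eu n →L[ℝ] Eu n →L[ℝ] ℝ) v)
      (EuclideanSpace.single j (1 : ℝ)) = v j := fun v => by
    change inner ℝ v (EuclideanSpace.single j (1 : ℝ)) = v j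
    simp [EuclideanSpace.inner_single_right]
  have hl : (𝓕 (VectorFourier.fourierSMulRight (innerSL ℝ) (gsym [] t)) (-x))
      (EuclideanSpace.single j (1 : ℝ)) = -(2 * π * Complex.I) * 𝓕 (gsym [j] t) (-x) := by
    rw [Real.fourier_eq, Real.fourier_eq, ContinuousLinearMap.integral_apply, ← integral_const_mul]
    · congr 1
      funext v
      simp [VectorFourier.fourierSMulRight, gsym, mon, Circle.smul_def, hin]
      ring
    · have : Integrable (VectorFourier.fourierSMulRight (innerSL ℝ) (gsym (n := n) [] t)) := by
        refine (hint2.const_mul (2 * π * ‖innerSL (E := Eu n) ℝ‖)).mono'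
          (AEStronglyMeasurable.fourierSMulRight (L := innerSL ℝ) hint.1) (Filter.Eventually.of_forall fun v => ?_)
        exact (VectorFourier.norm_fourierSMulRight_le (innerSL ℝ) _ v).trans (le_of_eq (by ring))
      exact (Real.fourierIntegral_convergent_iff (-x)).2 this
  rw [hl] at hev
  rw [kap, Real.fourierInv_eq_fourier_neg]
  have hpi : (2 * π * Complex.I : ℂ) ≠ 0 := by simp [Real.pi_ne_zero]
  have : 𝓕 (gsym [j] t) (-x) = -(2 * π * Complex.I)⁻¹ * (-(2 * π * Complex.I) * 𝓕 (gsym [j] t) (-x)) := by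
    field_simp
  rw [this, hev]
  simp [heat_neg, EuclideanSpace.inner_single_right]
  have hpi' : (π : ℂ) ≠ 0 := by simp [Real.pi_ne_zero]
  have hI : Complex.I * Complex.I = -1 := Complex.I_mul_I
  
  field_simp

end HeatKernels

/-! ### Kernel bounds and the semigroup property -/

noncomputable section KernelBounds

variable {n : ℕ}

/-- The convolution theorem on the inverse side: `k * 𝓕⁻ m = 𝓕⁻ (𝓕 k · m)`. -/
lemma conv_fourierInv {k m : Eu n → ℂ} (hk : Integrable k) (hm : Integrable m) (x : Eu n) :
    ∫ y, k (x - y) * 𝓕⁻ m y = 𝓕⁻ (fun ξ => 𝓕 k ξ * m ξ) x := by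
  have hF : ∀ y ξ : Eu n, 𝐞 (inner ℝ ξ y) • m ξ = (𝐞 (inner ℝ ξ y) : ℂ) * m ξ := fun _ _ => rfl
  simp only [Real.fourierInv_eq, Real.fourier_eq, Circle.smul_def, smul_eq_mul]
  simp_rw [← integral_const_mul]
  rw [integral_integral_swap]
  · congr 1
    funext ξ
    have : ∀ y, k (x - y) * ((𝐞 (inner ℝ ξ y) : ℂ) * m ξ) =
        (fun z => (𝐞 (inner ℝ ξ x) : ℂ) * m ξ * ((𝐞 (-inner ℝ z ξ) : ℂ) * k z)) (x - y) := by
      intro y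
      have : (𝐞 (inner ℝ ξ y) : ℂ) = (𝐞 (inner ℝ ξ x) : ℂ) * (𝐞 (-inner ℝ (x - y) ξ) : ℂ) := by
        rw [← Circle.coe_mul, ← AddChar.map_add_eq_mul]
        congr 2
        rw [inner_sub_left, real_inner_comm ξ x, real_inner_comm ξ y]
        ring
      simp only [this]
      ring
    simp_rw [this]
    rw [integral_sub_left_eq_self (fun z => (𝐞 (inner ℝ ξ x) : ℂ) * m ξ * ((𝐞 (-inner ℝ z ξ) : ℂ) * k z)),
      integral_const_mul]
    ring
  · have h1 : Integrable (fun p : Eu n × Eu n => k (x - p.1) * m p.2) (volume.prod volume) :=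
      (hk.comp_sub_left x).mul_prod hm
    refine h1.mono ?_ (Filter.Eventually.of_forall fun p => ?_)
    · have hc : Continuous (fun p : Eu n × Eu n => (𝐞 (inner ℝ p.2 p.1) : ℂ)) := by
        have := Real.continuous_fourierChar
        fun_prop
      have := hc.aestronglyMeasurable (μ := (volume : Measure (Eu n)).prod volume) |>.mul h1.1
      refine this.congr (Filter.Eventually.of_forall fun p => ?_)
      simp only [Pi.mul_apply, Function.uncurry]
      ring
    · simp only [Function.uncurry, norm_mul]
      rw [show ‖(𝐞 (inner ℝ p.2 p.1) : ℂ)‖ = 1 from Circle.norm_coe _, one_mul]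

lemma fourier_kap_of {L : List (Fin n)} {t : ℝ} (ht : 0 < t) (h : Integrable (kap L t)) :
    𝓕 (kap L t) = gsym L t := by
  have hF : Integrable (𝓕 (gsym L t)) := by
    have e : 𝓕 (gsym L t) = fun x => kap L t (-x) := by
      funext x; rw [kap, Real.fourierInv_eq_fourier_neg, neg_neg]
    rw [e]; exact h.comp_neg
  exact Continuous.fourier_fourierInv_eq (continuous_gsym L t) (integrable_gsym L ht) hF

lemma gsym_append (L M : List (Fin n)) (a b : ℝ) (ξ : Eu n) :
    gsym L a ξ * gsym M b ξ = gsym (L ++ M) (a + b) ξ := by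
  unfold gsym
  rw [mon_append, ← Complex.ofReal_mul]
  congr 1
  rw [show -(a + b) * ‖ξ‖ ^ 2 = -a * ‖ξ‖ ^ 2 + -b * ‖ξ‖ ^ 2 by ring, exp_add]
  ring

/-- The semigroup law for the kernels. Integrability of the first factor is a hypothesis because the
law is used in the induction that proves `kap_le`, from which integrability follows. -/
lemma kap_conv_of {L M : List (Fin n)} {a b : ℝ} (ha : 0 < a) (hb : 0 < b)
    (h : Integrable (kap L a)) (x : Eu n) :
    ∫ y, kap L a (x - y) * kap M b y = kap (L ++ M) (a + b) x := by
  change ∫ y, kap L a (x - y) * 𝓕⁻ (gsym M b) y = _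
  rw [conv_fourierInv h (integrable_gsym M hb), fourier_kap_of ha h]
  simp only [gsym_append]
  rfl

lemma integrable_kap_nil {t : ℝ} (ht : 0 < t) : Integrable (kap (n := n) [] t) := by
  have : kap (n := n) [] t = fun x => (heat t x : ℂ) := funext (kap_nil ht)
  rw [this]
  exact (integrable_heat ht).ofReal

lemma heat_conv {a b : ℝ} (ha : 0 < a) (hb : 0 < b) (x : Eu n) :
    ∫ y, heat a (x - y) * heat b y = heat (a + b) x := by
  have := kap_conv_of (M := []) ha hb (integrable_kap_nil (n := n) ha) x
  simp only [kap_nil ha, kap_nil hb, kap_nil (add_pos ha hb), List.nil_append, ← Complex.ofReal_mul] at this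
  rw [integral_complex_ofReal] at this
  exact_mod_cast this

lemma heat_le_two {t : ℝ} (ht : 0 < t) (x : Eu n) :
    heat t x = 2 ^ ((n : ℝ) / 2) * exp (-(π ^ 2 / (2 * t)) * ‖x‖ ^ 2) * heat (2 * t) x := by
  unfold heat
  have e : π / t = 2 * (π / (2 * t)) := by field_simp
  have e2 : -(π ^ 2 / t) * ‖x‖ ^ 2 = -(π ^ 2 / (2 * t)) * ‖x‖ ^ 2 + -(π ^ 2 / (2 * t)) * ‖x‖ ^ 2 := by
    field_simp; ring
  rw [e2, exp_add, e, Real.mul_rpow (by norm_num) (by positivity)]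
  ring

/-- One derivative costs a factor `t^{-1/2}`; the Gaussian absorbing the polynomial weight is the one
at time `2t`. -/
lemma kap_single_le {t : ℝ} (ht : 0 < t) (j : Fin n) (x : Eu n) :
    ‖kap [j] t x‖ ≤ 2 ^ ((n : ℝ) / 2) * t ^ (-(1 : ℝ) / 2) * heat (2 * t) x := by
  rw [kap_single ht, norm_mul, Complex.norm_I, one_mul, Complex.norm_real, norm_mul, norm_mul,
    Real.norm_of_nonneg (heat_pos ht x).le, Real.norm_of_nonneg (by positivity : 0 ≤ π / t), heat_le_two ht]
  have hx : ‖x j‖ ≤ ‖x‖ := PiLp.norm_apply_le x j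
  have hh := heat_pos (show 0 < 2 * t by positivity) x
  have key : π / t * ‖x‖ * exp (-(π ^ 2 / (2 * t)) * ‖x‖ ^ 2) ≤ t ^ (-(1 : ℝ) / 2) := by
    have hs : t ^ (-(1 : ℝ) / 2) = (√t)⁻¹ := by
      rw [Real.sqrt_eq_rpow, ← Real.rpow_neg ht.le]; congr 1; ring
    rw [hs]
    set y := π * ‖x‖ / √t with hy
    have hst : √t * √t = t := Real.mul_self_sqrt ht.le
    have hst0 : 0 < √t := Real.sqrt_pos.2 ht
    have e1 : π / t * ‖x‖ = (√t)⁻¹ * y := by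
      rw [hy]; nth_rewrite 1 [← hst]; field_simp
    have e2 : -(π ^ 2 / (2 * t)) * ‖x‖ ^ 2 = -(y ^ 2 / 2) := by
      rw [hy, div_pow, Real.sq_sqrt ht.le]; field_simp
    rw [e1, e2, exp_neg, mul_assoc]
    have h1 : y ≤ exp (y ^ 2 / 2) := by
      have := Real.add_one_le_exp (y ^ 2 / 2)
      nlinarith [sq_nonneg (y - 1)]
    have : y * (exp (y ^ 2 / 2))⁻¹ ≤ 1 := by
      rw [← div_eq_mul_inv, div_le_one (exp_pos _)]; exact h1
    calc _ ≤ (√t)⁻¹ * 1 := by gcongr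
      _ = _ := mul_one _
  calc π / t * ‖x j‖ * (2 ^ ((n : ℝ) / 2) * exp (-(π ^ 2 / (2 * t)) * ‖x‖ ^ 2) * heat (2 * t) x)
      ≤ π / t * ‖x‖ * (2 ^ ((n : ℝ) / 2) * exp (-(π ^ 2 / (2 * t)) * ‖x‖ ^ 2) * heat (2 * t) x) := by
        gcongr
    _ = 2 ^ ((n : ℝ) / 2) * (π / t * ‖x‖ * exp (-(π ^ 2 / (2 * t)) * ‖x‖ ^ 2)) * heat (2 * t) x := by ring
    _ ≤ _ := by gcongr

lemma integrable_kap_single {t : ℝ} (ht : 0 < t) (j : Fin n) : Integrable (kap [j] t) :=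
  ((integrable_heat (show 0 < 2 * t by positivity)).const_mul _).mono'
    (continuous_kap _ ht).aestronglyMeasurable (Filter.Eventually.of_forall fun x => kap_single_le ht j x)

lemma integrable_heat_mul_heat {a b : ℝ} (ha : 0 < a) (hb : 0 < b) (x : Eu n) :
    Integrable (fun y => heat a (x - y) * heat b y) := by
  by_contra h
  have := heat_conv ha hb x
  rw [integral_undef h] at this
  exact (heat_pos (add_pos ha hb) x).ne this

/-- Gaussian bound for the kernels, by induction on `L`: `kap (j :: L) t` is the convolution of
`kap [j] (t/2)` and `kap L (t/2)`, and two heat kernels at time `t` convolve to the one at time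
`2t`. -/
lemma kap_le (L : List (Fin n)) : ∃ C > 0, ∀ t > 0, ∀ x : Eu n,
    ‖kap L t x‖ ≤ C * t ^ (-(L.length : ℝ) / 2) * heat (2 * t) x := by
  induction L with
  | nil =>
    refine ⟨2 ^ ((n : ℝ) / 2), by positivity, fun t ht x => ?_⟩
    rw [kap_nil ht, Complex.norm_real, Real.norm_of_nonneg (heat_pos ht x).le, heat_le_two ht]
    have hh := heat_pos (show 0 < 2 * t by positivity) x
    simp only [List.length_nil, Nat.cast_zero, neg_zero, zero_div, rpow_zero, mul_one]
    have : exp (-(π ^ 2 / (2 * t)) * ‖x‖ ^ 2) ≤ 1 := by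
      rw [Real.exp_le_one_iff]
      have : 0 ≤ π ^ 2 / (2 * t) * ‖x‖ ^ 2 := by positivity
      linarith
    calc _ ≤ 2 ^ ((n : ℝ) / 2) * 1 * heat (2 * t) x := by gcongr
      _ = _ := by ring
  | cons j L ih =>
    obtain ⟨C, hC, h⟩ := ih
    refine ⟨2 ^ ((n : ℝ) / 2) * C * (1 / 2 : ℝ) ^ (-((j :: L).length : ℝ) / 2), by positivity, fun t ht x => ?_⟩
    have ht2 : 0 < t / 2 := half_pos ht
    have e := kap_conv_of (M := L) ht2 ht2 (integrable_kap_single ht2 j) x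
    rw [show [j] ++ L = j :: L from rfl, add_halves] at e
    rw [← e]
    refine (norm_integral_le_of_norm_le
      ((integrable_heat_mul_heat (show 0 < 2 * (t / 2) by positivity)
        (show 0 < 2 * (t / 2) by positivity) x).const_mul
        (2 ^ ((n : ℝ) / 2) * (t / 2) ^ (-(1 : ℝ) / 2) * (C * (t / 2) ^ (-(L.length : ℝ) / 2))))
      (Filter.Eventually.of_forall fun y => ?_)).trans ?_
    · rw [norm_mul]
      have h1 := kap_single_le ht2 j (x - y)
      have h2 := h (t / 2) ht2 y
      refine (mul_le_mul h1 h2 (norm_nonneg _) ((norm_nonneg _).trans h1)).trans (le_of_eq (by ring))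
    · rw [integral_const_mul, heat_conv (by positivity) (by positivity)]
      have : (t / 2) ^ (-(1 : ℝ) / 2) * (t / 2) ^ (-(L.length : ℝ) / 2) =
          (1 / 2 : ℝ) ^ (-((j :: L).length : ℝ) / 2) * t ^ (-((j :: L).length : ℝ) / 2) := by
        rw [← Real.rpow_add ht2, ← Real.mul_rpow (by positivity) ht.le]
        congr 1
        · ring
        · simp only [List.length_cons]; push_cast; ring
      rw [show 2 * (t / 2) + 2 * (t / 2) = 2 * t by ring]
      refine le_of_eq ?_
      calc _ = 2 ^ ((n : ℝ) / 2) * C * ((t / 2) ^ (-(1 : ℝ) / 2) * (t / 2) ^ (-(L.length : ℝ) / 2)) * heat (2 * t) x := by ring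
        _ = _ := by rw [this]; ring

lemma integrable_kap (L : List (Fin n)) {t : ℝ} (ht : 0 < t) : Integrable (kap L t) := by
  obtain ⟨C, hC, h⟩ := kap_le L
  exact ((integrable_heat (show 0 < 2 * t by positivity)).const_mul _).mono'
    (continuous_kap _ ht).aestronglyMeasurable (Filter.Eventually.of_forall fun x => h t ht x)

lemma fourier_kap (L : List (Fin n)) {t : ℝ} (ht : 0 < t) : 𝓕 (kap L t) = gsym L t :=
  fourier_kap_of ht (integrable_kap L ht)

lemma kap_conv (L M : List (Fin n)) {a b : ℝ} (ha : 0 < a) (hb : 0 < b) (x : Eu n) :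
    ∫ y, kap L a (x - y) * kap M b y = kap (L ++ M) (a + b) x :=
  kap_conv_of ha hb (integrable_kap L ha) x

lemma integral_kap {L : List (Fin n)} (hL : L ≠ []) {t : ℝ} (ht : 0 < t) : ∫ x, kap L t x = 0 := by
  have h := congrFun (fourier_kap L ht) 0
  rw [Real.fourier_eq] at h
  simp only [inner_zero_right, neg_zero, AddChar.map_zero_eq_one, one_smul] at h
  rw [h]
  obtain ⟨j, L', rfl⟩ := List.exists_cons_of_ne_nil hL
  simp [gsym, mon_cons]

/-- Bounded measurable functions. -/
structure Bdd (f : Eu n → ℂ) : Prop where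
  meas : Measurable f
  bdd : ∃ B, ∀ x, ‖f x‖ ≤ B

lemma Bdd.integrable_mul {f k : Eu n → ℂ} (hf : Bdd f) (hk : Integrable k) :
    Integrable (fun y => k y * f y) := by
  obtain ⟨B, hB⟩ := hf.bdd
  exact hk.mul_bdd (c := B) hf.meas.aestronglyMeasurable (Filter.Eventually.of_forall hB)

lemma Bdd.integrable_conv {f k : Eu n → ℂ} (hf : Bdd f) (hk : Integrable k) (x : Eu n) :
    Integrable (fun y => k (x - y) * f y) :=
  hf.integrable_mul (hk.comp_sub_left x)

lemma Bdd.Qop {f : Eu n → ℂ} (hf : Bdd f) (L : List (Fin n)) {t : ℝ} (ht : 0 < t) :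
    Bdd (Qop L t f) := by
  refine ⟨?_, ?_⟩
  · have h : StronglyMeasurable (fun p : Eu n × Eu n => kap L t (p.1 - p.2) * f p.2) :=
      (((continuous_kap L ht).measurable.comp (measurable_fst.sub measurable_snd)).mul
        (hf.meas.comp measurable_snd)).stronglyMeasurable
    exact h.integral_prod_right.measurable
  · obtain ⟨B, hB⟩ := hf.bdd
    refine ⟨(∫ y, ‖kap L t y‖) * B, fun x => ?_⟩
    refine (norm_integral_le_of_norm_le (((integrable_kap L ht).norm.comp_sub_left x).mul_const B)
      (Filter.Eventually.of_forall fun y => ?_)).trans ?_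
    · rw [norm_mul]; gcongr; exact hB y
    · rw [integral_mul_const, integral_sub_left_eq_self (fun y => ‖kap L t y‖)]

/-- The semigroup law `Q_{L,a} Q_{M,b} = Q_{LM,a+b}` on bounded functions. -/
lemma Qop_comp {f : Eu n → ℂ} (hf : Bdd f) (L M : List (Fin n)) {a b : ℝ} (ha : 0 < a) (hb : 0 < b)
    (x : Eu n) : Qop L a (Qop M b f) x = Qop (L ++ M) (a + b) f x := by
  unfold Qop
  simp_rw [← integral_const_mul]
  rw [integral_integral_swap]
  · congr 1
    funext z
    rw [← kap_conv L M ha hb, ← integral_mul_const]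
    rw [← integral_sub_right_eq_self (fun y => kap L a (x - z - y) * kap M b y * f z) z]
    congr 1
    funext y
    rw [show x - z - (y - z) = x - y by abel]
    ring
  · have h0 := Integrable.convolution_integrand (μ := (volume : Measure (Eu n))) (ν := volume)
      (ContinuousLinearMap.mul ℂ ℂ)
      ((integrable_kap L ha).comp_sub_left x) (integrable_kap M hb).comp_neg
    have h1 := h0.swap
    obtain ⟨B, hB⟩ := hf.bdd
    have := h1.mul_bdd (c := B)
      (hf.meas.comp (measurable_snd (α := Eu n))).aestronglyMeasurable (Filter.Eventually.of_forall fun p => hB p.2)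
    refine this.congr (Filter.Eventually.of_forall fun p => ?_)
    simp [Function.uncurry, mul_assoc]

lemma enorm_heat {t : ℝ} (ht : 0 < t) (x : Eu n) : ‖heat t x‖ₑ = ENNReal.ofReal (heat t x) := by
  rw [← ofReal_norm, Real.norm_of_nonneg (heat_pos ht x).le]

lemma enorm_Qop_le (L : List (Fin n)) : ∃ C > 0, ∀ t > 0, ∀ (f : Eu n → ℂ) (x : Eu n),
    ‖Qop L t f x‖ₑ ≤ ENNReal.ofReal (C * t ^ (-(L.length : ℝ) / 2)) *
      ∫⁻ y, ENNReal.ofReal (heat (2 * t) (x - y)) * ‖f y‖ₑ := by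
  obtain ⟨C, hC, h⟩ := kap_le L
  refine ⟨C, hC, fun t ht f x => ?_⟩
  rw [← lintegral_const_mul' _ _ ENNReal.ofReal_ne_top]
  refine (enorm_integral_le_lintegral_enorm _).trans (lintegral_mono fun y => ?_)
  rw [enorm_mul, ← mul_assoc, ← ENNReal.ofReal_mul (by positivity)]
  gcongr
  rw [← ofReal_norm]
  exact ENNReal.ofReal_le_ofReal (h t ht _)

end KernelBounds

/-! ### The maximal function -/

noncomputable section Maximal

variable {n : ℕ}

/-- The uncentred Hardy–Littlewood maximal function over open balls, for `[0,∞]`-valued functions. -/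
def Mx (f : Eu n → ℝ≥0∞) (x : Eu n) : ℝ≥0∞ :=
  ⨆ (c : Eu n) (r : ℝ) (_ : 0 < r), (Metric.ball c r).indicator
    (fun _ => (∫⁻ y in Metric.ball c r, f y) / volume (Metric.ball c r)) x

lemma measurable_Mx (f : Eu n → ℝ≥0∞) : Measurable (Mx f) := by
  apply LowerSemicontinuous.measurable
  refine lowerSemicontinuous_iSup fun c => lowerSemicontinuous_iSup fun r =>
    lowerSemicontinuous_iSup fun _ => ?_
  exact Metric.isOpen_ball.lowerSemicontinuous_indicator zero_le

lemma avg_le_Mx (f : Eu n → ℝ≥0∞) {c x : Eu n} {r : ℝ} (hr : 0 < r) (hx : x ∈ Metric.ball c r) :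
    (∫⁻ y in Metric.ball c r, f y) / volume (Metric.ball c r) ≤ Mx f x := by
  refine le_trans ?_ (le_iSup_of_le c (le_iSup_of_le r (le_iSup_of_le hr le_rfl)))
  rw [Set.indicator_of_mem hx]

lemma Mx_mono {f g : Eu n → ℝ≥0∞} (h : ∀ x, f x ≤ g x) (x : Eu n) : Mx f x ≤ Mx g x := by
  refine iSup_mono fun c => iSup_mono fun r => iSup_mono fun _ => ?_
  refine Set.indicator_le_indicator ?_
  gcongr
  exact h _

lemma Mx_add {f g : Eu n → ℝ≥0∞} (hf : Measurable f) (x : Eu n) :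
    Mx (fun x => f x + g x) x ≤ Mx f x + Mx g x := by
  refine iSup_le fun c => iSup_le fun r => iSup_le fun hr => ?_
  by_cases hx : x ∈ Metric.ball c r
  · rw [Set.indicator_of_mem hx, lintegral_add_left hf, ENNReal.add_div]
    exact add_le_add (avg_le_Mx f hr hx) (avg_le_Mx g hr hx)
  · rw [Set.indicator_of_notMem hx]; exact zero_le

lemma Mx_le_of_le {f : Eu n → ℝ≥0∞} {B : ℝ≥0∞} (h : ∀ x, f x ≤ B) (x : Eu n) : Mx f x ≤ B := by
  refine iSup_le fun c => iSup_le fun r => iSup_le fun hr => ?_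
  by_cases hx : x ∈ Metric.ball c r
  · rw [Set.indicator_of_mem hx]
    refine ENNReal.div_le_of_le_mul ?_
    calc _ ≤ ∫⁻ y in Metric.ball c r, B := lintegral_mono fun y => h y
      _ = _ := by rw [setLIntegral_const]
  · rw [Set.indicator_of_notMem hx]; exact zero_le

/-- The weak type `(1,1)` bound, by the Vitali covering lemma. -/
lemma weak_Mx (hn : 1 ≤ n) (f : Eu n → ℝ≥0∞) {l : ℝ≥0∞} (hl : l ≠ 0) (hl' : l ≠ ∞) :
    l * volume {x | l < Mx f x} ≤ 5 ^ n * ∫⁻ y, f y := by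
  have : Nonempty (Fin n) := ⟨⟨0, hn⟩⟩
  by_cases hI : ∫⁻ y, f y = ∞
  · rw [hI, ENNReal.mul_top (by positivity)]; exact le_top
  set T : Set (Eu n × ℝ) := {a | 0 < a.2 ∧ l * volume (Metric.ball a.1 a.2) <
    ∫⁻ y in Metric.ball a.1 a.2, f y} with hT
  have vol : ∀ (x : Eu n) {r : ℝ}, 0 < r → volume (Metric.ball x r) = ENNReal.ofReal (r ^ n) *
      volume (Metric.ball (0 : Eu n) 1) := by
    intro x r hr
    rw [Measure.addHaar_ball_of_pos volume x hr]; simp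
  have v0 : volume (Metric.ball (0 : Eu n) 1) ≠ 0 := (Metric.measure_ball_pos _ _ one_pos).ne'
  have v1 : volume (Metric.ball (0 : Eu n) 1) ≠ ∞ := measure_ball_lt_top.ne
  set v := volume (Metric.ball (0 : Eu n) 1)
  have hR : ∀ a ∈ T, a.2 ≤ max 1 (((∫⁻ y, f y) / (l * v)).toReal) := by
    rintro ⟨c, r⟩ ⟨hr, h⟩
    simp only at hr h ⊢
    by_cases h1 : r ≤ 1
    · exact le_max_of_le_left h1
    refine le_max_of_le_right ?_
    have h2 : r ≤ r ^ n := le_self_pow₀ (by linarith) (by omega)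
    refine h2.trans ?_
    have h3 : ENNReal.ofReal (r ^ n) ≤ (∫⁻ y, f y) / (l * v) := by
      rw [ENNReal.le_div_iff_mul_le (Or.inl (mul_ne_zero hl v0)) (Or.inl (ENNReal.mul_ne_top hl' v1))]
      rw [vol c hr] at h
      calc _ = l * (ENNReal.ofReal (r ^ n) * v) := by ring
        _ ≤ _ := h.le.trans (setLIntegral_le_lintegral _ _)
    rw [← ENNReal.ofReal_le_iff_le_toReal]
    · exact h3
    · exact ENNReal.div_ne_top hI (mul_ne_zero hl v0)
  obtain ⟨u, huT, hdis, hcov⟩ := Vitali.exists_disjoint_subfamily_covering_enlargement_closedBall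
    T (fun a => a.1) (fun a => a.2) _ hR 5 (by norm_num)
  have hdis' : u.PairwiseDisjoint (fun a : Eu n × ℝ => Metric.ball a.1 a.2) :=
    hdis.mono fun a => Metric.ball_subset_closedBall
  have hcount : u.Countable := by
    refine hdis'.countable_of_isOpen (fun a _ => Metric.isOpen_ball) fun a ha => ?_
    exact ⟨a.1, Metric.mem_ball_self (huT ha).1⟩
  have hsub : {x | l < Mx f x} ⊆ ⋃ b ∈ u, Metric.closedBall b.1 (5 * b.2) := by
    intro x hx
    simp only [Set.mem_ofPred_eq, Mx, lt_iSup_iff] at hx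
    obtain ⟨c, r, hr, h⟩ := hx
    have hxm : x ∈ Metric.ball c r := by
      by_contra hxm
      rw [Set.indicator_of_notMem hxm] at h
      exact not_lt_bot h
    rw [Set.indicator_of_mem hxm] at h
    have hTm : (c, r) ∈ T := by
      refine ⟨hr, ?_⟩
      rwa [ENNReal.lt_div_iff_mul_lt (Or.inl (Metric.measure_ball_pos _ _ hr).ne')
        (Or.inl measure_ball_lt_top.ne)] at h
    obtain ⟨b, hb, hbc⟩ := hcov _ hTm
    simp only [Set.mem_iUnion]
    exact ⟨b, hb, hbc (Metric.ball_subset_closedBall hxm)⟩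
  have := hcount.to_subtype
  calc l * volume {x | l < Mx f x}
      ≤ l * ∑' b : u, volume (Metric.closedBall b.1.1 (5 * b.1.2)) := by
        gcongr
        refine (measure_mono hsub).trans ?_
        exact measure_biUnion_le _ hcount _
    _ = ∑' b : u, l * volume (Metric.closedBall b.1.1 (5 * b.1.2)) := ENNReal.tsum_mul_left.symm
    _ ≤ ∑' b : u, 5 ^ n * ∫⁻ y in Metric.ball b.1.1 b.1.2, f y := by
        refine ENNReal.tsum_le_tsum fun b => ?_
        have hb := huT b.2
        have h5 : volume (Metric.closedBall b.1.1 (5 * b.1.2)) = 5 ^ n * volume (Metric.ball b.1.1 b.1.2) := by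
          rw [Measure.addHaar_closedBall _ _ (by linarith [hb.1]), vol _ hb.1, ← mul_assoc]
          congr 1
          simp only [finrank_euclideanSpace, Fintype.card_fin]
          rw [mul_pow, ENNReal.ofReal_mul (by positivity), ENNReal.ofReal_pow (by positivity)]
          congr 2
          norm_num
        rw [h5]
        calc _ = 5 ^ n * (l * volume (Metric.ball b.1.1 b.1.2)) := by ring
          _ ≤ _ := by gcongr; exact hb.2.le
    _ = 5 ^ n * ∑' b : u, ∫⁻ y in Metric.ball b.1.1 b.1.2, f y := ENNReal.tsum_mul_left
    _ = 5 ^ n * ∫⁻ y in ⋃ b ∈ u, Metric.ball b.1 b.2, f y := by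
        rw [lintegral_biUnion hcount (fun a _ => measurableSet_ball) hdis']
    _ ≤ _ := mul_le_mul_right (setLIntegral_le_lintegral _ _) _

lemma heat_superlevel {t : ℝ} (ht : 0 < t) (x : Eu n) {l : ℝ} (hl : 0 < l) :
    {y : Eu n | l < heat t (x - y)} = ∅ ∨ ∃ r > 0, {y : Eu n | l < heat t (x - y)} = Metric.ball x r := by
  have hA : 0 < (π / t) ^ ((n : ℝ) / 2) := by positivity
  set A := (π / t) ^ ((n : ℝ) / 2) with hAd
  have key : ∀ y : Eu n, l < heat t (x - y) ↔ ‖x - y‖ ^ 2 < t / π ^ 2 * Real.log (A / l) := by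
    intro y
    rw [heat, ← hAd, mul_comm, ← div_lt_iff₀ hA, ← Real.log_lt_iff_lt_exp (by positivity),
      Real.log_div hl.ne' hA.ne', Real.log_div hA.ne' hl.ne']
    have h0 : 0 < t / π ^ 2 := by positivity
    have : ‖x - y‖ ^ 2 = t / π ^ 2 * (π ^ 2 / t * ‖x - y‖ ^ 2) := by field_simp
    rw [neg_mul, this, mul_lt_mul_iff_right₀ h0, ← this]
    constructor <;> intro h <;> linarith
  by_cases hpos : 0 < t / π ^ 2 * Real.log (A / l)
  · right
    refine ⟨√(t / π ^ 2 * Real.log (A / l)), Real.sqrt_pos.2 hpos, ?_⟩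
    ext y
    rw [Set.mem_ofPred_eq, key, Metric.mem_ball, dist_comm, dist_eq_norm, Real.lt_sqrt (norm_nonneg _)]
  · left
    ext y
    simp only [Set.mem_ofPred_eq, key, Set.mem_empty_iff_false, iff_false, not_lt]
    exact (not_lt.1 hpos).trans (sq_nonneg _)

lemma lintegral_heat {t : ℝ} (ht : 0 < t) (x : Eu n) :
    ∫⁻ y, ENNReal.ofReal (heat t (x - y)) = 1 := by
  rw [lintegral_sub_left_eq_self (fun y => ENNReal.ofReal (heat t y)) x,
    ← ofReal_integral_eq_lintegral_ofReal (integrable_heat ht)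
    (Filter.Eventually.of_forall fun y => (heat_pos ht y).le), integral_heat ht]
  simp

/-- Gaussian averages are dominated by the maximal function, since the superlevel sets of the heat
kernel are balls. -/
lemma heat_le_Mx {t : ℝ} (ht : 0 < t) {f : Eu n → ℝ≥0∞} (hf : Measurable f) (x : Eu n) :
    ∫⁻ y, ENNReal.ofReal (heat t (x - y)) * f y ≤ Mx f x := by
  have hm : Measurable (fun y : Eu n => heat t (x - y)) :=
    ((continuous_heat t).comp (continuous_const.sub continuous_id)).measurable
  have e1 : ∫⁻ y, ENNReal.ofReal (heat t (x - y)) * f y =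
      ∫⁻ l in Set.Ioi (0:ℝ), (volume.withDensity f) {y | l < heat t (x - y)} := by
    rw [← lintegral_eq_lintegral_meas_lt (volume.withDensity f)
      (Filter.Eventually.of_forall fun y => (heat_pos ht _).le) hm.aemeasurable,
      lintegral_withDensity_eq_lintegral_mul _ hf (by fun_prop)]
    simp [mul_comm]
  have e2 : ∫⁻ l in Set.Ioi (0:ℝ), volume {y : Eu n | l < heat t (x - y)} = 1 := by
    rw [← lintegral_eq_lintegral_meas_lt volume
      (Filter.Eventually.of_forall fun y => (heat_pos ht _).le) hm.aemeasurable,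
      lintegral_heat ht]
  rw [e1]
  calc _ ≤ ∫⁻ l in Set.Ioi (0:ℝ), Mx f x * volume {y : Eu n | l < heat t (x - y)} := by
        refine setLIntegral_mono' measurableSet_Ioi fun l hl => ?_
        rcases heat_superlevel ht x hl with h | ⟨r, hr, h⟩
        · rw [h]; simp
        · rw [h, withDensity_apply _ measurableSet_ball]
          have := avg_le_Mx f hr (Metric.mem_ball_self hr : x ∈ Metric.ball x r)
          rwa [ENNReal.div_le_iff (Metric.measure_ball_pos _ _ hr).ne' measure_ball_lt_top.ne] at this
    _ = Mx f x := by
        rw [lintegral_const_mul'' , e2, mul_one]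
        have : Antitone (fun l : ℝ => volume {y : Eu n | l < heat t (x - y)}) := by
          intro a b hab
          exact measure_mono fun y hy => lt_of_le_of_lt hab hy
        exact this.measurable.aemeasurable

/-- `Q_{L,t} f` is dominated by `t^{-|L|/2}` times the maximal function of `f`. -/
lemma Qop_le_Mx (L : List (Fin n)) : ∃ C > 0, ∀ t > 0, ∀ (f : Eu n → ℂ), Measurable f → ∀ x,
    ‖Qop L t f x‖ₑ ≤ ENNReal.ofReal (C * t ^ (-(L.length : ℝ) / 2)) * Mx (fun y => ‖f y‖ₑ) x := by
  obtain ⟨C, hC, h⟩ := enorm_Qop_le L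
  refine ⟨C, hC, fun t ht f hf x => (h t ht f x).trans ?_⟩
  gcongr
  exact heat_le_Mx (by positivity) hf.enorm x

end Maximal

/-! ### Strong type bounds for the maximal function -/

noncomputable section MaximalStrong

variable {n : ℕ}

/-- The weak type bound with `f` truncated from below at `l/2`: the part of `f` below that height
contributes at most `l/2` to `Mx f`. -/
lemma weak_Mx_trunc (hn : 1 ≤ n) {f : Eu n → ℝ≥0∞} (hf : Measurable f) {l : ℝ} (hl : 0 < l) :
    volume {x | ENNReal.ofReal l < Mx f x} ≤
      2 * 5 ^ n * ENNReal.ofReal l⁻¹ * ∫⁻ y in {y | ENNReal.ofReal (l / 2) < f y}, f y := by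
  have hms : MeasurableSet {y | ENNReal.ofReal (l / 2) < f y} := measurableSet_lt measurable_const hf
  set f1 : Eu n → ℝ≥0∞ := ({y | ENNReal.ofReal (l / 2) < f y}).indicator f with hf1
  have h2 : ENNReal.ofReal (l / 2) ≠ 0 := by simp [hl]
  have hsub : {x | ENNReal.ofReal l < Mx f x} ⊆ {x | ENNReal.ofReal (l / 2) < Mx f1 x} := by
    intro x hx
    simp only [Set.mem_ofPred_eq] at hx ⊢
    by_contra hc
    rw [not_lt] at hc
    have : Mx f x ≤ ENNReal.ofReal (l / 2) + ENNReal.ofReal (l / 2) := by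
      calc Mx f x ≤ Mx (fun x => f1 x + ENNReal.ofReal (l / 2)) x := by
            refine Mx_mono (fun y => ?_) x
            by_cases hy : ENNReal.ofReal (l / 2) < f y
            · rw [hf1, Set.indicator_of_mem (by exact hy)]; exact le_self_add
            · exact (not_lt.1 hy).trans le_add_self
        _ ≤ _ := (Mx_add (hf.indicator hms) x).trans (add_le_add hc (Mx_le_of_le (fun _ => le_rfl) x))
    rw [← ENNReal.ofReal_add (by positivity) (by positivity), add_halves] at this
    exact absurd hx (not_lt.2 this)
  have hw := weak_Mx hn f1 h2 ENNReal.ofReal_ne_top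
  rw [lintegral_indicator hms] at hw
  have e : 2 * 5 ^ n * ENNReal.ofReal l⁻¹ * ∫⁻ y in {y | ENNReal.ofReal (l / 2) < f y}, f y =
      (ENNReal.ofReal (l / 2))⁻¹ * (5 ^ n * ∫⁻ y in {y | ENNReal.ofReal (l / 2) < f y}, f y) := by
    rw [← ENNReal.ofReal_inv_of_pos (by positivity), show (l / 2)⁻¹ = 2 * l⁻¹ by field_simp,
      ENNReal.ofReal_mul (by norm_num), ENNReal.ofReal_ofNat]
    ring
  rw [e]
  calc _ ≤ volume {x | ENNReal.ofReal (l / 2) < Mx f1 x} := measure_mono hsub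
    _ = (ENNReal.ofReal (l / 2))⁻¹ * (ENNReal.ofReal (l / 2) * volume {x | ENNReal.ofReal (l / 2) < Mx f1 x}) := by
      rw [← mul_assoc, ENNReal.inv_mul_cancel h2 ENNReal.ofReal_ne_top, one_mul]
    _ ≤ _ := by gcongr

lemma lintegral_rpow_Ioo {a p : ℝ} (ha : 0 ≤ a) (hp : 1 < p) :
    ∫⁻ l in Set.Ioo 0 a, ENNReal.ofReal (l ^ (p - 2)) = ENNReal.ofReal (a ^ (p - 1) / (p - 1)) := by
  rw [Measure.restrict_congr_set Ioo_ae_eq_Ioc]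
  have hi : IntegrableOn (fun l : ℝ => l ^ (p - 2)) (Set.Ioc 0 a) := by
    rw [← intervalIntegrable_iff_integrableOn_Ioc_of_le ha]
    exact intervalIntegral.intervalIntegrable_rpow' (by linarith)
  rw [← ofReal_integral_eq_lintegral_ofReal hi]
  · rw [← intervalIntegral.integral_of_le ha, integral_rpow (Or.inl (by linarith))]
    rw [show p - 2 + 1 = p - 1 by ring, Real.zero_rpow (by linarith)]
    simp
  · exact (ae_restrict_iff' measurableSet_Ioc).2 (Filter.Eventually.of_forall fun l hl => by
      have := hl.1.le; positivity)

/-- Strong type `(p,p)` for the maximal function, `1 < p < ∞`. -/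
lemma strong_Mx (hn : 1 ≤ n) {p : ℝ} (hp : 1 < p) : ∃ C : ℝ, 0 < C ∧ ∀ f : Eu n → ℝ≥0∞, Measurable f →
    (∃ B : ℝ, ∀ x, f x ≤ ENNReal.ofReal B) →
    ∫⁻ x, Mx f x ^ p ≤ ENNReal.ofReal C * ∫⁻ x, f x ^ p := by
  refine ⟨p * (2 * 5 ^ n) * (2 ^ (p - 1) / (p - 1)), by
    have : 0 < p - 1 := by linarith
    positivity, fun f hf ⟨B, hB⟩ => ?_⟩
  have hM : ∀ x, Mx f x ≠ ∞ := fun x => ((Mx_le_of_le hB x).trans_lt ENNReal.ofReal_lt_top).ne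
  have hft : ∀ x, f x ≠ ∞ := fun x => ((hB x).trans_lt ENNReal.ofReal_lt_top).ne
  have hmm : Measurable fun x => (Mx f x).toReal := (measurable_Mx f).ennreal_toReal
  have e1 : ∫⁻ x, Mx f x ^ p = ∫⁻ x, ENNReal.ofReal ((Mx f x).toReal ^ p) := by
    refine lintegral_congr fun x => ?_
    rw [← ENNReal.ofReal_rpow_of_nonneg ENNReal.toReal_nonneg (by linarith), ENNReal.ofReal_toReal (hM x)]
  rw [e1, lintegral_rpow_eq_lintegral_meas_lt_mul volume
    (Filter.Eventually.of_forall fun x => ENNReal.toReal_nonneg) hmm.aemeasurable (by linarith)]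
  have e2 : ∀ l : ℝ, 0 < l → {x | l < (Mx f x).toReal} = {x | ENNReal.ofReal l < Mx f x} := by
    intro l hl
    ext x
    simp only [Set.mem_ofPred_eq]
    rw [ENNReal.ofReal_lt_iff_lt_toReal hl.le (hM x)]
  have step : ∫⁻ l in Set.Ioi (0:ℝ), volume {x | l < (Mx f x).toReal} * ENNReal.ofReal (l ^ (p - 1)) ≤
      ∫⁻ l in Set.Ioi (0:ℝ), 2 * 5 ^ n * ∫⁻ y, (Set.Ioo 0 (2 * (f y).toReal)).indicator
        (fun l => ENNReal.ofReal (l ^ (p - 2))) l * f y := by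
    refine setLIntegral_mono' measurableSet_Ioi fun l hl => ?_
    have hl' : 0 < l := hl
    rw [e2 l hl]
    have hms : MeasurableSet {y | ENNReal.ofReal (l / 2) < f y} := measurableSet_lt measurable_const hf
    calc _ ≤ (2 * 5 ^ n * ENNReal.ofReal l⁻¹ * ∫⁻ y in {y | ENNReal.ofReal (l / 2) < f y}, f y)
          * ENNReal.ofReal (l ^ (p - 1)) := by gcongr; exact weak_Mx_trunc hn hf hl
      _ = 2 * 5 ^ n * (ENNReal.ofReal (l ^ (p - 2)) * ∫⁻ y in {y | ENNReal.ofReal (l / 2) < f y}, f y) := by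
        have : l ^ (p - 2) = l⁻¹ * l ^ (p - 1) := by
          rw [← Real.rpow_neg_one, ← Real.rpow_add hl']; ring_nf
        rw [this, ENNReal.ofReal_mul (by positivity)]
        ring
      _ = _ := by
        congr 1
        rw [← lintegral_indicator hms, ← lintegral_const_mul _ (hf.indicator hms)]
        refine lintegral_congr fun y => ?_
        by_cases hy : ENNReal.ofReal (l / 2) < f y
        · rw [Set.indicator_of_mem (by exact hy), Set.indicator_of_mem]
          rw [ENNReal.ofReal_lt_iff_lt_toReal (by positivity) (hft y)] at hy
          exact ⟨hl', by linarith⟩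
        · rw [Set.indicator_of_notMem (by exact hy), Set.indicator_of_notMem]
          · simp
          · rw [ENNReal.ofReal_lt_iff_lt_toReal (by positivity) (hft y)] at hy
            intro h
            exact hy (by linarith [h.2])
  have hjm : Measurable (Function.uncurry fun (l : ℝ) (y : Eu n) =>
      (Set.Ioo 0 (2 * (f y).toReal)).indicator (fun l => ENNReal.ofReal (l ^ (p - 2))) l * f y) := by
    have : (Function.uncurry fun (l : ℝ) (y : Eu n) =>
      (Set.Ioo 0 (2 * (f y).toReal)).indicator (fun l => ENNReal.ofReal (l ^ (p - 2))) l * f y) =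
      fun z : ℝ × Eu n => {z : ℝ × Eu n | 0 < z.1 ∧ z.1 < 2 * (f z.2).toReal}.indicator
        (fun z => ENNReal.ofReal (z.1 ^ (p - 2))) z * f z.2 := by
      funext z
      simp only [Function.uncurry, Set.indicator, Set.mem_Ioo, Set.mem_ofPred_eq]
    rw [this]
    refine Measurable.mul (Measurable.indicator (by fun_prop) ?_) (by fun_prop)
    exact (measurableSet_lt measurable_const measurable_fst).inter
      (measurableSet_lt measurable_fst (by fun_prop))
  have fin : ∫⁻ l in Set.Ioi (0:ℝ), 2 * 5 ^ n * ∫⁻ y, (Set.Ioo 0 (2 * (f y).toReal)).indicator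
        (fun l => ENNReal.ofReal (l ^ (p - 2))) l * f y =
        2 * 5 ^ n * (ENNReal.ofReal (2 ^ (p - 1) / (p - 1)) * ∫⁻ y, f y ^ p) := by
    rw [lintegral_const_mul' _ _ (by finiteness)]
    congr 1
    rw [lintegral_lintegral_swap hjm.aemeasurable, ← lintegral_const_mul' _ _ ENNReal.ofReal_ne_top]
    refine lintegral_congr fun y => ?_
    rw [lintegral_mul_const' _ _ (hft y), lintegral_indicator measurableSet_Ioo,
      Measure.restrict_restrict measurableSet_Ioo,
      Set.inter_eq_left.2 (fun x hx => hx.1), lintegral_rpow_Ioo (by positivity) hp]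
    set a := (f y).toReal with ha
    rw [← ENNReal.ofReal_toReal (hft y), ← ha]
    have ha0 : 0 ≤ a := ENNReal.toReal_nonneg
    rw [ENNReal.ofReal_rpow_of_nonneg ha0 (by linarith), ← ENNReal.ofReal_mul' ha0,
      ← ENNReal.ofReal_mul' (by positivity)]
    congr 1
    rw [Real.mul_rpow (by norm_num) ha0, Real.rpow_sub_one' ha0 (by linarith)]
    rcases ha0.eq_or_lt with h | h
    · rw [← h, Real.zero_rpow (by linarith)]; simp
    · field_simp
  calc _ ≤ ENNReal.ofReal p * (2 * 5 ^ n * (ENNReal.ofReal (2 ^ (p - 1) / (p - 1)) * ∫⁻ y, f y ^ p)) := by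
        gcongr; exact step.trans_eq fin
    _ = _ := by
      rw [ENNReal.ofReal_mul (by positivity), ENNReal.ofReal_mul (by positivity),
        ENNReal.ofReal_mul (by positivity), ENNReal.ofReal_pow (by positivity),
        ENNReal.ofReal_ofNat, ENNReal.ofReal_ofNat]
      ring

end MaximalStrong

/-! ### Heat flow and energy telescoping -/

noncomputable section Energy

variable {n : ℕ}

/-- Bounded measurable real functions. -/
structure BddR (f : Eu n → ℝ) : Prop where
  meas : Measurable f
  bdd : ∃ B, ∀ x, |f x| ≤ B

lemma BddR.toC {f : Eu n → ℝ} (hf : BddR f) : Bdd (fun y => (f y : ℂ)) :=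
  ⟨Complex.measurable_ofReal.comp hf.meas, by simpa using hf.bdd⟩

/-- The heat semigroup acting on real functions. -/
def hu (t : ℝ) (f : Eu n → ℝ) (x : Eu n) : ℝ := ∫ y, heat t (x - y) * f y

lemma Qop_nil {t : ℝ} (ht : 0 < t) (f : Eu n → ℝ) (x : Eu n) :
    Qop [] t (fun y => (f y : ℂ)) x = (hu t f x : ℂ) := by
  unfold Qop hu
  rw [← integral_complex_ofReal]
  congr 1
  funext y
  rw [kap_nil ht]; push_cast; rfl

lemma BddR.integrable {f : Eu n → ℝ} (hf : BddR f) {t : ℝ} (ht : 0 < t) (x : Eu n) :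
    Integrable (fun y => heat t (x - y) * f y) := by
  obtain ⟨B, hB⟩ := hf.bdd
  exact ((integrable_heat ht).comp_sub_left x).mul_bdd (c := B) hf.meas.aestronglyMeasurable
    (Filter.Eventually.of_forall fun y => by simpa using hB y)

lemma BddR.abs_hu_le {f : Eu n → ℝ} {t : ℝ} (ht : 0 < t) {B : ℝ}
    (hB : ∀ x, |f x| ≤ B) (x : Eu n) : |hu t f x| ≤ B := by
  have h := norm_integral_le_of_norm_le (f := fun y => heat t (x - y) * f y)
    (((integrable_heat ht).comp_sub_left x).mul_const B) (Filter.Eventually.of_forall fun y => by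
      rw [norm_mul, Real.norm_eq_abs, Real.norm_eq_abs, abs_of_pos (heat_pos ht _)]
      exact mul_le_mul_of_nonneg_left (hB y) (heat_pos ht _).le)
  rw [integral_mul_const, integral_sub_left_eq_self (fun y => heat t y), integral_heat ht, one_mul] at h
  exact h

lemma BddR.hu {f : Eu n → ℝ} (hf : BddR f) {t : ℝ} (ht : 0 < t) : BddR (hu t f) := by
  refine ⟨?_, ?_⟩
  · have h := Complex.measurable_re.comp (hf.toC.Qop [] ht).meas
    have e : Complex.re ∘ Qop [] t (fun y => (f y : ℂ)) = _root_.hu t f := by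
      funext x; simp [Qop_nil ht]
    rwa [e] at h
  · obtain ⟨B, hB⟩ := hf.bdd
    exact ⟨B, BddR.abs_hu_le ht hB⟩

lemma Qop_hu {f : Eu n → ℝ} (hf : BddR f) (L : List (Fin n)) {a b : ℝ} (ha : 0 < a) (hb : 0 < b)
    (x : Eu n) : Qop L a (fun y => (hu b f y : ℂ)) x = Qop L (a + b) (fun y => (f y : ℂ)) x := by
  have h := Qop_comp hf.toC L [] ha hb x
  rw [List.append_nil] at h
  rw [← h]
  congr 1
  funext y
  rw [Qop_nil hb]

lemma hu_hu {f : Eu n → ℝ} (hf : BddR f) {a b : ℝ} (ha : 0 < a) (hb : 0 < b) (x : Eu n) :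
    hu a (hu b f) x = hu (a + b) f x := by
  have h := Qop_hu hf [] ha hb x
  rw [Qop_nil ha, Qop_nil (by positivity)] at h
  exact_mod_cast h

lemma measurable_heat2 : Measurable (fun z : ℝ × Eu n => heat z.1 z.2) := by
  unfold heat
  fun_prop

lemma measurable_hu2 {f : Eu n → ℝ} (hf : Measurable f) :
    Measurable (fun z : ℝ × Eu n => hu z.1 f z.2) := by
  unfold hu
  have : StronglyMeasurable (fun w : (ℝ × Eu n) × Eu n => heat w.1.1 (w.1.2 - w.2) * f w.2) := by
    apply Measurable.stronglyMeasurable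
    refine Measurable.mul ?_ (by fun_prop)
    exact measurable_heat2.comp (by fun_prop : Measurable fun w : (ℝ × Eu n) × Eu n => (w.1.1, w.1.2 - w.2))
  exact (this.integral_prod_right (ν := volume)).measurable

lemma measurable_kap2 (L : List (Fin n)) : Measurable (fun z : ℝ × Eu n => kap L z.1 z.2) := by
  unfold kap
  simp only [Real.fourierInv_eq, Circle.smul_def, smul_eq_mul]
  have : StronglyMeasurable (fun w : (ℝ × Eu n) × Eu n =>
      (𝐞 (inner ℝ w.2 w.1.2) : ℂ) * gsym L w.1.1 w.2) := by
    apply Measurable.stronglyMeasurable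
    refine Measurable.mul ?_ ?_
    · have h1 : Measurable (fun r : ℝ => (𝐞 r : ℂ)) := by
        have := Real.continuous_fourierChar
        exact (by fun_prop : Continuous (fun r : ℝ => (𝐞 r : ℂ))).measurable
      exact h1.comp (by fun_prop)
    · have h2 := (continuous_mon L).measurable
      exact Complex.measurable_ofReal.comp (by fun_prop)
  exact (this.integral_prod_right (ν := volume)).measurable

lemma measurable_Qop2 (L : List (Fin n)) {f : Eu n → ℂ} (hf : Measurable f) :
    Measurable (fun z : ℝ × Eu n => Qop L z.1 f z.2) := by
  unfold Qop
  have : StronglyMeasurable (fun w : (ℝ × Eu n) × Eu n => kap L w.1.1 (w.1.2 - w.2) * f w.2) := by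
    apply Measurable.stronglyMeasurable
    refine Measurable.mul ?_ (by fun_prop)
    have h1 : Measurable fun w : (ℝ × Eu n) × Eu n => ((w.1.1, w.1.2 - w.2) : ℝ × Eu n) := by fun_prop
    have h2 := Measurable.comp (measurable_kap2 L) h1
    simpa only [Function.comp_def] using h2
  exact (this.integral_prod_right (ν := volume)).measurable

lemma measurable_hu_comp {β : Type*} [MeasurableSpace β] {f : Eu n → ℝ} (hf : Measurable f)
    {a : β → ℝ} {b : β → Eu n} (ha : Measurable a) (hb : Measurable b) :
    Measurable fun w => hu (a w) f (b w) := by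
  have := Measurable.comp (measurable_hu2 hf) (ha.prodMk hb)
  simpa only [Function.comp_def] using this

lemma measurable_Qop_comp {β : Type*} [MeasurableSpace β] (L : List (Fin n)) {f : Eu n → ℂ} (hf : Measurable f)
    {a : β → ℝ} {b : β → Eu n} (ha : Measurable a) (hb : Measurable b) :
    Measurable fun w => Qop L (a w) f (b w) := by
  have := Measurable.comp (measurable_Qop2 L hf) (ha.prodMk hb)
  simpa only [Function.comp_def] using this

/-- Convexity defect integrated against the heat kernel: a pointwise lower bound by a tangent plane
at the heat averages plus a nonnegative remainder `R` integrates to Jensen's inequality with `R`. -/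
lemma jensen_step {t : ℝ} (ht : 0 < t) (x : Eu n) {W X Y R : Eu n → ℝ}
    (hW : BddR W) (hX : BddR X) (hY : BddR Y) (hR : Measurable R) (hR0 : ∀ y, 0 ≤ R y)
    (w α β : ℝ) (hw : 0 ≤ w) (hW0 : ∀ y, 0 ≤ W y)
    (h : ∀ y, w + α * (X y - hu t X x) + β * (Y y - hu t Y x) + R y ≤ W y) :
    ENNReal.ofReal w + ∫⁻ y, ENNReal.ofReal (heat t (x - y)) * ENNReal.ofReal (R y) ≤
      ∫⁻ y, ENNReal.ofReal (heat t (x - y)) * ENNReal.ofReal (W y) := by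
  have hk := (integrable_heat (n := n) ht).comp_sub_left x
  have hp : ∀ y : Eu n, 0 ≤ heat t (x - y) := fun y => (heat_pos ht _).le
  have i1 : Integrable fun y => heat t (x - y) * (w + α * (X y - hu t X x) + β * (Y y - hu t Y x)) := by
    have := (((hk.mul_const (w - α * hu t X x - β * hu t Y x)).add ((hX.integrable ht x).const_mul α)).add
      ((hY.integrable ht x).const_mul β))
    refine this.congr (Filter.Eventually.of_forall fun y => ?_)
    simp only [Pi.add_apply]; ring
  have v1 : ∫ y, heat t (x - y) * (w + α * (X y - hu t X x) + β * (Y y - hu t Y x)) = w := by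
    have e : ∀ y, heat t (x - y) * (w + α * (X y - hu t X x) + β * (Y y - hu t Y x)) =
      heat t (x - y) * (w - α * hu t X x - β * hu t Y x) + α * (heat t (x - y) * X y) +
        β * (heat t (x - y) * Y y) := fun y => by ring
    simp_rw [e]
    have j1 : Integrable (fun y => heat t (x - y) * (w - α * hu t X x - β * hu t Y x) +
      α * (heat t (x - y) * X y)) := (hk.mul_const _).add ((hX.integrable ht x).const_mul α)
    rw [integral_add j1 ((hY.integrable ht x).const_mul β), integral_add (hk.mul_const _) ((hX.integrable ht x).const_mul α),
      integral_mul_const, integral_const_mul, integral_const_mul,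
      integral_sub_left_eq_self (fun y => heat t y), integral_heat ht]
    unfold hu
    ring
  have i2 : Integrable fun y => heat t (x - y) * R y := by
    refine ((hW.integrable ht x).sub i1).mono ?_ (Filter.Eventually.of_forall fun y => ?_)
    · exact (hk.1.mul hR.aestronglyMeasurable)
    · have h1 := mul_le_mul_of_nonneg_left (h y) (hp y)
      rw [Real.norm_eq_abs, Real.norm_eq_abs, abs_of_nonneg (mul_nonneg (hp y) (hR0 y))]
      refine le_trans ?_ (le_abs_self _)
      simp only [Pi.sub_apply]
      nlinarith
  have key : w + ∫ y, heat t (x - y) * R y ≤ ∫ y, heat t (x - y) * W y := by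
    conv_lhs => rw [← v1]
    rw [← integral_add i1 i2]
    refine integral_mono (i1.add i2) (hW.integrable ht x) fun y => ?_
    have h1 := mul_le_mul_of_nonneg_left (h y) (hp y)
    nlinarith
  have conv : ∀ {Z : Eu n → ℝ}, (∀ y, 0 ≤ Z y) → Integrable (fun y => heat t (x - y) * Z y) →
      ∫⁻ y, ENNReal.ofReal (heat t (x - y)) * ENNReal.ofReal (Z y) =
        ENNReal.ofReal (∫ y, heat t (x - y) * Z y) := by
    intro Z hZ hi
    rw [ofReal_integral_eq_lintegral_ofReal hi
      (Filter.Eventually.of_forall fun y => mul_nonneg (hp y) (hZ y))]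
    exact lintegral_congr fun y => (ENNReal.ofReal_mul (hp y)).symm
  rw [conv hR0 i2, conv hW0 (hW.integrable ht x),
    ← ENNReal.ofReal_add hw (integral_nonneg fun y => mul_nonneg (hp y) (hR0 y))]
  exact ENNReal.ofReal_le_ofReal key

/-- Averaging against the heat kernel in both variables preserves total mass. -/
lemma lintegral_heat_lintegral {t : ℝ} (ht : 0 < t) {W : Eu n → ℝ≥0∞} (hW : Measurable W) :
    ∫⁻ x, ∫⁻ y, ENNReal.ofReal (heat t (x - y)) * W y = ∫⁻ y, W y := by
  rw [lintegral_lintegral_swap]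
  · refine lintegral_congr fun y => ?_
    rw [lintegral_mul_const]
    · rw [lintegral_sub_right_eq_self (fun x => ENNReal.ofReal (heat t x)) y]
      have := lintegral_heat (n := n) ht 0
      simp only [zero_sub, heat_neg] at this
      rw [this, one_mul]
    · have := continuous_heat (n := n) t
      fun_prop
  · have := continuous_heat (n := n) t
    refine Measurable.aemeasurable ?_
    have : Measurable fun z : Eu n × Eu n => ENNReal.ofReal (heat t (z.1 - z.2)) * W z.2 := by fun_prop
    exact this

/-- The `dt/t` integral over `(0,∞)` as an integral over `[1,2)` of sums over dyadic dilates. -/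
lemma lintegral_Ioi_dyadic {G : ℝ → ℝ≥0∞} (hG : Measurable G) :
    ∫⁻ t in Set.Ioi (0:ℝ), G t * ENNReal.ofReal t⁻¹ =
      ∫⁻ θ in Set.Ico (1:ℝ) 2, (∑' k : ℤ, G ((2:ℝ) ^ k * θ)) * ENNReal.ofReal θ⁻¹ := by
  have hU : Set.Ioi (0:ℝ) = ⋃ k : ℤ, Set.Ico ((2:ℝ) ^ k) ((2:ℝ) ^ (k + 1)) := by
    ext x
    simp only [Set.mem_Ioi, Set.mem_iUnion]
    constructor
    · intro hx; exact exists_mem_Ico_zpow hx (by norm_num)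
    · rintro ⟨k, hk⟩; exact lt_of_lt_of_le (by positivity) hk.1
  have hd : Pairwise (Function.onFun Disjoint fun k : ℤ => Set.Ico ((2:ℝ) ^ k) ((2:ℝ) ^ (k + 1))) := by
    have := Monotone.pairwise_disjoint_on_Ico_succ (f := fun k : ℤ => (2:ℝ) ^ k)
      (zpow_right_mono₀ (by norm_num))
    simpa using this
  rw [hU, lintegral_iUnion (fun _ => measurableSet_Ico) hd]
  have e : ∀ θ : ℝ, (∑' k : ℤ, G ((2:ℝ) ^ k * θ)) * ENNReal.ofReal θ⁻¹ =
      ∑' k : ℤ, G ((2:ℝ) ^ k * θ) * ENNReal.ofReal θ⁻¹ := fun θ => ENNReal.tsum_mul_right.symm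
  simp_rw [e]
  rw [lintegral_tsum (fun k => by fun_prop)]
  congr 1
  funext k
  have h2 : (0:ℝ) < 2 ^ k := by positivity
  have := lintegral_image_eq_lintegral_abs_deriv_mul (f := fun θ : ℝ => (2:ℝ) ^ k * θ)
    (f' := fun _ => (2:ℝ) ^ k) (s := Set.Ico 1 2) measurableSet_Ico
    (fun x _ => by simpa using ((hasDerivAt_id x).const_mul ((2:ℝ) ^ k)).hasDerivWithinAt)
    ((mul_right_injective₀ h2.ne').injOn) (fun t => G t * ENNReal.ofReal t⁻¹)
  rw [Set.image_mul_left_Ico h2, mul_one, ← zpow_add_one₀ (by norm_num)] at this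
  rw [this]
  refine lintegral_congr fun θ => ?_
  rw [abs_of_pos h2, mul_inv, ENNReal.ofReal_mul (by positivity), mul_left_comm, ← mul_assoc (ENNReal.ofReal _)
    (ENNReal.ofReal _), ← ENNReal.ofReal_mul h2.le, mul_inv_cancel₀ h2.ne']
  simp

/-- Telescoping along dyadic times: a functional decreasing by at least `D τ` between times `τ` and
`2τ` controls the integral of `D` against `dτ/τ`. -/
lemma energy_telescope {A D : ℝ → ℝ≥0∞} {I : ℝ≥0∞} (hD : Measurable D)
    (h : ∀ t > 0, A (2 * t) + D t ≤ A t) (hI : ∀ t > 0, A t ≤ I) :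
    ∫⁻ t in Set.Ioi (0:ℝ), D t * ENNReal.ofReal t⁻¹ ≤ I := by
  rw [lintegral_Ioi_dyadic hD]
  have tel : ∀ θ > 0, ∑' k : ℤ, D ((2:ℝ) ^ k * θ) ≤ I := by
    intro θ hθ
    have fin : ∀ (N : ℕ) (m : ℤ), A ((2:ℝ) ^ (m + N) * θ) + ∑ i ∈ Finset.range N, D ((2:ℝ) ^ (m + i) * θ) ≤
        A ((2:ℝ) ^ m * θ) := by
      intro N m
      induction N with
      | zero => simp
      | succ N ih =>
        rw [Finset.sum_range_succ]
        refine le_trans ?_ ih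
        have := h ((2:ℝ) ^ (m + N) * θ) (by positivity)
        rw [show 2 * ((2:ℝ) ^ (m + (N:ℤ)) * θ) = (2:ℝ) ^ (m + ((N + 1 : ℕ):ℤ)) * θ by
          push_cast; rw [← add_assoc, zpow_add_one₀ (by norm_num)]; ring] at this
        calc _ = (A ((2:ℝ) ^ (m + ((N + 1 : ℕ):ℤ)) * θ) + D ((2:ℝ) ^ (m + N) * θ)) +
              ∑ i ∈ Finset.range N, D ((2:ℝ) ^ (m + i) * θ) := by ring
          _ ≤ _ := by exact add_le_add_left this _
    rw [ENNReal.tsum_eq_iSup_sum]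
    refine iSup_le fun s => ?_
    obtain ⟨K, hK⟩ : ∃ K : ℕ, ∀ k ∈ s, -(K:ℤ) ≤ k ∧ k < K := by
      refine ⟨s.sup (fun k => k.natAbs) + 1, fun k hk => ?_⟩
      have := Finset.le_sup (f := fun k : ℤ => k.natAbs) hk
      omega
    calc ∑ k ∈ s, D ((2:ℝ) ^ k * θ) ≤ ∑ k ∈ Finset.image (fun i : ℕ => -(K:ℤ) + i) (Finset.range (2 * K)), D ((2:ℝ) ^ k * θ) := by
          refine Finset.sum_le_sum_of_subset fun k hk => ?_
          have := hK k hk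
          rw [Finset.mem_image]
          exact ⟨(k + K).toNat, by rw [Finset.mem_range]; omega, by omega⟩
      _ = ∑ i ∈ Finset.range (2 * K), D ((2:ℝ) ^ (-(K:ℤ) + i) * θ) := by
          rw [Finset.sum_image]
          intro a _ b _ hab
          simpa using hab
      _ ≤ A ((2:ℝ) ^ (-(K:ℤ)) * θ) := le_trans le_add_self (fin (2 * K) (-(K:ℤ)))
      _ ≤ I := hI _ (by positivity)
  calc _ ≤ ∫⁻ θ in Set.Ico (1:ℝ) 2, I := by
        refine setLIntegral_mono' measurableSet_Ico fun θ hθ => ?_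
        calc _ ≤ I * 1 := by
              gcongr
              · exact tel θ (by linarith [hθ.1])
              · rw [ENNReal.ofReal_le_one]; exact inv_le_one_of_one_le₀ hθ.1
          _ = I := mul_one _
    _ = I := by
      rw [setLIntegral_const, Real.volume_Ico]; norm_num

/-- Cauchy–Schwarz with a weight. -/
lemma cs_weight {α : Type*} [MeasurableSpace α] {μ : Measure α} {w h : α → ℝ≥0∞}
    (hw : Measurable w) (hh : Measurable h) :
    (∫⁻ x, w x * h x ∂μ) ^ 2 ≤ (∫⁻ x, w x ∂μ) * ∫⁻ x, w x * h x ^ 2 ∂μ := by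
  have h1 := ENNReal.lintegral_mul_le_Lp_mul_Lq μ Real.HolderConjugate.two_two
    (f := fun x => w x ^ (1 / 2 : ℝ)) (g := fun x => w x ^ (1 / 2 : ℝ) * h x) (by fun_prop) (by fun_prop)
  have e1 : ∀ x, (((fun x => w x ^ (1 / 2 : ℝ)) * (fun x => w x ^ (1 / 2 : ℝ) * h x)) : α → ℝ≥0∞) x = w x * h x := by
    intro x
    simp only [Pi.mul_apply]
    rw [← mul_assoc, ← ENNReal.rpow_add_of_nonneg _ _ (by norm_num) (by norm_num)]
    norm_num
  have e2 : ∀ x, (w x ^ (1 / 2 : ℝ)) ^ (2:ℝ) = w x := by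
    intro x; rw [← ENNReal.rpow_mul]; norm_num
  have e3 : ∀ x, (w x ^ (1 / 2 : ℝ) * h x) ^ (2:ℝ) = w x * h x ^ 2 := by
    intro x; rw [ENNReal.mul_rpow_of_nonneg _ _ (by norm_num), e2]; norm_num
  simp_rw [e1, e2, e3] at h1
  calc _ ≤ ((∫⁻ x, w x ∂μ) ^ (1 / 2 : ℝ) * (∫⁻ x, w x * h x ^ 2 ∂μ) ^ (1 / 2 : ℝ)) ^ 2 := by gcongr
    _ = _ := by
      rw [mul_pow, ← ENNReal.rpow_natCast, ← ENNReal.rpow_natCast, ← ENNReal.rpow_mul, ← ENNReal.rpow_mul]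
      norm_num

end Energy

/-! ### Square functions and the energy of `|x|^p` -/

noncomputable section SquareLow

variable {n : ℕ}

/-- The square of the Littlewood–Paley function `(∫ t^{|L|} |Q_{L,t} f|² dt/t)^{1/2}`. -/
def Sq (L : List (Fin n)) (f : Eu n → ℂ) (x : Eu n) : ℝ≥0∞ :=
  ∫⁻ t in Set.Ioi (0:ℝ), ENNReal.ofReal (t ^ L.length) * ‖Qop L t f x‖ₑ ^ 2 * ENNReal.ofReal t⁻¹

lemma measurable_Sq (L : List (Fin n)) {f : Eu n → ℂ} (hf : Measurable f) : Measurable (Sq L f) := by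
  unfold Sq
  have : Measurable (Function.uncurry fun (x : Eu n) (t : ℝ) =>
      ENNReal.ofReal (t ^ L.length) * ‖Qop L t f x‖ₑ ^ 2 * ENNReal.ofReal t⁻¹) := by
    have h2 : Measurable fun z : Eu n × ℝ => Qop L z.2 f z.1 :=
      measurable_Qop_comp L hf measurable_snd measurable_fst
    simp only [Function.uncurry_def]
    have h3 := h2.enorm
    fun_prop
  exact this.lintegral_prod_right'

/-- Scale invariance of `dt/t`. -/
lemma lintegral_Ioi_scale {c : ℝ} (hc : 0 < c) (G : ℝ → ℝ≥0∞) :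
    ∫⁻ t in Set.Ioi (0:ℝ), G (c * t) * ENNReal.ofReal t⁻¹ =
      ∫⁻ t in Set.Ioi (0:ℝ), G t * ENNReal.ofReal t⁻¹ := by
  have := lintegral_image_eq_lintegral_abs_deriv_mul (f := fun θ : ℝ => c * θ)
    (f' := fun _ => c) (s := Set.Ioi 0) measurableSet_Ioi
    (fun x _ => by simpa using ((hasDerivAt_id x).const_mul c).hasDerivWithinAt)
    ((mul_right_injective₀ hc.ne').injOn) (fun t => G t * ENNReal.ofReal t⁻¹)
  rw [Set.image_mul_left_Ioi hc, mul_zero] at this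
  rw [this]
  refine lintegral_congr fun θ => ?_
  rw [abs_of_pos hc, mul_inv, ENNReal.ofReal_mul (by positivity), mul_left_comm, ← mul_assoc (ENNReal.ofReal _)
    (ENNReal.ofReal _), ← ENNReal.ofReal_mul hc.le, mul_inv_cancel₀ hc.ne']
  simp

/-- A function with monotone derivative lies above its tangents. -/
lemma tangent_of_mono {f f' : ℝ → ℝ} {K : ℝ} (hd : ∀ s, HasDerivAt f (f' s) s)
    (hm : MonotoneOn f' (Set.Icc (-K) K)) {a x : ℝ} (ha : a ∈ Set.Icc (-K) K) (hx : x ∈ Set.Icc (-K) K) :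
    f a + f' a * (x - a) ≤ f x := by
  have hc : Continuous f := continuous_iff_continuousAt.2 fun s => (hd s).continuousAt
  rcases lt_trichotomy a x with h | h | h
  · obtain ⟨c, hc1, hc2⟩ := exists_hasDerivAt_eq_slope f f' h hc.continuousOn (fun s _ => hd s)
    have h1 : f' a ≤ f' c := hm ha ⟨by linarith [hc1.1, ha.1], by linarith [hc1.2, hx.2]⟩ hc1.1.le
    rw [hc2, le_div_iff₀ (by linarith)] at h1
    linarith
  · subst h; simp
  · obtain ⟨c, hc1, hc2⟩ := exists_hasDerivAt_eq_slope f f' h hc.continuousOn (fun s _ => hd s)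
    have h1 : f' c ≤ f' a := hm ⟨by linarith [hc1.1, hx.1], by linarith [hc1.2, ha.2]⟩ ha hc1.2.le
    rw [hc2, div_le_iff₀ (by linarith)] at h1
    linarith

/-- Quantitative convexity of `|x|^p`, `1 < p ≤ 2`. -/
lemma convex_low {p : ℝ} (hp : 1 < p) (hp2 : p ≤ 2) (a x : ℝ) :
    |a| ^ p + p * |a| ^ (p - 2) * a * (x - a) +
      p * (p - 1) / 2 * ((x - a) ^ 2 * (|x| + |a|) ^ (p - 2)) ≤ |x| ^ p := by
  set K := |x| + |a| with hK
  rcases (by positivity : 0 ≤ K).eq_or_lt with h0 | h0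
  · have hx : x = 0 := abs_eq_zero.1 (by linarith [abs_nonneg x, abs_nonneg a])
    have ha : a = 0 := abs_eq_zero.1 (by linarith [abs_nonneg x, abs_nonneg a])
    subst hx ha; simp
  set c := p * (p - 1) / 2 with hc
  have hd : ∀ s : ℝ, HasDerivAt (fun s => |s| ^ p - c * K ^ (p - 2) * s ^ 2)
      (p * |s| ^ (p - 2) * s - 2 * c * K ^ (p - 2) * s) s := by
    intro s
    have h := (hasDerivAt_abs_rpow s hp).sub (((hasDerivAt_id s).pow 2).const_mul (c * K ^ (p - 2)))
    refine HasDerivAt.congr_deriv (f := fun s => |s| ^ p - c * K ^ (p - 2) * s ^ 2) h ?_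
    simp only [id]; push_cast; ring
  have pos : MonotoneOn (fun s : ℝ => p * |s| ^ (p - 2) * s - 2 * c * K ^ (p - 2) * s) (Set.Icc 0 K) := by
    have e : Set.EqOn (fun s : ℝ => p * s ^ (p - 1) - 2 * c * K ^ (p - 2) * s)
        (fun s : ℝ => p * |s| ^ (p - 2) * s - 2 * c * K ^ (p - 2) * s) (Set.Icc 0 K) := by
      intro s hs
      have hs0 := hs.1
      simp only
      rw [abs_of_nonneg hs0]
      rcases hs0.eq_or_lt with h | h
      · rw [← h, Real.zero_rpow (by linarith)]; simp
      · rw [mul_assoc p, ← Real.rpow_add_one h.ne']; ring_nf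
    refine MonotoneOn.congr ?_ e
    refine monotoneOn_of_deriv_nonneg (convex_Icc 0 K) ?_ ?_ ?_
    · have : Continuous fun s : ℝ => s ^ (p - 1) := Real.continuous_rpow_const (by linarith)
      fun_prop
    · rw [interior_Icc]
      intro s hs
      exact (((Real.hasDerivAt_rpow_const (Or.inl hs.1.ne')).const_mul p).sub
        ((hasDerivAt_id s).const_mul _)).differentiableAt.differentiableWithinAt
    · rw [interior_Icc]
      intro s hs
      have h1 := (((Real.hasDerivAt_rpow_const (p := p - 1) (Or.inl hs.1.ne')).const_mul p).sub
        ((hasDerivAt_id s).const_mul (2 * c * K ^ (p - 2)))).deriv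
      have h2 : deriv (fun s : ℝ => p * s ^ (p - 1) - 2 * c * K ^ (p - 2) * s) s =
        p * ((p - 1) * s ^ (p - 1 - 1)) - 2 * c * K ^ (p - 2) * 1 := h1
      rw [h2, hc]
      have h3 : K ^ (p - 2) ≤ s ^ (p - 2) :=
        Real.rpow_le_rpow_of_nonpos hs.1 hs.2.le (by linarith)
      rw [show p - 1 - 1 = p - 2 by ring]
      have h4 : 0 < p * (p - 1) := mul_pos (by linarith) (by linarith)
      nlinarith
  have all : MonotoneOn (fun s : ℝ => p * |s| ^ (p - 2) * s - 2 * c * K ^ (p - 2) * s) (Set.Icc (-K) K) := by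
    have g0 : ∀ s ∈ Set.Icc 0 K, 0 ≤ p * |s| ^ (p - 2) * s - 2 * c * K ^ (p - 2) * s := by
      intro s hs
      have := pos (Set.left_mem_Icc.2 h0.le) hs hs.1
      simpa using this
    intro s hs t ht hst
    have hodd : ∀ s : ℝ, p * |s| ^ (p - 2) * s - 2 * c * K ^ (p - 2) * s =
      -(p * |-s| ^ (p - 2) * (-s) - 2 * c * K ^ (p - 2) * (-s)) := by intro s; rw [abs_neg]; ring
    simp only
    rcases le_total 0 s with h | h
    · exact pos ⟨h, hs.2⟩ ⟨h.trans hst, ht.2⟩ hst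
    · rcases le_total 0 t with h' | h'
      · have h1 := g0 t ⟨h', ht.2⟩
        have h2 := g0 (-s) ⟨by linarith, by linarith [hs.1]⟩
        rw [hodd s]; linarith
      · have := pos (a := -t) (b := -s) ⟨by linarith, by linarith [ht.1]⟩ ⟨by linarith, by linarith [hs.1]⟩ (by linarith)
        simp only at this
        rw [hodd s, hodd t]; linarith
  have ha : a ∈ Set.Icc (-K) K := abs_le.1 (by linarith [abs_nonneg x])
  have hx : x ∈ Set.Icc (-K) K := abs_le.1 (by linarith [abs_nonneg a])
  have := tangent_of_mono hd all ha hx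
  nlinarith

/-- The energy density attached to `|x|^p` at time `t`. -/
def Dp (p : ℝ) (f : Eu n → ℝ) (t : ℝ) (x : Eu n) : ℝ≥0∞ :=
  ∫⁻ y, ENNReal.ofReal (heat t (x - y)) *
    ENNReal.ofReal (p * (p - 1) / 2 * ((hu t f y - hu (2 * t) f x) ^ 2 * (|hu t f y| + |hu (2 * t) f x|) ^ (p - 2)))

lemma measurable_Dp2 (p : ℝ) {f : Eu n → ℝ} (hf : Measurable f) :
    Measurable (fun z : ℝ × Eu n => Dp p f z.1 z.2) := by
  unfold Dp
  have h := measurable_hu2 hf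
  have h1 : Measurable fun w : (ℝ × Eu n) × Eu n => hu w.1.1 f w.2 :=
    h.comp (by fun_prop : Measurable fun w : (ℝ × Eu n) × Eu n => ((w.1.1, w.2) : ℝ × Eu n))
  have h2 : Measurable fun w : (ℝ × Eu n) × Eu n => hu (2 * w.1.1) f w.1.2 :=
    h.comp (by fun_prop : Measurable fun w : (ℝ × Eu n) × Eu n => ((2 * w.1.1, w.1.2) : ℝ × Eu n))
  have h3 : Measurable fun w : (ℝ × Eu n) × Eu n => heat w.1.1 (w.1.2 - w.2) :=
    measurable_heat2.comp (by fun_prop : Measurable fun w : (ℝ × Eu n) × Eu n => ((w.1.1, w.1.2 - w.2) : ℝ × Eu n))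
  have : Measurable fun w : (ℝ × Eu n) × Eu n => ENNReal.ofReal (heat w.1.1 (w.1.2 - w.2)) *
    ENNReal.ofReal (p * (p - 1) / 2 * ((hu w.1.1 f w.2 - hu (2 * w.1.1) f w.1.2) ^ 2 *
      (|hu w.1.1 f w.2| + |hu (2 * w.1.1) f w.1.2|) ^ (p - 2))) := by
    refine h3.ennreal_ofReal.mul (Measurable.ennreal_ofReal (Measurable.const_mul (((h1.sub h2).pow_const 2).mul ?_) _))
    exact Measurable.pow_const ((measurable_abs.comp h1).add (measurable_abs.comp h2)) _
  exact this.lintegral_prod_right'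

lemma BddR.rpow {f : Eu n → ℝ} (hf : BddR f) {p : ℝ} (hp : 0 ≤ p) : BddR fun x => |f x| ^ p := by
  obtain ⟨B, hB⟩ := hf.bdd
  refine ⟨(hf.meas.abs).pow_const _, B ^ p, fun x => ?_⟩
  rw [abs_of_nonneg (by positivity)]
  exact Real.rpow_le_rpow (abs_nonneg _) (hB x) hp

/-- The energy density of `|x|^p` along the heat flow, integrated in `dx dt/t`, is at most
`∫ |f|^p`. By `convex_low` the density is at most the defect in Jensen's inequality for `|x|^p` between the
times `t` and `2t` of the flow, and these defects telescope. -/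
lemma energy_low {p : ℝ} (hp : 1 < p) (hp2 : p ≤ 2) {f : Eu n → ℝ} (hf : BddR f) :
    ∫⁻ x, ∫⁻ t in Set.Ioi (0:ℝ), Dp p f t x * ENNReal.ofReal t⁻¹ ≤ ∫⁻ x, ENNReal.ofReal (|f x| ^ p) := by
  have hm := measurable_Dp2 p hf.meas
  have hc : 0 ≤ p * (p - 1) / 2 := div_nonneg (mul_nonneg (by linarith) (by linarith)) (by norm_num)
  rw [lintegral_lintegral_swap]
  swap
  · refine Measurable.aemeasurable ?_
    have h2 : Measurable fun z : Eu n × ℝ => Dp p f z.2 z.1 := by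
      have := Measurable.comp hm (measurable_snd.prodMk measurable_fst : Measurable fun z : Eu n × ℝ => (z.2, z.1))
      simpa only [Function.comp_def] using this
    exact h2.mul (by fun_prop)
  have e : ∀ t : ℝ, ∫⁻ x, Dp p f t x * ENNReal.ofReal t⁻¹ = (∫⁻ x, Dp p f t x) * ENNReal.ofReal t⁻¹ :=
    fun t => lintegral_mul_const' _ _ ENNReal.ofReal_ne_top
  simp_rw [e]
  refine energy_telescope (A := fun t => ∫⁻ x, ENNReal.ofReal (|hu t f x| ^ p)) ?_ ?_ ?_
  · exact hm.lintegral_prod_right'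
  · intro t ht
    have hu1 := hf.hu ht
    rw [← lintegral_add_left ((hf.hu (by positivity : 0 < 2 * t)).meas.abs.pow_const p).ennreal_ofReal,
      ← lintegral_heat_lintegral ht (hu1.meas.abs.pow_const p).ennreal_ofReal]
    refine lintegral_mono fun x => ?_
    have e2 : hu t (hu t f) x = hu (2 * t) f x := by rw [hu_hu hf ht ht, two_mul]
    refine jensen_step ht x (W := fun y => |hu t f y| ^ p) (X := hu t f) (Y := hu t f) (hu1.rpow (by linarith)) hu1 hu1 ?_ ?_
      (|hu (2 * t) f x| ^ p) (p * |hu (2 * t) f x| ^ (p - 2) * hu (2 * t) f x) 0 (by positivity)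
      (fun y => by positivity) fun y => ?_
    · exact Measurable.const_mul (((hu1.meas.sub_const _).pow_const 2).mul
        (((measurable_abs.comp hu1.meas).add_const _).pow_const _)) _
    · intro y; exact mul_nonneg hc (by positivity)
    · rw [e2, zero_mul, add_zero]
      exact convex_low hp hp2 _ _
  · intro t ht
    rw [← lintegral_heat_lintegral ht (hf.meas.abs.pow_const p).ennreal_ofReal]
    refine lintegral_mono fun x => ?_
    have := jensen_step ht x (W := fun y => |f y| ^ p) (X := f) (Y := f) (R := fun _ => 0) (hf.rpow (by linarith)) hf hf
      measurable_const (fun _ => le_rfl) (|hu t f x| ^ p) (p * |hu t f x| ^ (p - 2) * hu t f x) 0 (by positivity)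
      (fun y => by positivity) fun y => by
        rw [zero_mul, add_zero, add_zero]
        have := convex_low hp hp2 (hu t f x) (f y)
        have h2 : 0 ≤ p * (p - 1) / 2 * ((f y - hu t f x) ^ 2 * (|f y| + |hu t f x|) ^ (p - 2)) :=
          mul_nonneg hc (by positivity)
        linarith
    exact le_trans le_self_add this

end SquareLow

/-! ### Square functions on `L^p`, `1 < p < 2` -/

noncomputable section SquareLowB

variable {n : ℕ}

lemma hu_enorm_le {t : ℝ} (ht : 0 < t) (f : Eu n → ℝ) (x : Eu n) :
    ‖hu t f x‖ₑ ≤ ∫⁻ y, ENNReal.ofReal (heat t (x - y)) * ‖f y‖ₑ := by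
  unfold hu
  refine (enorm_integral_le_lintegral_enorm _).trans (lintegral_mono fun y => ?_)
  rw [enorm_mul, enorm_heat ht]

/-- Moving the base point of the heat kernel from `y` to `x` costs a Gaussian growth factor and a
doubling of the time. -/
lemma heat_shift_le {t : ℝ} (ht : 0 < t) (x y z : Eu n) :
    heat t (y - z) ≤ 2 ^ ((n:ℝ) / 2) * exp (π ^ 2 / t * ‖x - y‖ ^ 2) * heat (2 * t) (x - z) := by
  unfold heat
  have e1 : (π / t) ^ ((n:ℝ) / 2) = 2 ^ ((n:ℝ) / 2) * (π / (2 * t)) ^ ((n:ℝ) / 2) := by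
    rw [← Real.mul_rpow (by norm_num) (by positivity)]
    congr 1; field_simp
  have h : ‖x - z‖ ^ 2 ≤ 2 * ‖x - y‖ ^ 2 + 2 * ‖y - z‖ ^ 2 := by
    have h1 : ‖x - z‖ ≤ ‖x - y‖ + ‖y - z‖ := norm_sub_le_norm_sub_add_norm_sub _ _ _
    nlinarith [norm_nonneg (x - z), sq_nonneg (‖x - y‖ - ‖y - z‖)]
  have h2 : -(π ^ 2 / t) * ‖y - z‖ ^ 2 ≤ π ^ 2 / t * ‖x - y‖ ^ 2 + -(π ^ 2 / (2 * t)) * ‖x - z‖ ^ 2 := by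
    have : 0 < π ^ 2 / (2 * t) := by positivity
    have e : π ^ 2 / t = 2 * (π ^ 2 / (2 * t)) := by field_simp
    rw [e]; nlinarith
  calc _ ≤ (π / t) ^ ((n:ℝ) / 2) * exp (π ^ 2 / t * ‖x - y‖ ^ 2 + -(π ^ 2 / (2 * t)) * ‖x - z‖ ^ 2) := by
        gcongr
    _ = _ := by rw [exp_add, e1]; ring

lemma Mx_finite {f : Eu n → ℝ} (hf : BddR f) (x : Eu n) : Mx (fun z => ‖f z‖ₑ) x ≠ ∞ := by
  obtain ⟨B, hB⟩ := hf.bdd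
  refine ((Mx_le_of_le (B := ENNReal.ofReal B) (fun z => ?_) x).trans_lt ENNReal.ofReal_lt_top).ne
  rw [← ofReal_norm]
  exact ENNReal.ofReal_le_ofReal (hB z)

/-- The heat flow at `y` is bounded by the maximal function at `x`, up to a Gaussian growth factor in
`x - y`. -/
lemma hu_exp_le {f : Eu n → ℝ} (hf : BddR f) {t : ℝ} (ht : 0 < t) (x y : Eu n) :
    |hu t f y| ≤ 2 ^ ((n:ℝ) / 2) * exp (π ^ 2 / t * ‖x - y‖ ^ 2) * (Mx (fun z => ‖f z‖ₑ) x).toReal := by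
  rw [← ENNReal.ofReal_le_ofReal_iff (by positivity), ← Real.norm_eq_abs, ofReal_norm,
    ENNReal.ofReal_mul (by positivity), ENNReal.ofReal_toReal (Mx_finite hf x)]
  refine (hu_enorm_le ht f y).trans ?_
  calc _ ≤ ∫⁻ z, ENNReal.ofReal (2 ^ ((n:ℝ) / 2) * exp (π ^ 2 / t * ‖x - y‖ ^ 2)) *
        (ENNReal.ofReal (heat (2 * t) (x - z)) * ‖f z‖ₑ) := by
        refine lintegral_mono fun z => ?_
        rw [← mul_assoc, ← ENNReal.ofReal_mul (by positivity)]
        gcongr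
        exact heat_shift_le ht x y z
    _ ≤ _ := by
        rw [lintegral_const_mul' _ _ ENNReal.ofReal_ne_top]
        gcongr
        exact heat_le_Mx (by positivity) hf.meas.enorm x

/-- A mean-zero kernel only sees deviations from a constant. -/
lemma Qop_dev {L : List (Fin n)} (hL : L ≠ []) : ∃ C > 0, ∀ t > 0, ∀ f : Eu n → ℝ, BddR f → ∀ (x : Eu n) (a : ℝ),
    ENNReal.ofReal (t ^ L.length) * ‖Qop L t (fun y => (f y : ℂ)) x‖ₑ ^ 2 ≤
      ENNReal.ofReal C * ∫⁻ y, ENNReal.ofReal (heat (2 * t) (x - y)) * ENNReal.ofReal ((f y - a) ^ 2) := by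
  obtain ⟨C, hC, h⟩ := kap_le L
  refine ⟨C ^ 2, by positivity, fun t ht f hf x a => ?_⟩
  have e : Qop L t (fun y => (f y : ℂ)) x = ∫ y, kap L t (x - y) * ((f y - a : ℝ) : ℂ) := by
    have i1 : Integrable fun y => kap L t (x - y) * (f y : ℂ) :=
      hf.toC.integrable_conv (integrable_kap L ht) x
    have i2 : Integrable fun y => kap L t (x - y) * (a : ℂ) :=
      ((integrable_kap L ht).comp_sub_left x).mul_const _
    have : ∀ y, kap L t (x - y) * ((f y - a : ℝ) : ℂ) = kap L t (x - y) * (f y : ℂ) - kap L t (x - y) * (a : ℂ) := by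
      intro y; push_cast; ring
    simp_rw [this]
    rw [integral_sub i1 i2, integral_mul_const, integral_sub_left_eq_self (fun y => kap L t y),
      integral_kap hL ht, zero_mul, sub_zero]
    rfl
  have hh : Measurable fun y : Eu n => ENNReal.ofReal (heat (2 * t) (x - y)) := by
    have := continuous_heat (n := n) (2 * t); fun_prop
  have hv : Measurable fun y : Eu n => ENNReal.ofReal |f y - a| := by
    have := hf.meas; fun_prop
  have b1 : ‖Qop L t (fun y => (f y : ℂ)) x‖ₑ ≤ ENNReal.ofReal (C * t ^ (-(L.length:ℝ) / 2)) *
      ∫⁻ y, ENNReal.ofReal (heat (2 * t) (x - y)) * ENNReal.ofReal |f y - a| := by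
    rw [e, ← lintegral_const_mul' _ _ ENNReal.ofReal_ne_top]
    refine (enorm_integral_le_lintegral_enorm _).trans (lintegral_mono fun y => ?_)
    rw [enorm_mul, ← mul_assoc, ← ENNReal.ofReal_mul (by positivity)]
    refine mul_le_mul' ?_ ?_
    · rw [← ofReal_norm]
      exact ENNReal.ofReal_le_ofReal (h t ht _)
    · rw [← ofReal_norm, Complex.norm_real, Real.norm_eq_abs]
  have b2 := cs_weight (μ := volume) hh hv
  rw [lintegral_heat (by positivity), one_mul] at b2
  have e3 : ∀ y, ENNReal.ofReal |f y - a| ^ 2 = ENNReal.ofReal ((f y - a) ^ 2) := by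
    intro y; rw [← ENNReal.ofReal_pow (abs_nonneg _), sq_abs]
  simp_rw [e3] at b2
  calc _ ≤ ENNReal.ofReal (t ^ L.length) * (ENNReal.ofReal (C * t ^ (-(L.length:ℝ) / 2)) *
      ∫⁻ y, ENNReal.ofReal (heat (2 * t) (x - y)) * ENNReal.ofReal |f y - a|) ^ 2 := by gcongr
    _ = ENNReal.ofReal (C ^ 2) * (∫⁻ y, ENNReal.ofReal (heat (2 * t) (x - y)) * ENNReal.ofReal |f y - a|) ^ 2 := by
      rw [mul_pow, ← ENNReal.ofReal_pow (by positivity), ← mul_assoc, ← ENNReal.ofReal_mul (by positivity)]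
      congr 2
      rw [mul_pow, ← Real.rpow_natCast (t ^ _) 2, ← Real.rpow_mul ht.le, mul_left_comm, ← Real.rpow_natCast t L.length,
        ← Real.rpow_add ht]
      norm_num
    _ ≤ _ := by gcongr

/-- The power `(|u| + |v|)^{2-p}` of the values of the flow is traded for `(Mx f x)^{2-p}`; the Gaussian
growth from `hu_exp_le` is absorbed by passing from the heat kernel at time `t/2` to that at time
`t`. -/
lemma low_pointwise {p : ℝ} (hp : 1 < p) (hp2 : p ≤ 2) {f : Eu n → ℝ} (hf : BddR f) {t : ℝ} (ht : 0 < t)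
    (x y : Eu n) :
    heat (t / 2) (x - y) * (hu t f y - hu (2 * t) f x) ^ 2 ≤
      2 ^ ((n:ℝ) / 2) * (2 * 2 ^ ((n:ℝ) / 2)) ^ (2 - p) * (2 / (p * (p - 1))) *
        (Mx (fun z => ‖f z‖ₑ) x).toReal ^ (2 - p) *
      (heat t (x - y) * (p * (p - 1) / 2 * ((hu t f y - hu (2 * t) f x) ^ 2 *
        (|hu t f y| + |hu (2 * t) f x|) ^ (p - 2)))) := by
  have hX := hu_exp_le hf ht x y
  have ha := hu_exp_le hf (by positivity : 0 < 2 * t) x x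
  set M := (Mx (fun z => ‖f z‖ₑ) x).toReal with hM
  have hM0 : 0 ≤ M := ENNReal.toReal_nonneg
  set X := hu t f y
  set a := hu (2 * t) f x
  set r := ‖x - y‖
  have hpp : 0 < p * (p - 1) := mul_pos (by linarith) (by linarith)
  set A : ℝ := 2 ^ ((n:ℝ) / 2) with hA
  have hA0 : 0 < A := by positivity
  have hh := heat_pos ht (x - y)
  have e1 : heat (t / 2) (x - y) = A * exp (-(π ^ 2 / t * r ^ 2)) * heat t (x - y) := by
    have := heat_le_two (by positivity : 0 < t / 2) (x - y)
    rw [show 2 * (t / 2) = t by ring] at this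
    rw [this, neg_mul]
  have hE : 1 ≤ exp (π ^ 2 / t * r ^ 2) := Real.one_le_exp (by positivity)
  have hS : |X| + |a| ≤ 2 * A * exp (π ^ 2 / t * r ^ 2) * M := by
    have : |a| ≤ A * exp (π ^ 2 / t * r ^ 2) * M := by
      refine ha.trans ?_
      rw [sub_self, norm_zero]; simp only [ne_eq, OfNat.ofNat_ne_zero, not_false_eq_true, zero_pow, mul_zero, exp_zero, mul_one]
      gcongr
      exact le_mul_of_one_le_right hA0.le hE
    linarith
  rcases (by positivity : 0 ≤ |X| + |a|).eq_or_lt with h0 | h0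
  · have hX0 : X = 0 := abs_eq_zero.1 (by linarith [abs_nonneg X, abs_nonneg a])
    have ha0 : a = 0 := abs_eq_zero.1 (by linarith [abs_nonneg X, abs_nonneg a])
    rw [hX0, ha0]; simp
  have h1 : (X - a) ^ 2 = (X - a) ^ 2 * (|X| + |a|) ^ (p - 2) * (|X| + |a|) ^ (2 - p) := by
    rw [mul_assoc, ← Real.rpow_add h0]; simp
  have h2 : (|X| + |a|) ^ (2 - p) ≤ (2 * A) ^ (2 - p) * exp (π ^ 2 / t * r ^ 2) * M ^ (2 - p) := by
    refine (Real.rpow_le_rpow h0.le hS (by linarith)).trans ?_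
    rw [Real.mul_rpow (by positivity) hM0, Real.mul_rpow (by positivity) (by positivity)]
    gcongr
    exact (Real.rpow_le_rpow_of_exponent_le hE (by linarith : 2 - p ≤ 1)).trans_eq (Real.rpow_one _)
  have h3 : 0 ≤ (X - a) ^ 2 * (|X| + |a|) ^ (p - 2) := by positivity
  calc heat (t / 2) (x - y) * (X - a) ^ 2
      = heat (t / 2) (x - y) * ((X - a) ^ 2 * (|X| + |a|) ^ (p - 2) * (|X| + |a|) ^ (2 - p)) := by rw [← h1]
    _ ≤ heat (t / 2) (x - y) * ((X - a) ^ 2 * (|X| + |a|) ^ (p - 2) *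
        ((2 * A) ^ (2 - p) * exp (π ^ 2 / t * r ^ 2) * M ^ (2 - p))) := by
        have := heat_pos (by positivity : 0 < t / 2) (x - y)
        gcongr
    _ = _ := by
        rw [e1, exp_neg]
        have := (exp_pos (π ^ 2 / t * r ^ 2)).ne'
        have h1 : p ≠ 0 := by linarith
        have h1 : p - 1 ≠ 0 := by linarith
        field_simp

/-- The square function at `x` is at most `(Mx f x)^{2-p}` times the energy density of `|x|^p`. -/
lemma sq_low_pointwise {L : List (Fin n)} (hL : L ≠ []) {p : ℝ} (hp : 1 < p) (hp2 : p ≤ 2) :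
    ∃ C > 0, ∀ f : Eu n → ℝ, BddR f → ∀ x, Sq L (fun y => (f y : ℂ)) x ≤
      ENNReal.ofReal C * Mx (fun z => ‖f z‖ₑ) x ^ (2 - p) *
        ∫⁻ t in Set.Ioi (0:ℝ), Dp p f t x * ENNReal.ofReal t⁻¹ := by
  obtain ⟨C, hC, h⟩ := Qop_dev hL
  have hpp : 0 < p * (p - 1) := mul_pos (by linarith) (by linarith)
  set K := 2 ^ ((n:ℝ) / 2) * (2 * 2 ^ ((n:ℝ) / 2)) ^ (2 - p) * (2 / (p * (p - 1))) with hK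
  have hK0 : 0 < K := by positivity
  refine ⟨5 ^ L.length * C * K, by positivity, fun f hf x => ?_⟩
  have hM := Mx_finite hf x
  unfold Sq
  rw [← lintegral_Ioi_scale (by norm_num : (0:ℝ) < 5 / 4), ← lintegral_const_mul' _ _ (ENNReal.mul_ne_top ENNReal.ofReal_ne_top
    (ENNReal.rpow_ne_top_of_nonneg (by linarith) hM))]
  refine setLIntegral_mono' measurableSet_Ioi fun t ht => ?_
  have ht : 0 < t := ht
  rw [← mul_assoc]
  gcongr ?_ * _
  have e1 : Qop L (5 / 4 * t) (fun y => (f y : ℂ)) x = Qop L (t / 4) (fun y => (hu t f y : ℂ)) x := by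
    rw [Qop_hu hf L (by positivity) ht]; congr 1; ring
  have h1 := h (t / 4) (by positivity) (hu t f) (hf.hu ht) x (hu (2 * t) f x)
  rw [show 2 * (t / 4) = t / 2 by ring] at h1
  rw [e1, show 5 / 4 * t = 5 * (t / 4) by ring, mul_pow, ENNReal.ofReal_mul (by positivity), mul_assoc]
  calc _ ≤ ENNReal.ofReal (5 ^ L.length) * (ENNReal.ofReal C * ∫⁻ y, ENNReal.ofReal (heat (t / 2) (x - y)) *
        ENNReal.ofReal ((hu t f y - hu (2 * t) f x) ^ 2)) := by gcongr
    _ ≤ ENNReal.ofReal (5 ^ L.length) * (ENNReal.ofReal C * (ENNReal.ofReal (K * (Mx (fun z => ‖f z‖ₑ) x).toReal ^ (2 - p)) *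
        Dp p f t x)) := by
        gcongr
        unfold Dp
        rw [← lintegral_const_mul' _ _ ENNReal.ofReal_ne_top]
        refine lintegral_mono fun y => ?_
        have hh := (heat_pos ht (x - y)).le
        rw [← ENNReal.ofReal_mul (heat_pos (by positivity) _).le, ← ENNReal.ofReal_mul hh,
          ← ENNReal.ofReal_mul (by positivity)]
        exact ENNReal.ofReal_le_ofReal (low_pointwise hp hp2 hf ht x y)
    _ = _ := by
        clear_value K
        rw [ENNReal.ofReal_mul hK0.le, ENNReal.ofReal_mul (by positivity : 0 ≤ (5:ℝ) ^ L.length * C),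
          ENNReal.ofReal_mul (by positivity : 0 ≤ (5:ℝ) ^ L.length),
          ← ENNReal.ofReal_rpow_of_nonneg ENNReal.toReal_nonneg (by linarith), ENNReal.ofReal_toReal hM]
        ring

/-- The square function bound for `1 < p < 2`: Hölder's inequality with exponents `2/(2-p)` and `2/p`
in `sq_low_pointwise`, then the maximal theorem and `energy_low`. -/
lemma sq_low_real (hn : 1 ≤ n) {L : List (Fin n)} (hL : L ≠ []) {p : ℝ} (hp : 1 < p) (hp2 : p < 2) :
    ∃ C : ℝ, 0 < C ∧ ∀ f : Eu n → ℝ, BddR f →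
      ∫⁻ x, Sq L (fun y => (f y : ℂ)) x ^ (p / 2) ≤ ENNReal.ofReal C * ∫⁻ x, ‖f x‖ₑ ^ p := by
  obtain ⟨C, hC, h⟩ := sq_low_pointwise hL hp hp2.le
  obtain ⟨C', hC', h'⟩ := strong_Mx hn hp
  refine ⟨C ^ (p / 2) * C' ^ ((2 - p) / 2), by positivity, fun f hf => ?_⟩
  set I := ∫⁻ x, ‖f x‖ₑ ^ p with hI
  set E := fun x => ∫⁻ t in Set.Ioi (0:ℝ), Dp p f t x * ENNReal.ofReal t⁻¹ with hE
  have hEm : Measurable E := by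
    have h2 : Measurable fun z : Eu n × ℝ => Dp p f z.2 z.1 := by
      have := Measurable.comp (measurable_Dp2 p hf.meas)
        (measurable_snd.prodMk measurable_fst : Measurable fun z : Eu n × ℝ => (z.2, z.1))
      simpa only [Function.comp_def] using this
    have : Measurable fun z : Eu n × ℝ => Dp p f z.2 z.1 * ENNReal.ofReal z.2⁻¹ := h2.mul (by fun_prop)
    exact this.lintegral_prod_right'
  have hEi : ∫⁻ x, E x ≤ I := by
    refine (energy_low hp hp2.le hf).trans_eq (lintegral_congr fun x => ?_)
    rw [← ENNReal.ofReal_rpow_of_nonneg (abs_nonneg _) (by linarith), ← Real.norm_eq_abs, ofReal_norm]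
  have hMi : ∫⁻ x, Mx (fun z => ‖f z‖ₑ) x ^ p ≤ ENNReal.ofReal C' * I := by
    obtain ⟨B, hB⟩ := hf.bdd
    refine h' _ hf.meas.enorm ⟨B, fun z => ?_⟩
    rw [← ofReal_norm]
    exact ENNReal.ofReal_le_ofReal (hB z)
  have hMm := measurable_Mx (fun z => ‖f z‖ₑ)
  have hol := ENNReal.lintegral_mul_le_Lp_mul_Lq (volume : Measure (Eu n)) (p := 2 / (2 - p)) (q := 2 / p)
    (f := fun x => Mx (fun z => ‖f z‖ₑ) x ^ ((2 - p) * (p / 2))) (g := fun x => E x ^ (p / 2))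
    (by
      rw [Real.holderConjugate_iff]
      constructor
      · rw [lt_div_iff₀ (by linarith)]; linarith
      · rw [inv_div, inv_div]; ring) (hMm.pow_const _).aemeasurable (hEm.pow_const _).aemeasurable
  have e1 : ∀ x, (Mx (fun z => ‖f z‖ₑ) x ^ ((2 - p) * (p / 2))) ^ (2 / (2 - p)) = Mx (fun z => ‖f z‖ₑ) x ^ p := by
    intro x; rw [← ENNReal.rpow_mul]; congr 1
    have : 2 - p ≠ 0 := by linarith
    field_simp
  have e2 : ∀ x, (E x ^ (p / 2)) ^ (2 / p) = E x := by
    intro x; rw [← ENNReal.rpow_mul]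
    rw [show p / 2 * (2 / p) = 1 by field_simp, ENNReal.rpow_one]
  simp_rw [e1, e2, one_div_div] at hol
  calc ∫⁻ x, Sq L (fun y => (f y : ℂ)) x ^ (p / 2)
      ≤ ∫⁻ x, ENNReal.ofReal (C ^ (p / 2)) * ((fun x => Mx (fun z => ‖f z‖ₑ) x ^ ((2 - p) * (p / 2))) * fun x => E x ^ (p / 2)) x := by
        refine lintegral_mono fun x => ?_
        refine (ENNReal.rpow_le_rpow (h f hf x) (by linarith : 0 ≤ p / 2)).trans_eq ?_
        rw [ENNReal.mul_rpow_of_nonneg _ _ (by linarith), ENNReal.mul_rpow_of_nonneg _ _ (by linarith),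
          ENNReal.ofReal_rpow_of_nonneg hC.le (by linarith), ← ENNReal.rpow_mul, mul_assoc]
        rfl
    _ ≤ ENNReal.ofReal (C ^ (p / 2)) * ((ENNReal.ofReal C' * I) ^ ((2 - p) / 2) * I ^ (p / 2)) := by
        rw [lintegral_const_mul' _ _ ENNReal.ofReal_ne_top]
        gcongr
        refine hol.trans ?_
        have : 0 ≤ (2 - p) / 2 := by linarith
        gcongr
    _ = _ := by
        rw [ENNReal.mul_rpow_of_nonneg _ _ (by linarith), ENNReal.ofReal_rpow_of_nonneg hC'.le (by linarith),
          ENNReal.ofReal_mul (by positivity), mul_assoc, mul_assoc, ← ENNReal.rpow_add_of_nonneg _ _ (by linarith) (by linarith)]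
        rw [show (2 - p) / 2 + p / 2 = 1 by ring, ENNReal.rpow_one]

end SquareLowB

/-! ### A Bellman-type inequality -/

noncomputable section Bellman

/-- The tangent inequality for `x^m` on `[0,∞)`. -/
lemma pow_tangent {m : ℕ} (hm : 1 ≤ m) {s t : ℝ} (hs : 0 ≤ s) (ht : 0 ≤ t) :
    s ^ m + m * s ^ (m - 1) * (t - s) ≤ t ^ m := by
  rcases hs.eq_or_lt with h | h
  · subst h
    rcases Nat.lt_or_ge 1 m with h1 | h1
    · rw [zero_pow (by omega), zero_pow (by omega)]; simp; positivity
    · have : m = 1 := by omega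
      subst this; simp
  · have h0 : 0 ≤ t / s := by positivity
    have h1 := one_add_mul_le_pow (show (-2:ℝ) ≤ t / s - 1 by linarith) m
    have h2 := mul_le_mul_of_nonneg_left h1 (pow_nonneg hs m)
    rw [add_sub_cancel, div_pow, mul_div_cancel₀ _ (by positivity)] at h2
    refine le_trans (le_of_eq ?_) h2
    obtain ⟨k, rfl⟩ : ∃ k, m = k + 1 := ⟨m - 1, by omega⟩
    simp only [Nat.add_sub_cancel]
    field_simp
    ring

/-- A lower bound for the convexity defect of `x^{2m}` in terms of `a^{2m-2}(x-a)²`, from the tangent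
inequality of `s^m` at `s = a²`. -/
lemma gap_pow {m : ℕ} (hm : 1 ≤ m) (a x : ℝ) :
    (a ^ 2) ^ m + 2 * m * ((a ^ 2) ^ (m - 1) * a) * (x - a) + m * (a ^ 2) ^ (m - 1) * (x - a) ^ 2 ≤ (x ^ 2) ^ m := by
  refine le_trans (le_of_eq ?_) (pow_tangent hm (sq_nonneg a) (sq_nonneg x))
  ring

/-- A lower bound for the convexity defect of `x^{2m}` in terms of `(x-a)^{2m}`. It follows from
`gap_pow` unless `|a| < |x-a|/4`; in that case the defect is bounded below through the midpoint of
`a` and `x`, whose absolute value is at least `|x-a|/4`. -/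
lemma gap_pow' {m : ℕ} (hm : 1 ≤ m) (a x : ℝ) :
    (a ^ 2) ^ m + 2 * m * ((a ^ 2) ^ (m - 1) * a) * (x - a) + m / 4 * ((x - a) ^ 2 / 16) ^ (m - 1) * (x - a) ^ 2 ≤
      (x ^ 2) ^ m := by
  have hm0 : (0:ℝ) ≤ m := by positivity
  by_cases h : (x - a) ^ 2 / 16 ≤ a ^ 2
  · refine le_trans ?_ (gap_pow hm a x)
    have h1 : ((x - a) ^ 2 / 16) ^ (m - 1) ≤ (a ^ 2) ^ (m - 1) := pow_le_pow_left₀ (by positivity) h _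
    have h2 : (m:ℝ) / 4 * ((x - a) ^ 2 / 16) ^ (m - 1) ≤ m * (a ^ 2) ^ (m - 1) :=
      mul_le_mul (by linarith) h1 (by positivity) hm0
    nlinarith [mul_le_mul_of_nonneg_right h2 (sq_nonneg (x - a))]
  · push Not at h
    set z := (x + a) / 2 with hz
    have g1 := gap_pow hm z x
    have g2 := gap_pow hm a z
    have g3 := gap_pow hm z a
    have hza : x - z = (x - a) / 2 := by rw [hz]; ring
    have hzb : z - a = (x - a) / 2 := by rw [hz]; ring
    have hzc : a - z = -((x - a) / 2) := by rw [hz]; ring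
    have h1 : (x - a) ^ 2 / 16 ≤ z ^ 2 := by
      have e : z = a + (x - a) / 2 := by rw [hz]; ring
      rw [e]
      set d := x - a
      have h3 := abs_lt_of_sq_lt_sq (show a ^ 2 < (|d| / 4) ^ 2 by rw [div_pow, sq_abs]; linarith) (by positivity)
      have h4 := h3
      rw [← abs_of_nonneg (by positivity : 0 ≤ |d| / 4)] at h4
      have h5 := abs_lt.1 h3
      rcases le_total 0 d with hd | hd
      · rw [abs_of_nonneg hd] at h5; nlinarith
      · rw [abs_of_nonpos hd] at h5; nlinarith
    have h2 : ((x - a) ^ 2 / 16) ^ (m - 1) ≤ (z ^ 2) ^ (m - 1) := pow_le_pow_left₀ (by positivity) h1 _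
    rw [hza] at g1; rw [hzb] at g2; rw [hzc] at g3
    have q1 : 0 ≤ m * (a ^ 2) ^ (m - 1) * ((x - a) / 2) ^ 2 := by positivity
    have q2 : 0 ≤ m * (z ^ 2) ^ (m - 1) * (-((x - a) / 2)) ^ 2 := by positivity
    have q3 : m * ((x - a) ^ 2 / 16) ^ (m - 1) * ((x - a) / 2) ^ 2 ≤ m * (z ^ 2) ^ (m - 1) * ((x - a) / 2) ^ 2 := by
      gcongr
    nlinarith

set_option maxHeartbeats 800000 in
/-- A Bellman-type inequality: the convexity defect of `C (x^{2m} + y^r) + x² y`, `r = m/(m-1)`,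
dominates `b (x-a)²`. -/
lemma bellman {m : ℕ} (hm : 2 ≤ m) {r : ℝ} (hr : r = m / (m - 1)) : ∃ C : ℝ, 0 < C ∧ ∀ x a y b : ℝ, 0 ≤ y → 0 ≤ b →
    (C * ((a ^ 2) ^ m + |b| ^ r) + a ^ 2 * b) +
      (C * (2 * m * ((a ^ 2) ^ (m - 1) * a)) + 2 * a * b) * (x - a) +
      (C * (r * |b| ^ (r - 2) * b) + a ^ 2) * (y - b) + 1 / 8 * (b * (x - a) ^ 2) ≤
    C * ((x ^ 2) ^ m + |y| ^ r) + x ^ 2 * y := by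
  have hm' : (2:ℝ) ≤ m := by exact_mod_cast hm
  have hr1 : 1 < r := by rw [hr, lt_div_iff₀ (by linarith)]; linarith
  have hr2 : r ≤ 2 := by rw [hr, div_le_iff₀ (by linarith)]; linarith
  set c2 := r * (r - 1) / 2 with hc2
  have hc20 : 0 < c2 := by rw [hc2]; apply div_pos (mul_pos (by linarith) (by linarith)); norm_num
  refine ⟨24 / c2 + 16 ^ m, by positivity, fun x a y b hy hb => ?_⟩
  set C := 24 / c2 + 16 ^ m with hC
  have hCc : 24 ≤ C * c2 := by
    rw [hC, add_mul, div_mul_cancel₀ _ hc20.ne']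
    have : 0 ≤ 16 ^ m * c2 := by positivity
    linarith
  have hC16 : 16 ^ m ≤ C := by
    have : 0 ≤ 24 / c2 := by positivity
    linarith
  have g1 := gap_pow (by omega : 1 ≤ m) a x
  have g2 := gap_pow' (by omega : 1 ≤ m) a x
  have g3 := convex_low hr1 hr2 b y
  rw [← hc2, abs_of_nonneg hy, abs_of_nonneg hb] at g3
  rw [abs_of_nonneg hy, abs_of_nonneg hb]
  set d := x - a with hd
  have hx : x = a + d := by rw [hd]; ring
  set e := y - b with he
  set p := (a ^ 2) ^ (m - 1) with hp
  have hp0 : 0 ≤ p := by positivity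
  set K := y + b with hK
  set Z := e ^ 2 * K ^ (r - 2) with hZ
  have hK0 : 0 ≤ K := by positivity
  have hZ0 : 0 ≤ Z := by positivity
  -- Young's inequality, needed when `y < b/2` and `b d²` is not controlled by `y d²`.
  have hyoung : b * d ^ 2 ≤ b ^ r + (d ^ 2) ^ m := by
    have hh : r.HolderConjugate m := by
      rw [Real.holderConjugate_iff]
      refine ⟨hr1, ?_⟩
      rw [hr, inv_div]; field_simp; ring
    have := Real.young_inequality_of_nonneg hb (sq_nonneg d) hh
    rw [Real.rpow_natCast] at this
    have e1 : b ^ r / r ≤ b ^ r := div_le_self (by positivity) hr1.le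
    have e2 : (d ^ 2) ^ m / m ≤ (d ^ 2) ^ m := div_le_self (by positivity) (by linarith)
    linarith
  -- The cross term `2ade` of `x² y` is absorbed in the convexity defects of `|y|^r` and `x^{2m}` and in
  -- a small multiple of `d² (y + b)`.
  have amgm : -(2 * a * d * e) ≤ 8 * Z + d ^ 2 * (p + K) / 8 := by
    rcases hK0.eq_or_lt with h0 | h0
    · have : y = 0 := by linarith
      have : b = 0 := by linarith
      have he0 : e = 0 := by rw [he]; linarith
      rw [he0]
      have : 0 ≤ d ^ 2 * (p + K) / 8 := by positivity
      linarith
    · have hw : 0 < K ^ (r - 2) := by positivity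
      have hwi : a ^ 2 * (K ^ (r - 2))⁻¹ ≤ p + K := by
        have hm1 : (0:ℝ) < m - 1 := by linarith
        have := Real.geom_mean_le_arith_mean2_weighted (w₁ := 1 / (m - 1)) (w₂ := (m - 2) / (m - 1)) (p₁ := p) (p₂ := K)
          (by positivity) (div_nonneg (by linarith) hm1.le) hp0 hK0 (by field_simp; ring)
        have e1 : p ^ (1 / ((m:ℝ) - 1)) = a ^ 2 := by
          rw [hp, ← Real.rpow_natCast, ← Real.rpow_mul (sq_nonneg a), Nat.cast_sub (by omega), Nat.cast_one,
            mul_one_div_cancel hm1.ne', Real.rpow_one]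
        have e2 : K ^ (((m:ℝ) - 2) / (m - 1)) = (K ^ (r - 2))⁻¹ := by
          rw [← Real.rpow_neg hK0]; congr 1; rw [hr]; field_simp; ring
        rw [e1, e2] at this
        have e3 : 1 / ((m:ℝ) - 1) * p ≤ p := by
          apply mul_le_of_le_one_left hp0; rw [div_le_one hm1]; linarith
        have e4 : ((m:ℝ) - 2) / (m - 1) * K ≤ K := by
          apply mul_le_of_le_one_left hK0; rw [div_le_one hm1]; linarith
        linarith
      have h1 : d ^ 2 * (a ^ 2 * (K ^ (r - 2))⁻¹) ≤ d ^ 2 * (p + K) := by gcongr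
      have h2 : 0 ≤ (8 * e * K ^ (r - 2) + a * d) ^ 2 * (K ^ (r - 2))⁻¹ / 8 := by positivity
      have h3 : (8 * e * K ^ (r - 2) + a * d) ^ 2 * (K ^ (r - 2))⁻¹ / 8 =
          8 * (e ^ 2 * K ^ (r - 2)) + 2 * a * d * e + d ^ 2 * (a ^ 2 * (K ^ (r - 2))⁻¹) / 8 := by
        field_simp; ring
      rw [hZ]; linarith
  have hC0 : 0 < C := by positivity
  have k1 : C / 2 * (m * p * d ^ 2) ≥ p * d ^ 2 / 8 := by
    have h16 : (1:ℝ) ≤ 16 ^ m := one_le_pow₀ (by norm_num)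
    have : (1:ℝ) / 8 ≤ C / 2 * m := by nlinarith
    have := mul_le_mul_of_nonneg_right this (by positivity : 0 ≤ p * d ^ 2)
    linarith
  have k2 : C / 2 * (m / 4 * (d ^ 2 / 16) ^ (m - 1) * d ^ 2) ≥ 1 / 4 * (d ^ 2) ^ m := by
    obtain ⟨k, rfl⟩ : ∃ k, m = k + 1 := ⟨m - 1, by omega⟩
    simp only [Nat.add_sub_cancel]
    have : C / 2 * (((k + 1 : ℕ):ℝ) / 4 * (d ^ 2 / 16) ^ k * d ^ 2) = (C / 16 ^ k * ((k + 1 : ℕ):ℝ) / 8) * (d ^ 2) ^ (k + 1) := by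
      rw [div_pow]; field_simp; ring
    rw [this]
    have h3 : 16 ≤ C / 16 ^ k := by rw [le_div_iff₀ (by positivity), ← pow_succ']; exact hC16
    have h4 : (1:ℝ) / 4 ≤ C / 16 ^ k * ((k + 1 : ℕ):ℝ) / 8 := by nlinarith
    exact mul_le_mul_of_nonneg_right h4 (by positivity)
  have k3 : C * (c2 * Z) ≥ 24 * Z := by nlinarith
  -- the three convexity gaps combined
  have s1 := mul_le_mul_of_nonneg_left g1 (by positivity : 0 ≤ C / 2)
  have s2 := mul_le_mul_of_nonneg_left g2 (by positivity : 0 ≤ C / 2)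
  have s3 := mul_le_mul_of_nonneg_left g3 hC0.le
  have alg : x ^ 2 * y = a ^ 2 * b + 2 * a * b * d + a ^ 2 * e + d ^ 2 * y + 2 * a * d * e := by
    rw [hx, he]; ring
  -- If `y ≥ b/2` the term `d² y` suffices; otherwise `|e| ≥ b/2`, hence `b^r ≤ 16 Z`.
  have fin : 1 / 8 * (b * d ^ 2) ≤ 16 * Z + 1 / 4 * (d ^ 2) ^ m + d ^ 2 * y - d ^ 2 * K / 8 := by
    have hdm : 0 ≤ (d ^ 2) ^ m := by positivity
    rcases le_or_gt (b / 2) y with h | h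
    · have : d ^ 2 * (b / 2) ≤ d ^ 2 * y := by gcongr
      have h0 : 0 ≤ d ^ 2 * b := by positivity
      rw [hK]; linear_combination 7 / 8 * this + 3 / 16 * h0 + 16 * hZ0 + 1 / 4 * hdm
    · have hbr : b ^ r ≤ 16 * Z := by
        have hb0 : 0 < b := by linarith
        have h1 : (2 * b) ^ (r - 2) ≤ K ^ (r - 2) :=
          Real.rpow_le_rpow_of_nonpos (by linarith) (by linarith) (by linarith)
        have h2 : (2 * b) ^ (r - 2) ≥ 1 / 2 * b ^ (r - 2) := by
          rw [Real.mul_rpow (by norm_num) hb]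
          gcongr
          rw [show (1:ℝ) / 2 = 2 ^ (-1:ℝ) by rw [Real.rpow_neg_one]; norm_num]
          exact Real.rpow_le_rpow_of_exponent_le (by norm_num) (by linarith)
        have h3 : b ^ r = b ^ 2 * b ^ (r - 2) := by
          rw [← Real.rpow_natCast, ← Real.rpow_add hb0]; congr 1; push_cast; ring
        have h4 : (b / 2) ^ 2 ≤ e ^ 2 := by
          rw [he, ← neg_sq (y - b)]
          exact pow_le_pow_left₀ (by positivity) (by linarith) 2
        have h5 : (b / 2) ^ 2 * (1 / 2 * b ^ (r - 2)) ≤ Z := by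
          rw [hZ]; exact mul_le_mul h4 (le_trans h2 h1) (by positivity) (by positivity)
        rw [h3]; linear_combination 8 * h5 + 8 * hZ0
      have : 0 ≤ d ^ 2 * y := by positivity
      rw [hK]; linear_combination 1 / 4 * hyoung + 1 / 4 * hbr + 12 * hZ0 + 7 / 8 * this
  rw [alg]
  linear_combination s1 + s2 + s3 + k1 + k2 + k3 + amgm + fin

end Bellman

/-! ### Duality estimate for large exponents -/

noncomputable section SquareHigh

variable {n : ℕ}

/-- The local variance of the heat evolution between times `t` and `2t`. -/
def Vr (f : Eu n → ℝ) (t : ℝ) (x : Eu n) : ℝ≥0∞ :=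
  ∫⁻ y, ENNReal.ofReal (heat t (x - y)) * ENNReal.ofReal ((hu t f y - hu (2 * t) f x) ^ 2)

lemma measurable_Vr2 {f : Eu n → ℝ} (hf : Measurable f) :
    Measurable (fun z : ℝ × Eu n => Vr f z.1 z.2) := by
  unfold Vr
  have h1 : Measurable fun w : (ℝ × Eu n) × Eu n => hu w.1.1 f w.2 :=
    measurable_hu_comp hf (by fun_prop) (by fun_prop)
  have h2 : Measurable fun w : (ℝ × Eu n) × Eu n => hu (2 * w.1.1) f w.1.2 :=
    measurable_hu_comp hf (by fun_prop) (by fun_prop)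
  have h3 : Measurable fun w : (ℝ × Eu n) × Eu n => heat w.1.1 (w.1.2 - w.2) :=
    measurable_heat2.comp (by fun_prop : Measurable fun w : (ℝ × Eu n) × Eu n => ((w.1.1, w.1.2 - w.2) : ℝ × Eu n))
  have : Measurable fun w : (ℝ × Eu n) × Eu n => ENNReal.ofReal (heat w.1.1 (w.1.2 - w.2)) *
    ENNReal.ofReal ((hu w.1.1 f w.2 - hu (2 * w.1.1) f w.1.2) ^ 2) :=
    h3.ennreal_ofReal.mul (Measurable.ennreal_ofReal ((h1.sub h2).pow_const 2))
  exact this.lintegral_prod_right'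

/-- `Q_{L,t}` in terms of the local variance `Vr` of the heat flow. Since `7t/2 = 2t + t/2 + t`, the
operator at time `7t/2` is the heat average at time `2t` of `Q_{L,t/2}` applied to the flow at time
`t`; for `L ≠ []` the kernel has mean zero and sees only the deviation of the flow from its average. -/
lemma Qop_Vr {L : List (Fin n)} (hL : L ≠ []) : ∃ C : ℝ, 0 < C ∧ ∀ f : Eu n → ℝ, BddR f → ∀ t > 0, ∀ x,
    ENNReal.ofReal ((7 / 2 * t) ^ L.length) * ‖Qop L (7 / 2 * t) (fun y => (f y : ℂ)) x‖ₑ ^ 2 ≤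
      ENNReal.ofReal C * ∫⁻ z, ENNReal.ofReal (heat (2 * t) (x - z)) * Vr f t z := by
  obtain ⟨C, hC, h⟩ := Qop_dev hL
  refine ⟨7 ^ L.length * C, by positivity, fun f hf t ht x => ?_⟩
  have ht2 : 0 < 2 * t := by positivity
  have e1 : Qop L (7 / 2 * t) (fun y => (f y : ℂ)) x =
      Qop [] (2 * t) (Qop L (t / 2) (fun y => (hu t f y : ℂ))) x := by
    rw [Qop_comp (hf.hu ht).toC [] L ht2 (by positivity), List.nil_append, Qop_hu hf L (by positivity) ht]
    congr 1; ring
  set g := Qop L (t / 2) (fun y => (hu t f y : ℂ)) with hg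
  have hgm : Measurable g := ((hf.hu ht).toC.Qop L (by positivity)).meas
  have e2 : ‖Qop [] (2 * t) g x‖ₑ ≤ ∫⁻ z, ENNReal.ofReal (heat (2 * t) (x - z)) * ‖g z‖ₑ := by
    unfold Qop
    refine (enorm_integral_le_lintegral_enorm _).trans_eq (lintegral_congr fun z => ?_)
    rw [enorm_mul, kap_nil ht2, ← enorm_heat ht2, ← ofReal_norm, Complex.norm_real, ofReal_norm]
  have hhm : Measurable fun z : Eu n => ENNReal.ofReal (heat (2 * t) (x - z)) := by
    have := continuous_heat (n := n) (2 * t)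
    fun_prop
  have e3 : ‖Qop [] (2 * t) g x‖ₑ ^ 2 ≤ ∫⁻ z, ENNReal.ofReal (heat (2 * t) (x - z)) * ‖g z‖ₑ ^ 2 := by
    calc _ ≤ (∫⁻ z, ENNReal.ofReal (heat (2 * t) (x - z)) * ‖g z‖ₑ) ^ 2 := by gcongr
      _ ≤ _ := cs_weight hhm hgm.enorm
      _ = _ := by rw [lintegral_heat ht2, one_mul]
  have e4 : ∀ z, ENNReal.ofReal ((t / 2) ^ L.length) * ‖g z‖ₑ ^ 2 ≤ ENNReal.ofReal C * Vr f t z := by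
    intro z
    have := h (t / 2) (by positivity) (hu t f) (hf.hu ht) z (hu (2 * t) f z)
    rw [show 2 * (t / 2) = t by ring] at this
    exact this
  rw [e1, show 7 / 2 * t = 7 * (t / 2) by ring, mul_pow, ENNReal.ofReal_mul (by positivity),
    ENNReal.ofReal_mul (by positivity), mul_assoc, mul_assoc]
  gcongr ENNReal.ofReal _ * ?_
  calc _ ≤ ENNReal.ofReal ((t / 2) ^ L.length) * ∫⁻ z, ENNReal.ofReal (heat (2 * t) (x - z)) * ‖g z‖ₑ ^ 2 := by gcongr
    _ = ∫⁻ z, ENNReal.ofReal (heat (2 * t) (x - z)) * (ENNReal.ofReal ((t / 2) ^ L.length) * ‖g z‖ₑ ^ 2) := by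
        rw [← lintegral_const_mul' _ _ ENNReal.ofReal_ne_top]
        exact lintegral_congr fun z => by ring
    _ ≤ ∫⁻ z, ENNReal.ofReal (heat (2 * t) (x - z)) * (ENNReal.ofReal C * Vr f t z) := by
        refine lintegral_mono fun z => ?_
        exact mul_le_mul_right (e4 z) _
    _ = _ := by
        rw [← lintegral_const_mul' _ _ ENNReal.ofReal_ne_top]
        exact lintegral_congr fun z => by ring

lemma hu_nonneg {φ : Eu n → ℝ} (h0 : ∀ x, 0 ≤ φ x) {t : ℝ} (ht : 0 < t) (x : Eu n) : 0 ≤ hu t φ x :=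
  integral_nonneg fun y => mul_nonneg (heat_pos ht _).le (h0 y)

lemma ofReal_hu {φ : Eu n → ℝ} (hφ : BddR φ) (h0 : ∀ x, 0 ≤ φ x) {t : ℝ} (ht : 0 < t) (x : Eu n) :
    ENNReal.ofReal (hu t φ x) = ∫⁻ y, ENNReal.ofReal (heat t (x - y)) * ENNReal.ofReal (φ y) := by
  unfold hu
  rw [ofReal_integral_eq_lintegral_ofReal (hφ.integrable ht x)
    (Filter.Eventually.of_forall fun y => mul_nonneg (heat_pos ht _).le (h0 y))]
  exact lintegral_congr fun y => ENNReal.ofReal_mul (heat_pos ht _).le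

set_option maxHeartbeats 1000000 in
/-- The square function tested against `φ ≥ 0`. By `bellman`, the integral of `C (x^{2m} + y^r) + x² y`
along the heat flows of `f` and `φ` decreases in time, at a rate controlling `φ` times the local
variance of `f`; the decrements telescope. -/
lemma high_duality {L : List (Fin n)} (hL : L ≠ []) {m : ℕ} (hm : 2 ≤ m) {r : ℝ} (hr : r = m / (m - 1)) :
    ∃ C : ℝ, 0 < C ∧ ∀ f φ : Eu n → ℝ, BddR f → BddR φ → (∀ x, 0 ≤ φ x) →
      ∫⁻ x, Sq L (fun y => (f y : ℂ)) x * ENNReal.ofReal (φ x) ≤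
        ENNReal.ofReal C * ((∫⁻ x, ENNReal.ofReal ((f x ^ 2) ^ m)) + ∫⁻ x, ENNReal.ofReal (φ x ^ r)) := by
  obtain ⟨C, hC, h⟩ := Qop_Vr hL
  obtain ⟨C', hC', hB⟩ := bellman hm hr
  have hm' : (2:ℝ) ≤ m := by exact_mod_cast hm
  have hr1 : 1 < r := by rw [hr, lt_div_iff₀ (by linarith)]; linarith
  refine ⟨C * (8 * (C' + 1)), by positivity, fun f φ hf hφ h0 => ?_⟩
  -- the Bellman function evaluated along the two heat flows
  set B : ℝ → ℝ → ℝ := fun x y => C' * ((x ^ 2) ^ m + |y| ^ r) + x ^ 2 * y with hBdef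
  have hBbdd : ∀ {u v : Eu n → ℝ}, BddR u → BddR v → BddR fun y => B (u y) (v y) := by
    intro u v hu hv
    obtain ⟨b1, hb1⟩ := hu.bdd
    obtain ⟨b2, hb2⟩ := hv.bdd
    refine ⟨?_, C' * ((b1 ^ 2) ^ m + b2 ^ r) + b1 ^ 2 * b2, fun x => ?_⟩
    · have h1 := hu.meas
      have h2 : Measurable fun y => |v y| ^ r := hv.meas.abs.pow_const r
      have h3 := hv.meas
      simp only [hBdef]
      fun_prop
    · have g1 : (u x) ^ 2 ≤ b1 ^ 2 := by
        rw [← sq_abs (u x)]; exact pow_le_pow_left₀ (abs_nonneg _) (hb1 x) 2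
      have g2 : ((u x) ^ 2) ^ m ≤ (b1 ^ 2) ^ m := pow_le_pow_left₀ (sq_nonneg _) g1 m
      have g3 : |v x| ^ r ≤ b2 ^ r := Real.rpow_le_rpow (abs_nonneg _) (hb2 x) (by linarith)
      have g4 : |u x ^ 2 * v x| ≤ b1 ^ 2 * b2 := by
        rw [abs_mul, abs_of_nonneg (sq_nonneg (u x))]
        exact mul_le_mul g1 (hb2 x) (abs_nonneg _) (sq_nonneg _)
      refine (abs_add_le _ _).trans (add_le_add ?_ g4)
      rw [abs_of_nonneg (by positivity)]
      gcongr
  have hBpos : ∀ x y, 0 ≤ y → 0 ≤ B x y := by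
    intro x y hy; simp only [hBdef]; positivity
  have hAm : ∀ {u v : Eu n → ℝ}, BddR u → BddR v → Measurable fun y => ENNReal.ofReal (B (u y) (v y)) :=
    fun hu hv => (hBbdd hu hv).meas.ennreal_ofReal
  have step : ∀ {u v : Eu n → ℝ}, BddR u → BddR v → (∀ x, 0 ≤ v x) → ∀ {t : ℝ}, 0 < t → ∀ x,
      ENNReal.ofReal (B (hu t u x) (hu t v x)) + ∫⁻ y, ENNReal.ofReal (heat t (x - y)) *
        ENNReal.ofReal (1 / 8 * (hu t v x * (u y - hu t u x) ^ 2)) ≤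
        ∫⁻ y, ENNReal.ofReal (heat t (x - y)) * ENNReal.ofReal (B (u y) (v y)) := by
    intro u v hu1 hv hv0 t ht x
    have hvn := hu_nonneg hv0 ht x
    refine jensen_step ht x (W := fun y => B (u y) (v y)) (X := u) (Y := v) (hBbdd hu1 hv) hu1 hv ?_ ?_
      _ (C' * (2 * m * ((hu t u x ^ 2) ^ (m - 1) * hu t u x)) + 2 * hu t u x * hu t v x)
        (C' * (r * |hu t v x| ^ (r - 2) * hu t v x) + hu t u x ^ 2) (hBpos _ _ hvn)
        (fun y => hBpos _ _ (hv0 y)) fun y => ?_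
    · have := hu1.meas
      fun_prop
    · intro y; positivity
    · exact hB (u y) (hu t u x) (v y) (hu t v x) (hv0 y) hvn
  have main : ∫⁻ t in Set.Ioi (0:ℝ), (∫⁻ z, ENNReal.ofReal (1 / 8) * (Vr f t z * ENNReal.ofReal (hu (2 * t) φ z))) *
      ENNReal.ofReal t⁻¹ ≤ ∫⁻ x, ENNReal.ofReal (B (f x) (φ x)) := by
    refine energy_telescope (A := fun t => ∫⁻ x, ENNReal.ofReal (B (hu t f x) (hu t φ x))) ?_ ?_ ?_
    · have h1 := measurable_Vr2 hf.meas
      have h2 : Measurable fun w : ℝ × Eu n => hu (2 * w.1) φ w.2 :=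
        measurable_hu_comp hφ.meas (by fun_prop) (by fun_prop)
      have : Measurable fun w : ℝ × Eu n => ENNReal.ofReal (1 / 8) * (Vr f w.1 w.2 * ENNReal.ofReal (hu (2 * w.1) φ w.2)) :=
        (h1.mul h2.ennreal_ofReal).const_mul _
      exact this.lintegral_prod_right'
    · intro t ht
      rw [← lintegral_add_left (hAm (hf.hu (by positivity)) (hφ.hu (by positivity))),
        ← lintegral_heat_lintegral ht (hAm (hf.hu ht) (hφ.hu ht))]
      refine lintegral_mono fun x => ?_
      have := step (hf.hu ht) (hφ.hu ht) (fun x => hu_nonneg h0 ht x) ht x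
      rw [hu_hu hf ht ht, hu_hu hφ ht ht, ← two_mul] at this
      refine le_trans (le_of_eq ?_) this
      congr 1
      unfold Vr
      rw [← lintegral_mul_const' _ _ ENNReal.ofReal_ne_top, ← lintegral_const_mul' _ _ ENNReal.ofReal_ne_top]
      refine lintegral_congr fun y => ?_
      rw [ENNReal.ofReal_mul (by norm_num), ENNReal.ofReal_mul (hu_nonneg h0 (by positivity) x)]
      ring
    · intro t ht
      rw [← lintegral_heat_lintegral ht (hAm hf hφ)]
      exact lintegral_mono fun x => le_trans le_self_add (step hf hφ h0 ht x)
  have hBle : ∀ x, ENNReal.ofReal (B (f x) (φ x)) ≤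
      ENNReal.ofReal (C' + 1) * (ENNReal.ofReal ((f x ^ 2) ^ m) + ENNReal.ofReal (φ x ^ r)) := by
    intro x
    have h1 := h0 x
    rw [← ENNReal.ofReal_add (by positivity) (by positivity), ← ENNReal.ofReal_mul (by positivity)]
    apply ENNReal.ofReal_le_ofReal
    have hh : r.HolderConjugate m := by
      rw [Real.holderConjugate_iff]
      refine ⟨hr1, ?_⟩
      rw [hr, inv_div]; field_simp; ring
    have := Real.young_inequality_of_nonneg h1 (sq_nonneg (f x)) hh
    rw [Real.rpow_natCast] at this
    have e1 : φ x ^ r / r ≤ φ x ^ r := div_le_self (by positivity) hr1.le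
    have e2 : (f x ^ 2) ^ m / m ≤ (f x ^ 2) ^ m := div_le_self (by positivity) (by linarith)
    simp only [hBdef]
    rw [abs_of_nonneg h1]
    linarith
  have hBle' : ∫⁻ x, ENNReal.ofReal (B (f x) (φ x)) ≤ ENNReal.ofReal (C' + 1) *
      ((∫⁻ x, ENNReal.ofReal ((f x ^ 2) ^ m)) + ∫⁻ x, ENNReal.ofReal (φ x ^ r)) := by
    refine (lintegral_mono hBle).trans_eq ?_
    rw [lintegral_const_mul' _ _ ENNReal.ofReal_ne_top, lintegral_add_left (by have := hf.meas; fun_prop)]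
  have hswap : ∫⁻ x, Sq L (fun y => (f y : ℂ)) x * ENNReal.ofReal (φ x) ≤
      ENNReal.ofReal (C * 8) * ∫⁻ t in Set.Ioi (0:ℝ),
        (∫⁻ z, ENNReal.ofReal (1 / 8) * (Vr f t z * ENNReal.ofReal (hu (2 * t) φ z))) * ENNReal.ofReal t⁻¹ := by
    have hQm : Measurable fun w : Eu n × ℝ => Qop L (7 / 2 * w.2) (fun y => (f y : ℂ)) w.1 :=
      measurable_Qop_comp L hf.toC.meas (by fun_prop) (by fun_prop)
    have hQe := hQm.enorm
    have hφm := hφ.meas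
    have e1 : ∀ x, Sq L (fun y => (f y : ℂ)) x * ENNReal.ofReal (φ x) =
        ∫⁻ t in Set.Ioi (0:ℝ), ENNReal.ofReal ((7 / 2 * t) ^ L.length) *
          ‖Qop L (7 / 2 * t) (fun y => (f y : ℂ)) x‖ₑ ^ 2 * ENNReal.ofReal t⁻¹ * ENNReal.ofReal (φ x) := by
      intro x
      unfold Sq
      rw [← lintegral_Ioi_scale (by norm_num : (0:ℝ) < 7 / 2), lintegral_mul_const' _ _ ENNReal.ofReal_ne_top]
    simp_rw [e1]
    rw [lintegral_lintegral_swap]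
    swap
    · refine Measurable.aemeasurable ?_
      have : Measurable fun w : Eu n × ℝ => ENNReal.ofReal ((7 / 2 * w.2) ^ L.length) *
          ‖Qop L (7 / 2 * w.2) (fun y => (f y : ℂ)) w.1‖ₑ ^ 2 * ENNReal.ofReal w.2⁻¹ * ENNReal.ofReal (φ w.1) := by
        have a1 : Measurable fun w : Eu n × ℝ => ENNReal.ofReal ((7 / 2 * w.2) ^ L.length) := by fun_prop
        have a2 : Measurable fun w : Eu n × ℝ => ENNReal.ofReal w.2⁻¹ := by fun_prop
        have a3 : Measurable fun w : Eu n × ℝ => ENNReal.ofReal (φ w.1) := (hφm.comp measurable_fst).ennreal_ofReal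
        exact ((a1.mul (hQe.pow_const 2)).mul a2).mul a3
      exact this
    rw [← lintegral_const_mul' _ _ ENNReal.ofReal_ne_top]
    refine setLIntegral_mono' measurableSet_Ioi fun t ht => ?_
    have ht : 0 < t := ht
    have ht2 : 0 < 2 * t := by positivity
    have hVm : Measurable fun z => Vr f t z := by
      have := (measurable_Vr2 hf.meas).comp (measurable_prodMk_left (x := t))
      simpa only [Function.comp_def] using this
    calc _ ≤ ∫⁻ x, ENNReal.ofReal C * ENNReal.ofReal t⁻¹ * ∫⁻ z, (ENNReal.ofReal (heat (2 * t) (x - z)) * Vr f t z *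
          ENNReal.ofReal (φ x)) := by
          refine lintegral_mono fun x => ?_
          rw [lintegral_mul_const' _ _ ENNReal.ofReal_ne_top]
          calc _ ≤ (ENNReal.ofReal C * ∫⁻ z, ENNReal.ofReal (heat (2 * t) (x - z)) * Vr f t z) * ENNReal.ofReal t⁻¹ *
                ENNReal.ofReal (φ x) := by
                exact mul_le_mul_left (mul_le_mul_left (h f hf t ht x) _) _
            _ = _ := by ring
      _ = ENNReal.ofReal C * ENNReal.ofReal t⁻¹ * ∫⁻ z, Vr f t z * ENNReal.ofReal (hu (2 * t) φ z) := by
          rw [lintegral_const_mul' _ _ (ENNReal.mul_ne_top ENNReal.ofReal_ne_top ENNReal.ofReal_ne_top),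
            lintegral_lintegral_swap]
          · congr 1
            refine lintegral_congr fun z => ?_
            rw [ofReal_hu hφ h0 ht2, ← lintegral_const_mul]
            · refine lintegral_congr fun x => ?_
              rw [← heat_neg, neg_sub]; ring
            · have := continuous_heat (n := n) (2 * t)
              fun_prop
          · refine Measurable.aemeasurable ?_
            have := continuous_heat (n := n) (2 * t)
            have : Measurable fun w : Eu n × Eu n => ENNReal.ofReal (heat (2 * t) (w.1 - w.2)) * Vr f t w.2 *
              ENNReal.ofReal (φ w.1) := by fun_prop
            exact this
      _ = _ := by
          rw [lintegral_const_mul' _ _ ENNReal.ofReal_ne_top, ENNReal.ofReal_mul hC.le]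
          have : ENNReal.ofReal 8 * ENNReal.ofReal (1 / 8) = 1 := by
            rw [← ENNReal.ofReal_mul (by norm_num)]; norm_num
          calc _ = ENNReal.ofReal C * (ENNReal.ofReal 8 * ENNReal.ofReal (1 / 8)) * ENNReal.ofReal t⁻¹ *
                ∫⁻ z, Vr f t z * ENNReal.ofReal (hu (2 * t) φ z) := by rw [this, mul_one]
            _ = _ := by ring
  refine hswap.trans ?_
  calc _ ≤ ENNReal.ofReal (C * 8) * (ENNReal.ofReal (C' + 1) *
      ((∫⁻ x, ENNReal.ofReal ((f x ^ 2) ^ m)) + ∫⁻ x, ENNReal.ofReal (φ x ^ r))) := by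
        gcongr; exact main.trans hBle'
    _ = _ := by
        rw [← mul_assoc, ← ENNReal.ofReal_mul (by positivity), mul_assoc C]

end SquareHigh

/-! ### Square functions on `L^{2m}` -/

noncomputable section SquareHigh

variable {n : ℕ}

/-- The square function bound on `L^{2m}`: `high_duality` is applied with `φ = λ G^{m-1}`, `G` a
truncation of `S = Sq L f`, and `λ` so small that the term in `φ` is absorbed by the left side. -/
lemma sq_high_real {L : List (Fin n)} (hL : L ≠ []) {m : ℕ} (hm : 2 ≤ m) :
    ∃ C : ℝ, 0 < C ∧ ∀ f : Eu n → ℝ, BddR f →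
      ∫⁻ x, Sq L (fun y => (f y : ℂ)) x ^ m ≤ ENNReal.ofReal C * ∫⁻ x, ENNReal.ofReal ((f x ^ 2) ^ m) := by
  obtain ⟨C, hC, h⟩ := high_duality hL hm (r := m / (m - 1)) rfl
  have hm' : (2:ℝ) ≤ m := by exact_mod_cast hm
  set r : ℝ := m / (m - 1) with hr
  have hr1 : 1 < r := by rw [hr, lt_div_iff₀ (by linarith)]; linarith
  -- `λ` is chosen so that `C λ^r = λ/2`: the `φ`-term is then half of the left side.
  set lam : ℝ := ((2 * C)⁻¹) ^ (1 / (r - 1)) with hlam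
  have hlam0 : 0 < lam := by positivity
  have hlr : C * lam ^ r = lam / 2 := by
    have : lam ^ r = lam ^ (r - 1) * lam := by rw [← Real.rpow_add_one hlam0.ne']; congr 1; ring
    rw [this, hlam, ← Real.rpow_mul (by positivity), one_div_mul_cancel (by linarith), Real.rpow_one]
    field_simp
  refine ⟨2 * C / lam, by positivity, fun f hf => ?_⟩
  set S := Sq L (fun y => (f y : ℂ)) with hS
  have hSm : Measurable S := measurable_Sq L hf.toC.meas
  set I := ∫⁻ x, ENNReal.ofReal ((f x ^ 2) ^ m) with hI
  by_cases hIt : I = ∞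
  · rw [hIt, ENNReal.mul_top (by positivity)]; exact le_top
  -- `S` is truncated so that `∫ G^m` is finite and can be subtracted.
  set G : ℕ → Eu n → ℝ≥0∞ := fun K => (Metric.ball (0 : Eu n) K).indicator (fun x => min (S x) K) with hG
  have hGm : ∀ K, Measurable (G K) := fun K => (hSm.min measurable_const).indicator measurableSet_ball
  have hGK : ∀ K x, G K x ≤ K := by
    intro K x; simp only [hG]
    by_cases hx : x ∈ Metric.ball (0 : Eu n) K
    · rw [Set.indicator_of_mem hx]; exact min_le_right _ _
    · rw [Set.indicator_of_notMem hx]; exact zero_le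
  have hGS : ∀ K x, G K x ≤ S x := by
    intro K x; simp only [hG]
    by_cases hx : x ∈ Metric.ball (0 : Eu n) K
    · rw [Set.indicator_of_mem hx]; exact min_le_left _ _
    · rw [Set.indicator_of_notMem hx]; exact zero_le
  have hGt : ∀ K x, G K x ≠ ∞ := fun K x => ((hGK K x).trans_lt (ENNReal.natCast_lt_top K)).ne
  have hJt : ∀ K, ∫⁻ x, G K x ^ m ≠ ∞ := by
    intro K
    have : ∀ x, G K x ^ m ≤ (Metric.ball (0 : Eu n) K).indicator (fun _ => (K:ℝ≥0∞) ^ m) x := by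
      intro x
      by_cases hx : x ∈ Metric.ball (0 : Eu n) K
      · rw [Set.indicator_of_mem hx]; gcongr; exact hGK K x
      · rw [Set.indicator_of_notMem hx]; simp only [hG]; rw [Set.indicator_of_notMem hx, zero_pow (by omega)]
    refine ((lintegral_mono this).trans_lt ?_).ne
    rw [lintegral_indicator measurableSet_ball, setLIntegral_const]
    exact ENNReal.mul_lt_top (ENNReal.pow_lt_top (ENNReal.natCast_lt_top K)) measure_ball_lt_top
  have key : ∀ K, ∫⁻ x, G K x ^ m ≤ ENNReal.ofReal (2 * C / lam) * I := by
    intro K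
    have hφ : BddR fun x => lam * (G K x).toReal ^ (m - 1) := by
      refine ⟨((hGm K).ennreal_toReal.pow_const _).const_mul _, lam * (K:ℝ) ^ (m - 1), fun x => ?_⟩
      rw [abs_of_nonneg (by positivity)]
      gcongr
      have := ENNReal.toReal_mono (ENNReal.natCast_ne_top K) (hGK K x)
      simpa using this
    have h1 := h f (fun x => lam * (G K x).toReal ^ (m - 1)) hf hφ (fun x => by positivity)
    have e1 : ∀ x, ENNReal.ofReal ((lam * (G K x).toReal ^ (m - 1)) ^ r) = ENNReal.ofReal (lam ^ r) * G K x ^ m := by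
      intro x
      have h0 : 0 ≤ (G K x).toReal := ENNReal.toReal_nonneg
      rw [Real.mul_rpow hlam0.le (by positivity), ENNReal.ofReal_mul (by positivity)]
      congr 1
      rw [← Real.rpow_natCast, ← Real.rpow_mul h0, Nat.cast_sub (by omega), Nat.cast_one, hr,
        mul_div_cancel₀ _ (by linarith : (m:ℝ) - 1 ≠ 0), Real.rpow_natCast, ENNReal.ofReal_pow h0, ENNReal.ofReal_toReal (hGt K x)]
    simp_rw [e1] at h1
    rw [lintegral_const_mul' _ _ ENNReal.ofReal_ne_top] at h1
    have e2 : ENNReal.ofReal lam * ∫⁻ x, G K x ^ m ≤ ∫⁻ x, S x * ENNReal.ofReal (lam * (G K x).toReal ^ (m - 1)) := by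
      rw [← lintegral_const_mul' _ _ ENNReal.ofReal_ne_top]
      refine lintegral_mono fun x => ?_
      rw [ENNReal.ofReal_mul hlam0.le, ENNReal.ofReal_pow ENNReal.toReal_nonneg, ENNReal.ofReal_toReal (hGt K x)]
      obtain ⟨k, hk⟩ : ∃ k, m = k + 1 := ⟨m - 1, by omega⟩
      calc ENNReal.ofReal lam * G K x ^ m = G K x * (ENNReal.ofReal lam * G K x ^ (m - 1)) := by
            rw [hk, Nat.add_sub_cancel, pow_succ]; ring
        _ ≤ _ := by gcongr; exact hGS K x
    have h2 := e2.trans h1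
    have e3 : ∫⁻ x, G K x ^ m = ENNReal.ofReal (∫⁻ x, G K x ^ m).toReal := (ENNReal.ofReal_toReal (hJt K)).symm
    have e4 : I = ENNReal.ofReal I.toReal := (ENNReal.ofReal_toReal hIt).symm
    rw [← hI, e3, e4, ← ENNReal.ofReal_mul (by positivity), ← ENNReal.ofReal_mul (by positivity),
      ← ENNReal.ofReal_add ENNReal.toReal_nonneg (by positivity), ← ENNReal.ofReal_mul hC.le,
      ENNReal.ofReal_le_ofReal_iff (by positivity)] at h2
    rw [e3, e4, ← ENNReal.ofReal_mul (by positivity)]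
    apply ENNReal.ofReal_le_ofReal
    have h3 : lam * (∫⁻ x, G K x ^ m).toReal ≤ 2 * C * I.toReal := by
      have : C * (lam ^ r * (∫⁻ x, G K x ^ m).toReal) = lam / 2 * (∫⁻ x, G K x ^ m).toReal := by rw [← mul_assoc, hlr]
      linarith
    rw [div_mul_eq_mul_div, le_div_iff₀ hlam0]
    linarith
  have hmono : ∀ x, Monotone fun K => G K x := by
    intro x K K' hKK
    simp only [hG]
    by_cases hx : x ∈ Metric.ball (0 : Eu n) K
    · have hx' : x ∈ Metric.ball (0 : Eu n) K' := Metric.ball_subset_ball (by exact_mod_cast hKK) hx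
      rw [Set.indicator_of_mem hx, Set.indicator_of_mem hx']
      gcongr
    · rw [Set.indicator_of_notMem hx]; exact zero_le
  have hsup : ∀ x, S x ^ m ≤ ⨆ K, G K x ^ m := by
    intro x
    refine le_of_forall_lt fun c hc => ?_
    have hcl : ContinuousAt (fun z : ℝ≥0∞ => z ^ m) (S x) := (ENNReal.continuous_pow m).continuousAt
    have htend : Filter.Tendsto (fun K : ℕ => min (S x) (K:ℝ≥0∞)) Filter.atTop (nhds (S x)) := by
      have : Filter.Tendsto (fun K : ℕ => min (S x) (K:ℝ≥0∞)) Filter.atTop (nhds (min (S x) ∞)) :=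
        tendsto_const_nhds.min ENNReal.tendsto_nat_nhds_top
      simpa using this
    have h1 := (hcl.tendsto.comp htend).eventually (lt_mem_nhds hc)
    obtain ⟨K0, hK0⟩ := exists_nat_gt ‖x‖
    obtain ⟨K, hK1, hK2⟩ := (h1.and (Filter.eventually_ge_atTop K0)).exists
    refine lt_of_lt_of_le ?_ (le_iSup (fun K => G K x ^ m) K)
    have hx : x ∈ Metric.ball (0 : Eu n) K := by
      rw [mem_ball_zero_iff]
      have : (K0:ℝ) ≤ K := by exact_mod_cast hK2
      linarith
    simp only [hG]
    rw [Set.indicator_of_mem hx]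
    exact hK1
  calc ∫⁻ x, S x ^ m ≤ ∫⁻ x, ⨆ K, G K x ^ m := lintegral_mono hsup
    _ = ⨆ K, ∫⁻ x, G K x ^ m := by
        refine lintegral_iSup (fun K => (hGm K).pow_const m) fun K K' hKK x => ?_
        exact pow_le_pow_left₀ zero_le (hmono x hKK) m
    _ ≤ _ := iSup_le key

/-! ### Complex-valued functions -/

lemma Sq_add_le (L : List (Fin n)) {f g : Eu n → ℂ} (hf : Bdd f) (hg : Bdd g) (x : Eu n) :
    Sq L (fun y => f y + g y) x ≤ 2 * Sq L f x + 2 * Sq L g x := by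
  unfold Sq
  have hm : Measurable fun t : ℝ => ENNReal.ofReal (t ^ L.length) * ‖Qop L t f x‖ₑ ^ 2 * ENNReal.ofReal t⁻¹ := by
    have h1 : Measurable fun t : ℝ => Qop L t f x := measurable_Qop_comp L hf.meas measurable_id measurable_const
    have a1 : Measurable fun t : ℝ => ENNReal.ofReal (t ^ L.length) := by fun_prop
    exact (a1.mul (h1.enorm.pow_const 2)).mul (by fun_prop)
  rw [← lintegral_const_mul' _ _ (by norm_num), ← lintegral_const_mul' _ _ (by norm_num),
    ← lintegral_add_left (hm.const_mul 2)]
  refine setLIntegral_mono' measurableSet_Ioi fun t ht => ?_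
  have ht : 0 < t := ht
  have e : Qop L t (fun y => f y + g y) x = Qop L t f x + Qop L t g x := by
    unfold Qop
    rw [← integral_add (hf.integrable_conv (integrable_kap L ht) x) (hg.integrable_conv (integrable_kap L ht) x)]
    simp_rw [mul_add]
  have h2 : ‖Qop L t (fun y => f y + g y) x‖ₑ ^ 2 ≤ 2 * ‖Qop L t f x‖ₑ ^ 2 + 2 * ‖Qop L t g x‖ₑ ^ 2 := by
    rw [e]
    have h3 : ‖Qop L t f x + Qop L t g x‖ ^ 2 ≤ 2 * ‖Qop L t f x‖ ^ 2 + 2 * ‖Qop L t g x‖ ^ 2 := by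
      have := pow_le_pow_left₀ (norm_nonneg _) (norm_add_le (Qop L t f x) (Qop L t g x)) 2
      nlinarith [sq_nonneg (‖Qop L t f x‖ - ‖Qop L t g x‖)]
    have := ENNReal.ofReal_le_ofReal h3
    rw [ENNReal.ofReal_add (by positivity) (by positivity), ENNReal.ofReal_mul (by norm_num), ENNReal.ofReal_mul (by norm_num),
      ENNReal.ofReal_pow (norm_nonneg _), ENNReal.ofReal_pow (norm_nonneg _), ENNReal.ofReal_pow (norm_nonneg _),
      ofReal_norm, ofReal_norm, ofReal_norm] at this
    simpa using this
  calc _ ≤ ENNReal.ofReal (t ^ L.length) * (2 * ‖Qop L t f x‖ₑ ^ 2 + 2 * ‖Qop L t g x‖ₑ ^ 2) * ENNReal.ofReal t⁻¹ := by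
        gcongr
    _ = _ := by ring

lemma Sq_const_mul (L : List (Fin n)) (f : Eu n → ℂ) (c : ℂ) (x : Eu n) :
    Sq L (fun y => c * f y) x = ‖c‖ₑ ^ 2 * Sq L f x := by
  unfold Sq
  rw [← lintegral_const_mul' _ _ (by simp)]
  refine lintegral_congr fun t => ?_
  have e : Qop L t (fun y => c * f y) x = c * Qop L t f x := by
    unfold Qop
    rw [← integral_const_mul]
    congr 1; funext y; ring
  rw [e, enorm_mul]; ring

/-- The exponents at which the square function is bounded on `L^p` by the two energy arguments. -/
def GoodExp (p : ℝ) : Prop := (1 < p ∧ p < 2) ∨ ∃ m : ℕ, 2 ≤ m ∧ p = 2 * m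

lemma GoodExp.pos {p : ℝ} (h : GoodExp p) : 1 < p := by
  rcases h with h | ⟨m, hm, rfl⟩
  · exact h.1
  · have : (2:ℝ) ≤ m := by exact_mod_cast hm
    linarith

lemma sq_strong_real (hn : 1 ≤ n) {L : List (Fin n)} (hL : L ≠ []) {p : ℝ} (hp : GoodExp p) :
    ∃ C : ℝ, 0 < C ∧ ∀ f : Eu n → ℝ, BddR f →
      ∫⁻ x, Sq L (fun y => (f y : ℂ)) x ^ (p / 2) ≤ ENNReal.ofReal C * ∫⁻ x, ‖f x‖ₑ ^ p := by
  rcases hp with h | ⟨m, hm, rfl⟩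
  · exact sq_low_real hn hL h.1 h.2
  · obtain ⟨C, hC, h⟩ := sq_high_real hL hm
    refine ⟨C, hC, fun f hf => ?_⟩
    rw [mul_div_cancel_left₀ _ (by norm_num)]
    simp_rw [ENNReal.rpow_natCast]
    refine (h f hf).trans_eq ?_
    congr 1
    refine lintegral_congr fun x => ?_
    rw [show (2:ℝ) * m = ((2 * m : ℕ):ℝ) by push_cast; ring, ENNReal.rpow_natCast, ← pow_mul, ← ofReal_norm,
      ← ENNReal.ofReal_pow (norm_nonneg _), Real.norm_eq_abs, pow_mul, pow_mul, sq_abs]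

/-- Square functions are bounded on `L^p` for the exponents `GoodExp p`; the complex case follows from
the real one applied to the real and imaginary parts. -/
lemma sq_strong (hn : 1 ≤ n) {L : List (Fin n)} (hL : L ≠ []) {p : ℝ} (hp : GoodExp p) :
    ∃ C : ℝ, 0 < C ∧ ∀ f : Eu n → ℂ, Bdd f →
      ∫⁻ x, Sq L f x ^ (p / 2) ≤ ENNReal.ofReal C * ∫⁻ x, ‖f x‖ₑ ^ p := by
  obtain ⟨C, hC, h⟩ := sq_strong_real hn hL hp
  have hp1 := hp.pos
  have hp0 : 0 ≤ p / 2 := by linarith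
  refine ⟨2 * 4 ^ (p / 2) * C, by positivity, fun f hf => ?_⟩
  obtain ⟨B, hB⟩ := hf.bdd
  have hre : BddR fun x => (f x).re := ⟨Complex.measurable_re.comp hf.meas, B, fun x => (Complex.abs_re_le_norm _).trans (hB x)⟩
  have him : BddR fun x => (f x).im := ⟨Complex.measurable_im.comp hf.meas, B, fun x => (Complex.abs_im_le_norm _).trans (hB x)⟩
  have hIim : Bdd fun x => Complex.I * ((f x).im : ℂ) := by
    refine ⟨him.toC.meas.const_mul _, B, fun x => ?_⟩
    rw [norm_mul, Complex.norm_I, one_mul, Complex.norm_real]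
    exact (Complex.abs_im_le_norm _).trans (hB x)
  set u := Sq L fun x => ((f x).re : ℂ) with hu
  set v := Sq L fun x => ((f x).im : ℂ) with hv
  have hum : Measurable u := measurable_Sq L hre.toC.meas
  have hle : ∀ x, Sq L f x ≤ 2 * u x + 2 * v x := by
    intro x
    have e : f = fun y => ((f y).re : ℂ) + Complex.I * ((f y).im : ℂ) := by
      funext y; rw [mul_comm]; exact (Complex.re_add_im _).symm
    have h1 := Sq_add_le L hre.toC hIim x
    have hI1 : ‖Complex.I‖ₑ = 1 := by rw [← ofReal_norm, Complex.norm_I]; norm_num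
    rw [← e, Sq_const_mul, hI1, one_pow, one_mul] at h1
    exact h1
  have hpw : ∀ x, Sq L f x ^ (p / 2) ≤ ENNReal.ofReal (4 ^ (p / 2)) * (u x ^ (p / 2) + v x ^ (p / 2)) := by
    intro x
    have e4 : ENNReal.ofReal (4 ^ (p / 2)) = (4:ℝ≥0∞) ^ (p / 2) := by
      rw [← ENNReal.ofReal_rpow_of_pos (by norm_num)]; norm_num
    rw [e4]
    rcases le_total (u x) (v x) with h1 | h1
    · calc _ ≤ (4 * v x) ^ (p / 2) := by
            refine ENNReal.rpow_le_rpow ((hle x).trans ?_) hp0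
            calc _ ≤ 2 * v x + 2 * v x := by gcongr
              _ = _ := by ring
        _ = 4 ^ (p / 2) * v x ^ (p / 2) := ENNReal.mul_rpow_of_nonneg _ _ hp0
        _ ≤ _ := by gcongr; exact le_add_self
    · calc _ ≤ (4 * u x) ^ (p / 2) := by
            refine ENNReal.rpow_le_rpow ((hle x).trans ?_) hp0
            calc _ ≤ 2 * u x + 2 * u x := by gcongr
              _ = _ := by ring
        _ = 4 ^ (p / 2) * u x ^ (p / 2) := ENNReal.mul_rpow_of_nonneg _ _ hp0
        _ ≤ _ := by gcongr; exact le_self_add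
  have hI1 : ∫⁻ x, ‖(f x).re‖ₑ ^ p ≤ ∫⁻ x, ‖f x‖ₑ ^ p := by
    refine lintegral_mono fun x => ENNReal.rpow_le_rpow ?_ (by linarith)
    rw [← ofReal_norm, ← ofReal_norm]
    exact ENNReal.ofReal_le_ofReal (Complex.abs_re_le_norm _)
  have hI2 : ∫⁻ x, ‖(f x).im‖ₑ ^ p ≤ ∫⁻ x, ‖f x‖ₑ ^ p := by
    refine lintegral_mono fun x => ENNReal.rpow_le_rpow ?_ (by linarith)
    rw [← ofReal_norm, ← ofReal_norm]
    exact ENNReal.ofReal_le_ofReal (Complex.abs_im_le_norm _)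
  calc ∫⁻ x, Sq L f x ^ (p / 2) ≤ ∫⁻ x, ENNReal.ofReal (4 ^ (p / 2)) * (u x ^ (p / 2) + v x ^ (p / 2)) := lintegral_mono hpw
    _ = ENNReal.ofReal (4 ^ (p / 2)) * ((∫⁻ x, u x ^ (p / 2)) + ∫⁻ x, v x ^ (p / 2)) := by
        rw [lintegral_const_mul' _ _ ENNReal.ofReal_ne_top, lintegral_add_left (hum.pow_const _)]
    _ ≤ ENNReal.ofReal (4 ^ (p / 2)) * ((ENNReal.ofReal C * ∫⁻ x, ‖f x‖ₑ ^ p) + ENNReal.ofReal C * ∫⁻ x, ‖f x‖ₑ ^ p) := by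
        gcongr
        · exact (h _ hre).trans (mul_le_mul_right hI1 _)
        · exact (h _ him).trans (mul_le_mul_right hI2 _)
    _ = _ := by
        rw [ENNReal.ofReal_mul (by positivity), ENNReal.ofReal_mul (by norm_num)]
        have : ENNReal.ofReal 2 = 2 := by norm_num
        rw [this]; ring

end SquareHigh

noncomputable section LorentzSeq

/-! ### Dyadic Lorentz quasinorms -/

/-- Powers of two with real exponents, in `ℝ≥0∞`. -/
def tw (x : ℝ) : ℝ≥0∞ := (2:ℝ≥0∞) ^ x

lemma tw_pos (x : ℝ) : 0 < tw x := ENNReal.rpow_pos (by norm_num) (by norm_num)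
lemma tw_ne_zero (x : ℝ) : tw x ≠ 0 := (tw_pos x).ne'
lemma tw_ne_top (x : ℝ) : tw x ≠ ∞ := by
  unfold tw
  exact ENNReal.rpow_ne_top_of_ne_zero (by norm_num) (by norm_num)
lemma tw_add (x y : ℝ) : tw (x + y) = tw x * tw y := ENNReal.rpow_add _ _ (by norm_num) (by norm_num)
lemma tw_zero : tw 0 = 1 := ENNReal.rpow_zero
lemma tw_one : tw 1 = 2 := ENNReal.rpow_one _
lemma tw_rpow (x y : ℝ) : tw x ^ y = tw (x * y) := (ENNReal.rpow_mul _ _ _).symm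
lemma tw_mono {x y : ℝ} (h : x ≤ y) : tw x ≤ tw y := ENNReal.rpow_le_rpow_of_exponent_le (by norm_num) h
lemma tw_eq (x : ℝ) : tw x = ENNReal.ofReal (2 ^ x) := by
  unfold tw; rw [← ENNReal.ofReal_rpow_of_pos (by norm_num)]; norm_num

/-- The `ℓ^q(ℤ)` norm of a sequence in `[0,∞]`. -/
def lq (q : ℝ≥0∞) (a : ℤ → ℝ≥0∞) : ℝ≥0∞ :=
  if q = ∞ then ⨆ k, a k else (∑' k, a k ^ q.toReal) ^ (1 / q.toReal)

lemma toReal_ge_one {q : ℝ≥0∞} (hq : 1 ≤ q) (h : q ≠ ∞) : 1 ≤ q.toReal := by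
  have := ENNReal.toReal_mono h hq
  simpa using this

lemma lq_mono {q : ℝ≥0∞} {a b : ℤ → ℝ≥0∞} (h : ∀ k, a k ≤ b k) : lq q a ≤ lq q b := by
  unfold lq
  split_ifs
  · exact iSup_mono h
  · refine ENNReal.rpow_le_rpow (ENNReal.tsum_le_tsum fun k => ?_) (by positivity)
    exact ENNReal.rpow_le_rpow (h k) ENNReal.toReal_nonneg

lemma lq_const_mul {q : ℝ≥0∞} (hq : 1 ≤ q) (c : ℝ≥0∞) (a : ℤ → ℝ≥0∞) : lq q (fun k => c * a k) = c * lq q a := by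
  unfold lq
  split_ifs with h
  · rw [ENNReal.mul_iSup]
  · have h1 := toReal_ge_one hq h
    simp_rw [ENNReal.mul_rpow_of_nonneg _ _ (by linarith : 0 ≤ q.toReal)]
    rw [ENNReal.tsum_mul_left, ENNReal.mul_rpow_of_nonneg _ _ (by positivity), ← ENNReal.rpow_mul,
      mul_one_div_cancel (by linarith), ENNReal.rpow_one]

lemma lq_shift (q : ℝ≥0∞) (a : ℤ → ℝ≥0∞) (i : ℤ) : lq q (fun k => a (k + i)) = lq q a := by
  unfold lq
  split_ifs with h
  · exact (Equiv.addRight i).iSup_comp (g := a)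
  · congr 1
    exact (Equiv.addRight i).tsum_eq (fun k => a k ^ q.toReal)

lemma le_lq {q : ℝ≥0∞} (hq : 1 ≤ q) (a : ℤ → ℝ≥0∞) (k : ℤ) : a k ≤ lq q a := by
  unfold lq
  split_ifs with h
  · exact le_iSup a k
  · have h1 := toReal_ge_one hq h
    calc a k = (a k ^ q.toReal) ^ (1 / q.toReal) := by
          rw [← ENNReal.rpow_mul, mul_one_div_cancel (by linarith), ENNReal.rpow_one]
      _ ≤ _ := ENNReal.rpow_le_rpow (ENNReal.le_tsum k) (by positivity)

lemma lq_add_le {q : ℝ≥0∞} (hq : 1 ≤ q) (a b : ℤ → ℝ≥0∞) :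
    lq q (fun k => a k + b k) ≤ 2 * (lq q a + lq q b) := by
  have hmax : ∀ k, a k + b k ≤ 2 * max (a k) (b k) := fun k => by
    rw [two_mul]; exact add_le_add (le_max_left _ _) (le_max_right _ _)
  refine (lq_mono hmax).trans ?_
  rw [lq_const_mul hq]
  gcongr
  unfold lq
  split_ifs with h
  · refine iSup_le fun k => max_le ?_ ?_
    · exact (le_iSup a k).trans le_self_add
    · exact (le_iSup b k).trans le_add_self
  · have h1 := toReal_ge_one hq h
    calc _ ≤ ((∑' k, a k ^ q.toReal) + ∑' k, b k ^ q.toReal) ^ (1 / q.toReal) := by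
          refine ENNReal.rpow_le_rpow ?_ (by positivity)
          rw [← ENNReal.tsum_add]
          refine ENNReal.tsum_le_tsum fun k => ?_
          show (max (a k) (b k)) ^ q.toReal ≤ _
          rcases le_total (a k) (b k) with h2 | h2
          · rw [max_eq_right h2]; exact le_add_self
          · rw [max_eq_left h2]; exact le_self_add
      _ ≤ _ := ENNReal.rpow_add_le_add_rpow _ _ (by positivity) (by rw [div_le_one (by linarith)]; exact h1)

/-- Hölder's inequality for the `ℓ^q` quasinorms, infinite exponents included. -/
lemma lq_mul_le {q q₁ q₂ : ℝ≥0∞} (hq : 1 ≤ q) (hq1 : 1 ≤ q₁) (hq2 : 1 ≤ q₂) (h : 1 / q = 1 / q₁ + 1 / q₂)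
    (a b : ℤ → ℝ≥0∞) : lq q (fun k => a k * b k) ≤ lq q₁ a * lq q₂ b := by
  simp only [one_div] at h
  by_cases h1 : q₁ = ∞
  · have : q = q₂ := by rw [h1] at h; simpa using h
    subst this
    calc _ ≤ lq q (fun k => lq q₁ a * b k) := lq_mono fun k => mul_le_mul_left (le_lq hq1 a k) _
      _ = _ := lq_const_mul hq _ _
  by_cases h2 : q₂ = ∞
  · have : q = q₁ := by rw [h2] at h; simpa using h
    subst this
    calc _ ≤ lq q (fun k => lq q₂ b * a k) := lq_mono fun k => by
            rw [mul_comm]; exact mul_le_mul_left (le_lq hq2 b k) _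
      _ = _ := by rw [lq_const_mul hq, mul_comm]
  have hqt : q ≠ ∞ := by
    intro hq'
    rw [hq', ENNReal.inv_top] at h
    have := h.symm
    rw [add_eq_zero] at this
    exact h1 (ENNReal.inv_eq_zero.1 this.1)
  unfold lq
  rw [if_neg h1, if_neg h2, if_neg hqt]
  have r0 := toReal_ge_one hq hqt
  have r1 := toReal_ge_one hq1 h1
  have r2 := toReal_ge_one hq2 h2
  have hr : 1 / q.toReal = 1 / q₁.toReal + 1 / q₂.toReal := by
    have := congrArg ENNReal.toReal h
    rw [ENNReal.toReal_add (by simp; intro h; simp [h] at hq1) (by simp; intro h; simp [h] at hq2), ENNReal.toReal_inv, ENNReal.toReal_inv, ENNReal.toReal_inv] at this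
    simpa [one_div] using this
  have hlt : q.toReal < q₁.toReal := by
    have : 0 < 1 / q₂.toReal := by positivity
    have h3 : 1 / q₁.toReal < 1 / q.toReal := by linarith
    exact (one_div_lt_one_div (by linarith) (by linarith)).1 h3
  have := ENNReal.lintegral_Lp_mul_le_Lq_mul_Lr (p := q.toReal) (q := q₁.toReal) (r := q₂.toReal) (by linarith) hlt hr
    (Measure.count : Measure ℤ) (f := a) (g := b) (measurable_of_countable a).aemeasurable (measurable_of_countable b).aemeasurable
  simpa only [lintegral_count, Pi.mul_apply] using this

/-- Subadditivity of `x ↦ x^p` for `0 < p ≤ 1`, for infinite sums. -/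
lemma tsum_rpow_le {ι : Type*} {p : ℝ} (h : 0 < p) (hp : p ≤ 1) (x : ι → ℝ≥0∞) :
    (∑' i, x i) ^ p ≤ ∑' i, x i ^ p := by
  have : ∀ s : Finset ι, (∑ i ∈ s, x i) ^ p ≤ ∑ i ∈ s, x i ^ p := by
    classical
    intro s
    induction s using Finset.induction_on with
    | empty => simp [h]
    | insert i s hi ih =>
      rw [Finset.sum_insert hi, Finset.sum_insert hi]
      exact (ENNReal.rpow_add_le_add_rpow _ _ h.le hp).trans (by gcongr)
  rw [ENNReal.tsum_eq_iSup_sum, ENNReal.tsum_eq_iSup_sum]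
  have e : (⨆ s : Finset ι, ∑ i ∈ s, x i) ^ p = ⨆ s : Finset ι, (∑ i ∈ s, x i) ^ p :=
    (ENNReal.orderIsoRpow p h).map_iSup _
  rw [e]
  exact iSup_mono this

/-- Convolution with a summable kernel is bounded on `ℓ^q(ℤ)`. -/
lemma lq_conv {q : ℝ≥0∞} (hq : 1 ≤ q) {w : ℤ → ℝ≥0∞} (hw : ∀ i, w i ≤ 1) (hw0 : w 0 = 1) (a : ℤ → ℝ≥0∞) :
    lq q (fun k => ∑' i, w i * a (k + i)) ≤ (∑' i, w i ^ (1 / 2 : ℝ)) ^ 2 * lq q a := by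
  set W := ∑' i, w i ^ (1 / 2 : ℝ) with hW
  have hW1 : 1 ≤ W := by
    refine le_trans ?_ (ENNReal.le_tsum 0); rw [hw0]; simp
  -- Writing `w = w^{1/2} w^{1/2}` replaces the sum over `i` by `W` times a supremum.
  have hhalf : ∀ i, w i ^ (1 / 2 : ℝ) * w i ^ (1 / 2 : ℝ) = w i := fun i => by
    rw [← ENNReal.rpow_add_of_nonneg _ _ (by norm_num) (by norm_num)]; norm_num
  have hb : ∀ k, ∑' i, w i * a (k + i) ≤ W * ⨆ i, w i ^ (1 / 2 : ℝ) * a (k + i) := by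
    intro k
    rw [hW, ← ENNReal.tsum_mul_right]
    refine ENNReal.tsum_le_tsum fun i => ?_
    rw [← hhalf i, mul_assoc, hhalf i]
    exact mul_le_mul_right (le_iSup (fun i => w i ^ (1 / 2 : ℝ) * a (k + i)) i) _
  refine (lq_mono hb).trans ?_
  rw [lq_const_mul hq, sq, mul_assoc]
  gcongr
  have hw2 : ∀ i, w i ^ (1 / 2 : ℝ) ≤ 1 := fun i => ENNReal.rpow_le_one (hw i) (by norm_num)
  unfold lq
  split_ifs with h
  · refine iSup_le fun k => iSup_le fun i => ?_
    exact mul_le_mul' ((hw2 i).trans hW1) (le_iSup a (k + i))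
  · have h1 := toReal_ge_one hq h
    set r := q.toReal
    have h2 : ∑' k, (⨆ i, w i ^ (1 / 2 : ℝ) * a (k + i)) ^ r ≤ W * ∑' k, a k ^ r := by
      calc _ ≤ ∑' k, ∑' i, w i ^ (1 / 2 : ℝ) * a (k + i) ^ r := by
            refine ENNReal.tsum_le_tsum fun k => ?_
            have e : (⨆ i, w i ^ (1 / 2 : ℝ) * a (k + i)) ^ r = ⨆ i, (w i ^ (1 / 2 : ℝ) * a (k + i)) ^ r :=
              (ENNReal.orderIsoRpow r (by linarith)).map_iSup _
            rw [e]
            refine iSup_le fun i => ?_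
            refine le_trans ?_ (ENNReal.le_tsum i)
            rw [ENNReal.mul_rpow_of_nonneg _ _ (by linarith)]
            gcongr
            calc _ ≤ (w i ^ (1 / 2 : ℝ)) ^ (1:ℝ) := ENNReal.rpow_le_rpow_of_exponent_ge (hw2 i) h1
              _ = _ := ENNReal.rpow_one _
        _ = ∑' i, ∑' k, w i ^ (1 / 2 : ℝ) * a (k + i) ^ r := ENNReal.tsum_comm
        _ = ∑' i, w i ^ (1 / 2 : ℝ) * ∑' k, a k ^ r := by
            congr 1; funext i
            rw [ENNReal.tsum_mul_left]
            congr 1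
            exact (Equiv.addRight i).tsum_eq (fun k => a k ^ r)
        _ = _ := ENNReal.tsum_mul_right
    calc _ ≤ (W * ∑' k, a k ^ r) ^ (1 / r) := ENNReal.rpow_le_rpow h2 (by positivity)
      _ = W ^ (1 / r) * (∑' k, a k ^ r) ^ (1 / r) := ENNReal.mul_rpow_of_nonneg _ _ (by positivity)
      _ ≤ _ := by
          gcongr
          calc W ^ (1 / r) ≤ W ^ (1:ℝ) := ENNReal.rpow_le_rpow_of_exponent_le hW1 (by rw [div_le_one (by linarith)]; exact h1)
            _ = W := ENNReal.rpow_one _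

lemma tsum_geom_ne_top {δ : ℝ} (hδ : 0 < δ) : ∑' i : ℤ, tw (-δ * |(i:ℝ)|) ≠ ∞ := by
  have hx : tw (-δ) < 1 := by
    rw [← tw_zero]
    exact ENNReal.rpow_lt_rpow_of_exponent_lt (by norm_num) (by norm_num) (by linarith)
  have hs : ∑' m : ℕ, tw (-δ) ^ m ≠ ∞ := by
    rw [ENNReal.tsum_geometric]
    exact ENNReal.inv_ne_top.2 (tsub_pos_of_lt hx).ne'
  have e : ∀ m : ℕ, tw (-δ * m) = tw (-δ) ^ m := fun m => by
    rw [← ENNReal.rpow_natCast, tw_rpow]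
  have hle : ∑' i : ℤ, tw (-δ * |(i:ℝ)|) ≤ (∑' m : ℕ, tw (-δ) ^ m) + ∑' m : ℕ, tw (-δ) ^ m := by
    calc ∑' i : ℤ, tw (-δ * |(i:ℝ)|) ≤ ∑' i : ℤ, ((if 0 ≤ i then tw (-δ) ^ i.natAbs else 0) + (if i ≤ 0 then tw (-δ) ^ i.natAbs else 0)) := by
          refine ENNReal.tsum_le_tsum fun i => ?_
          have : |(i:ℝ)| = (i.natAbs : ℝ) := by rw [Nat.cast_natAbs, Int.cast_abs]
          rw [this, e]
          rcases le_total 0 i with h | h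
          · rw [if_pos h]; exact le_self_add
          · rw [if_pos h]; exact le_add_self
      _ = (∑' i : ℤ, (if 0 ≤ i then tw (-δ) ^ i.natAbs else 0)) + ∑' i : ℤ, (if i ≤ 0 then tw (-δ) ^ i.natAbs else 0) := ENNReal.tsum_add
      _ = _ := by
          congr 1
          · rw [← Function.Injective.tsum_eq (g := fun m : ℕ => (m:ℤ)) Nat.cast_injective]
            · simp
            · intro i hi
              simp only [Function.mem_support, ne_eq, ite_eq_right_iff, Classical.not_imp] at hi
              exact ⟨i.toNat, by simp [hi.1]⟩
          · rw [← Function.Injective.tsum_eq (g := fun m : ℕ => -(m:ℤ)) (fun a b h => by simpa using h)]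
            · simp
            · intro i hi
              simp only [Function.mem_support, ne_eq, ite_eq_right_iff, Classical.not_imp] at hi
              exact ⟨(-i).toNat, by simp [hi.1]⟩
  exact (hle.trans_lt (ENNReal.add_lt_top.2 ⟨hs.lt_top, hs.lt_top⟩)).ne

end LorentzSeq

/-! ### Rearrangements and the dyadic quasinorm -/

noncomputable section LorentzRearr

variable {α : Type*} [MeasurableSpace α]

/-- The decreasing rearrangement of a `[0,∞]`-valued function at `t ∈ [0,∞]`. -/
def rr (μ : Measure α) (Φ : α → ℝ≥0∞) (t : ℝ≥0∞) : ℝ≥0∞ := sInf {l | μ {x | l < Φ x} ≤ t}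

/-- The dyadic form of the Lorentz quasinorm `L^{p,q}`: the `ℓ^q` norm of `2^{k/p} Φ*(2^k)`. -/
def nrm (μ : Measure α) (p : ℝ) (q : ℝ≥0∞) (Φ : α → ℝ≥0∞) : ℝ≥0∞ :=
  lq q (fun k => tw (k / p) * rr μ Φ (tw k))

variable {μ : Measure α}

/-- The infimum defining `rr` is attained, by continuity of the measure from below. All further
properties of `rr` follow from this equivalence. -/
lemma rr_le_iff {Φ : α → ℝ≥0∞} {t l : ℝ≥0∞} : rr μ Φ t ≤ l ↔ μ {x | l < Φ x} ≤ t := by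
  constructor
  · intro h
    rcases eq_or_ne l ∞ with rfl | hl
    · simp
    have hgt : ∀ l', l < l' → μ {x | l' < Φ x} ≤ t := by
      intro l' hl'
      obtain ⟨l'', h1, h2⟩ := sInf_lt_iff.1 (h.trans_lt hl')
      exact (measure_mono fun x (hx : l' < Φ x) => h2.trans hx).trans h1
    obtain ⟨v, hv, hv1, hv2⟩ := exists_seq_strictAnti_tendsto' (lt_top_iff_ne_top.2 hl)
    have e : {x | l < Φ x} = ⋃ i, {x | v i < Φ x} := by
      ext x
      simp only [Set.mem_ofPred_eq, Set.mem_iUnion]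
      constructor
      · intro hx
        exact (hv2.eventually (gt_mem_nhds hx)).exists
      · rintro ⟨i, hi⟩
        exact (hv1 i).1.trans hi
    have hm : Monotone fun i => {x | v i < Φ x} := fun i j hij x hx => (hv.antitone hij).trans_lt hx
    rw [e, hm.measure_iUnion]
    exact iSup_le fun i => hgt _ (hv1 i).1
  · intro h
    exact sInf_le h

lemma lt_rr_iff {Φ : α → ℝ≥0∞} {t l : ℝ≥0∞} : l < rr μ Φ t ↔ t < μ {x | l < Φ x} := by
  rw [← not_le, rr_le_iff, not_le]

lemma rr_anti (Φ : α → ℝ≥0∞) : Antitone (rr μ Φ) := by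
  intro s t h
  rw [rr_le_iff]
  exact (rr_le_iff.1 le_rfl).trans h

lemma rr_mono {Φ Ψ : α → ℝ≥0∞} (h : ∀ x, Φ x ≤ Ψ x) (t : ℝ≥0∞) : rr μ Φ t ≤ rr μ Ψ t := by
  rw [rr_le_iff]
  exact (measure_mono fun x hx => lt_of_lt_of_le hx (h x)).trans (rr_le_iff.1 le_rfl)

/-- Subadditivity of rearrangements with the measures split. -/
lemma rr_add (Φ Ψ : α → ℝ≥0∞) (s t : ℝ≥0∞) :
    rr μ (fun x => Φ x + Ψ x) (s + t) ≤ rr μ Φ s + rr μ Ψ t := by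
  rw [rr_le_iff]
  calc _ ≤ μ ({x | rr μ Φ s < Φ x} ∪ {x | rr μ Ψ t < Ψ x}) := by
        refine measure_mono fun x hx => ?_
        by_contra h
        simp only [Set.mem_union, Set.mem_ofPred_eq, not_or, not_lt] at h hx
        exact absurd (add_le_add h.1 h.2) (not_le.2 hx)
    _ ≤ _ := (measure_union_le _ _).trans (add_le_add (rr_le_iff.1 le_rfl) (rr_le_iff.1 le_rfl))

/-- Submultiplicativity of rearrangements with the measures split. -/
lemma rr_mul (Φ Ψ : α → ℝ≥0∞) (s t : ℝ≥0∞) :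
    rr μ (fun x => Φ x * Ψ x) (s + t) ≤ rr μ Φ s * rr μ Ψ t := by
  rw [rr_le_iff]
  calc _ ≤ μ ({x | rr μ Φ s < Φ x} ∪ {x | rr μ Ψ t < Ψ x}) := by
        refine measure_mono fun x hx => ?_
        by_contra h
        simp only [Set.mem_union, Set.mem_ofPred_eq, not_or, not_lt] at h hx
        exact absurd (mul_le_mul' h.1 h.2) (not_le.2 hx)
    _ ≤ _ := (measure_union_le _ _).trans (add_le_add (rr_le_iff.1 le_rfl) (rr_le_iff.1 le_rfl))

lemma rr_const_mul (c : ℝ≥0∞) (Φ : α → ℝ≥0∞) (t : ℝ≥0∞) :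
    rr μ (fun x => c * Φ x) t ≤ c * rr μ Φ t := by
  rw [rr_le_iff]
  refine (measure_mono fun x hx => ?_).trans (rr_le_iff.1 (le_refl (rr μ Φ t)))
  by_contra h
  simp only [Set.mem_ofPred_eq, not_lt] at h hx
  exact absurd (mul_le_mul_right h c) (not_le.2 hx)

/-- Chebyshev's inequality for the rearrangement. -/
lemma rr_le_of_lintegral {p : ℝ} (hp : 0 < p) {u : α → ℝ≥0∞} (hu : Measurable u) {t : ℝ≥0∞} (ht : t ≠ 0)
    (ht' : t ≠ ∞) : rr μ u t ≤ ((∫⁻ x, u x ^ p ∂μ) / t) ^ (1 / p) := by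
  rw [rr_le_iff]
  set I := ∫⁻ x, u x ^ p ∂μ with hI
  rcases eq_or_ne I ∞ with h | h
  · rw [h, ENNReal.top_div_of_ne_top ht', ENNReal.top_rpow_of_pos (by positivity)]; simp
  have e : {x | (I / t) ^ (1 / p) < u x} = {x | I / t < u x ^ p} := by
    ext x
    simp only [Set.mem_ofPred_eq]
    constructor
    · intro hx
      have := ENNReal.rpow_lt_rpow hx hp
      rwa [← ENNReal.rpow_mul, one_div_mul_cancel hp.ne', ENNReal.rpow_one] at this
    · intro hx
      have := ENNReal.rpow_lt_rpow hx (by positivity : 0 < 1 / p)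
      rwa [← ENNReal.rpow_mul, mul_one_div_cancel hp.ne', ENNReal.rpow_one] at this
  rw [e]
  rcases eq_or_ne I 0 with h0 | h0
  · rw [hI, lintegral_eq_zero_iff (hu.pow_const p)] at h0
    have : μ {x | I / t < u x ^ p} = 0 := by
      refine measure_mono_null (fun x hx => ?_) (ae_iff.1 h0)
      simp only [Set.mem_ofPred_eq] at hx ⊢
      exact (lt_of_le_of_lt (by simp) hx).ne'
    rw [this]; simp
  · have h1 : (I / t) * μ {x | I / t < u x ^ p} ≤ I := by
      refine le_trans ?_ (mul_meas_ge_le_lintegral₀ (hu.pow_const p).aemeasurable (I / t))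
      exact mul_le_mul_right (measure_mono fun x (hx : I / t < u x ^ p) => hx.le) _
    have hd : I / t ≠ 0 := by simp [ENNReal.div_eq_zero_iff, h0, ht']
    have hd' : I / t ≠ ∞ := ENNReal.div_ne_top h ht
    calc _ ≤ I / (I / t) := by
          rw [ENNReal.le_div_iff_mul_le (Or.inl hd) (Or.inl hd'), mul_comm]; exact h1
      _ = t := by rw [ENNReal.div_div_cancel h0 h]

lemma tw_succ (k : ℤ) : tw ((k + 1 : ℤ) : ℝ) = tw k + tw k := by
  push_cast
  rw [tw_add, tw_one, mul_two]

lemma nrm_mono {p : ℝ} {q : ℝ≥0∞} {Φ Ψ : α → ℝ≥0∞} (h : ∀ x, Φ x ≤ Ψ x) : nrm μ p q Φ ≤ nrm μ p q Ψ :=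
  lq_mono fun k => mul_le_mul_right (rr_mono h _) _

lemma nrm_const_mul {p : ℝ} {q : ℝ≥0∞} (hq : 1 ≤ q) (c : ℝ≥0∞) (Φ : α → ℝ≥0∞) :
    nrm μ p q (fun x => c * Φ x) ≤ c * nrm μ p q Φ := by
  unfold nrm
  rw [← lq_const_mul hq]
  refine lq_mono fun k => ?_
  calc _ ≤ tw (k / p) * (c * rr μ Φ (tw k)) := mul_le_mul_right (rr_const_mul _ _ _) _
    _ = _ := by ring

/-- The norm may be computed along the shifted sequence. -/
lemma nrm_eq_shift (p : ℝ) {q : ℝ≥0∞} (hq : 1 ≤ q) (Φ : α → ℝ≥0∞) :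
    nrm μ p q Φ = tw (1 / p) * lq q (fun k => tw (k / p) * rr μ Φ (tw ((k + 1 : ℤ) : ℝ))) := by
  unfold nrm
  rw [← lq_shift q _ 1, ← lq_const_mul hq]
  congr 1
  funext k
  rw [← mul_assoc, ← tw_add]
  congr 2
  push_cast; ring

lemma nrm_add {p : ℝ} (hp : 1 ≤ p) {q : ℝ≥0∞} (hq : 1 ≤ q) (Φ Ψ : α → ℝ≥0∞) :
    nrm μ p q (fun x => Φ x + Ψ x) ≤ 4 * (nrm μ p q Φ + nrm μ p q Ψ) := by
  rw [nrm_eq_shift p hq]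
  have h1 : tw (1 / p) ≤ 2 := by
    rw [← tw_one]; exact tw_mono (by rw [div_le_one (by linarith)]; exact hp)
  calc _ ≤ 2 * lq q (fun k => tw (k / p) * rr μ Φ (tw k) + tw (k / p) * rr μ Ψ (tw k)) := by
        refine mul_le_mul' h1 (lq_mono fun k => ?_)
        rw [tw_succ, ← mul_add]
        exact mul_le_mul_right (rr_add _ _ _ _) _
    _ ≤ 2 * (2 * (nrm μ p q Φ + nrm μ p q Ψ)) := mul_le_mul_right (lq_add_le hq _ _) _
    _ = _ := by rw [← mul_assoc]; norm_num

/-- Hölder's inequality. -/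
lemma nrm_mul {p p₁ p₂ : ℝ} (hp : 1 ≤ p) (h : 1 / p = 1 / p₁ + 1 / p₂) {q q₁ q₂ : ℝ≥0∞} (hq : 1 ≤ q)
    (hq1 : 1 ≤ q₁) (hq2 : 1 ≤ q₂) (hh : 1 / q = 1 / q₁ + 1 / q₂) (Φ Ψ : α → ℝ≥0∞) :
    nrm μ p q (fun x => Φ x * Ψ x) ≤ 2 * (nrm μ p₁ q₁ Φ * nrm μ p₂ q₂ Ψ) := by
  rw [nrm_eq_shift p hq]
  have h1 : tw (1 / p) ≤ 2 := by
    rw [← tw_one]; exact tw_mono (by rw [div_le_one (by linarith)]; exact hp)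
  refine mul_le_mul' h1 ?_
  refine le_trans (lq_mono fun k => ?_) (lq_mul_le hq hq1 hq2 hh _ _)
  rw [tw_succ]
  calc _ ≤ tw (k / p) * (rr μ Φ (tw k) * rr μ Ψ (tw k)) := mul_le_mul_right (rr_mul _ _ _ _) _
    _ = _ := by
      have : (k:ℝ) / p = k / p₁ + k / p₂ := by
        linear_combination (k:ℝ) * h
      rw [this, tw_add]; ring

/-- A discrete Calderón inequality: an estimate of `u*` by a two-sided discrete Hardy operator applied to
`Φ*` gives boundedness of Lorentz quasinorms at all intermediate exponents. -/
lemma calderon {p α0 α1 : ℝ} (h0 : 1 / p < α0) (h1 : α1 < 1 / p) {q : ℝ≥0∞} (hq : 1 ≤ q) {C : ℝ≥0∞} (hC : C ≠ ∞) :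
    ∃ K : ℝ≥0∞, K ≠ ∞ ∧ ∀ u Φ : α → ℝ≥0∞,
      (∀ k : ℤ, rr μ u (tw ((k + 1 : ℤ) : ℝ)) ≤
        C * ∑' j : ℤ, min (tw ((j - k) * α0)) (tw ((j - k) * α1)) * rr μ Φ (tw j)) →
      nrm μ p q u ≤ K * nrm μ p q Φ := by
  set δ := min (α0 - 1 / p) (1 / p - α1) with hδ
  have hδ0 : 0 < δ := lt_min (by linarith) (by linarith)
  have hd1 : δ ≤ α0 - 1 / p := min_le_left _ _
  have hd2 : δ ≤ 1 / p - α1 := min_le_right _ _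
  clear_value δ
  set W := ∑' i : ℤ, tw (-δ * |(i:ℝ)|) ^ (1 / 2 : ℝ) with hW
  have hWt : W ≠ ∞ := by
    have := tsum_geom_ne_top (half_pos hδ0)
    rw [hW]
    convert this using 4 with i
    rw [tw_rpow]; congr 1; ring
  refine ⟨tw (1 / p) * (C * W ^ 2), ENNReal.mul_ne_top (tw_ne_top _) (ENNReal.mul_ne_top hC (ENNReal.pow_ne_top hWt)), ?_⟩
  intro u Φ h
  rw [nrm_eq_shift p hq, mul_assoc, mul_assoc]
  refine mul_le_mul_right ?_ _
  calc _ ≤ lq q (fun k => C * ∑' i : ℤ, tw (-δ * |(i:ℝ)|) * (fun j : ℤ => tw (j / p) * rr μ Φ (tw j)) (k + i)) := by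
        refine lq_mono fun k => ?_
        calc _ ≤ tw (k / p) * _ := mul_le_mul_right (h k) _
          _ = C * (tw (k / p) * ∑' i : ℤ, min (tw (((k + i : ℤ) - k) * α0)) (tw (((k + i : ℤ) - k) * α1)) * rr μ Φ (tw ((k + i : ℤ) : ℝ))) := by
              rw [← (Equiv.addLeft k).tsum_eq (fun j : ℤ => min (tw ((j - k) * α0)) (tw ((j - k) * α1)) * rr μ Φ (tw j))]
              simp only [Equiv.coe_addLeft]
              ring
          _ ≤ _ := by
              refine mul_le_mul_right ?_ _
              rw [← ENNReal.tsum_mul_left]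
              refine ENNReal.tsum_le_tsum fun i => ?_
              show _ ≤ tw (-δ * |(i:ℝ)|) * (tw (((k + i : ℤ) : ℝ) / p) * rr μ Φ (tw ((k + i : ℤ) : ℝ)))
              rw [← mul_assoc, ← mul_assoc, ← tw_add]
              refine mul_le_mul_left ?_ _
              have e : ((k + i : ℤ) : ℝ) - k = i := by push_cast; ring
              rw [e]
              rcases le_total 0 (i:ℝ) with hi | hi
              · refine (mul_le_mul_right (min_le_right _ _) _).trans ?_
                rw [← tw_add, abs_of_nonneg hi]
                apply tw_mono
                push_cast
                have := mul_le_mul_of_nonneg_left hd2 hi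
                linear_combination this
              · refine (mul_le_mul_right (min_le_left _ _) _).trans ?_
                rw [← tw_add, abs_of_nonpos hi]
                apply tw_mono
                push_cast
                have := mul_le_mul_of_nonneg_left hd1 (neg_nonneg.2 hi)
                linear_combination this
    _ = C * _ := lq_const_mul hq _ _
    _ ≤ C * (W ^ 2 * lq q (fun j : ℤ => tw (j / p) * rr μ Φ (tw j))) := by
        refine mul_le_mul_right ?_ _
        refine lq_conv hq (w := fun i : ℤ => tw (-δ * |(i:ℝ)|)) ?_ ?_ _
        · intro i
          rw [← tw_zero]
          apply tw_mono
          have := abs_nonneg (i:ℝ)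
          nlinarith
        · simp [tw_zero]

end LorentzRearr

/-! ### Interpolation -/

noncomputable section LorentzInterp

variable {α : Type*} [MeasurableSpace α] {μ : Measure α}

/-- The `j`-th dyadic layer of `Φ`. -/
def layer (μ : Measure α) (Φ : α → ℝ≥0∞) (j : ℤ) : Set α :=
  {x | rr μ Φ (tw ((j + 1 : ℤ) : ℝ)) < Φ x ∧ Φ x ≤ rr μ Φ (tw j)}

lemma measurableSet_layer {Φ : α → ℝ≥0∞} (hΦ : Measurable Φ) (j : ℤ) : MeasurableSet (layer μ Φ j) :=
  (measurableSet_lt measurable_const hΦ).inter (measurableSet_le hΦ measurable_const)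

lemma measure_layer (Φ : α → ℝ≥0∞) (j : ℤ) : μ (layer μ Φ j) ≤ tw ((j + 1 : ℤ) : ℝ) :=
  (measure_mono fun _ hx => hx.1).trans (rr_le_iff.1 le_rfl)

lemma rr_le_nrm {p : ℝ} {q : ℝ≥0∞} (hq : 1 ≤ q) (Φ : α → ℝ≥0∞) (k : ℤ) :
    rr μ Φ (tw k) ≤ tw (-(k / p)) * nrm μ p q Φ := by
  have := mul_le_mul_right (le_lq hq (fun k : ℤ => tw (k / p) * rr μ Φ (tw k)) k) (tw (-(k / p)))
  rw [← mul_assoc, ← tw_add, neg_add_cancel, tw_zero, one_mul] at this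
  exact this

/-- A finite quasinorm forces the rearrangement to tend to zero at infinity. -/
lemma exists_rr_lt {p : ℝ} (hp : 0 < p) {q : ℝ≥0∞} (hq : 1 ≤ q) {Φ : α → ℝ≥0∞} (hN : nrm μ p q Φ ≠ ∞)
    {l : ℝ≥0∞} (hl : l ≠ 0) : ∃ j : ℤ, rr μ Φ (tw j) < l := by
  have hx : tw (-(1 / p)) < 1 := by
    rw [← tw_zero]
    refine ENNReal.rpow_lt_rpow_of_exponent_lt (by norm_num) (by norm_num) ?_
    have : 0 < 1 / p := by positivity
    linarith
  have h1 := ENNReal.Tendsto.mul_const (b := nrm μ p q Φ) (ENNReal.tendsto_pow_atTop_nhds_zero_of_lt_one hx) (Or.inr hN)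
  rw [zero_mul] at h1
  obtain ⟨m, hm⟩ := (h1.eventually (gt_mem_nhds (pos_iff_ne_zero.2 hl))).exists
  refine ⟨m, (rr_le_nrm (p := p) hq Φ m).trans_lt (lt_of_eq_of_lt ?_ hm)⟩
  rw [← ENNReal.rpow_natCast, tw_rpow]
  congr 2
  push_cast; ring

/-- A function with finite Lorentz quasinorm lives on its dyadic layers. -/
lemma ae_layers {p : ℝ} (hp : 0 < p) {q : ℝ≥0∞} (hq : 1 ≤ q) {Φ : α → ℝ≥0∞} (hN : nrm μ p q Φ ≠ ∞) :
    ∀ᵐ x ∂μ, Φ x ≠ 0 → ∃ j, x ∈ layer μ Φ j := by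
  have hnull : μ {x | ∀ j : ℤ, rr μ Φ (tw j) < Φ x} = 0 := by
    have hx : tw (-1) < 1 := by
      rw [← tw_zero]
      exact ENNReal.rpow_lt_rpow_of_exponent_lt (by norm_num) (by norm_num) (by norm_num)
    have h1 := ENNReal.tendsto_pow_atTop_nhds_zero_of_lt_one hx
    refine le_antisymm (ge_of_tendsto' h1 fun m => ?_) bot_le
    rw [← ENNReal.rpow_natCast, tw_rpow]
    have : μ {x | rr μ Φ (tw (-(m:ℤ) : ℤ)) < Φ x} ≤ tw (-(m:ℤ) : ℤ) := rr_le_iff.1 le_rfl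
    refine (measure_mono fun x hx => ?_).trans (this.trans (le_of_eq ?_))
    · exact hx _
    · congr 1; push_cast; ring
  have : ∀ᵐ x ∂μ, ¬ ∀ j : ℤ, rr μ Φ (tw j) < Φ x := by
    rw [ae_iff]; simpa only [not_not] using hnull
  filter_upwards [this] with x hx hx0
  obtain ⟨j0, hj0⟩ := exists_rr_lt hp hq hN hx0
  push Not at hx
  have hb : ∃ b : ℤ, ∀ z : ℤ, Φ x ≤ rr μ Φ (tw z) → z ≤ b := by
    refine ⟨j0, fun z hz => ?_⟩
    by_contra hlt
    push Not at hlt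
    exact absurd (hz.trans (rr_anti Φ (tw_mono (by exact_mod_cast hlt.le)))) (not_le.2 hj0)
  obtain ⟨j, hj, hj2⟩ := Int.exists_greatest_of_bdd hb hx
  refine ⟨j, ?_, hj⟩
  by_contra hlt
  have := hj2 (j + 1) (not_lt.1 hlt)
  omega

/-- Integrals of functions vanishing with `Φ` are sums over the layers of `Φ`, since the layers cover
almost all of `{Φ ≠ 0}`. -/
lemma lintegral_le_layers {p : ℝ} (hp : 0 < p) {q : ℝ≥0∞} (hq : 1 ≤ q) {Φ : α → ℝ≥0∞} (hΦ : Measurable Φ)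
    (hN : nrm μ p q Φ ≠ ∞) {G : α → ℝ≥0∞} (hG : Measurable G) (h0 : ∀ x, Φ x = 0 → G x = 0) :
    ∫⁻ x, G x ∂μ ≤ ∑' j, ∫⁻ x in layer μ Φ j, G x ∂μ := by
  calc ∫⁻ x, G x ∂μ ≤ ∫⁻ x, ∑' j, (layer μ Φ j).indicator G x ∂μ := by
        refine lintegral_mono_ae ?_
        filter_upwards [ae_layers hp hq hN] with x hx
        by_cases h : Φ x = 0
        · rw [h0 x h]; exact bot_le
        · obtain ⟨j, hj⟩ := hx h
          calc G x = (layer μ Φ j).indicator G x := (Set.indicator_of_mem hj G).symm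
            _ ≤ _ := ENNReal.le_tsum j
    _ = ∑' j, ∫⁻ x, (layer μ Φ j).indicator G x ∂μ :=
        lintegral_tsum fun j => (hG.indicator (measurableSet_layer hΦ j)).aemeasurable
    _ = _ := by
        congr 1; funext j
        exact lintegral_indicator (measurableSet_layer hΦ j) G

/-- The layer decomposition with a bound `c j` on each layer, whose measure is at most `2^{j+1}`. -/
lemma lintegral_le_sum {p : ℝ} (hp : 0 < p) {q : ℝ≥0∞} (hq : 1 ≤ q) {Φ : α → ℝ≥0∞} (hΦ : Measurable Φ)
    (hN : nrm μ p q Φ ≠ ∞) {G : α → ℝ≥0∞} (hG : Measurable G) (h0 : ∀ x, Φ x = 0 → G x = 0)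
    {c : ℤ → ℝ≥0∞} (hc : ∀ j, ∀ x ∈ layer μ Φ j, G x ≤ c j) :
    ∫⁻ x, G x ∂μ ≤ ∑' j : ℤ, c j * tw ((j + 1 : ℤ) : ℝ) := by
  refine (lintegral_le_layers hp hq hΦ hN hG h0).trans (ENNReal.tsum_le_tsum fun j => ?_)
  calc _ ≤ ∫⁻ _ in layer μ Φ j, c j ∂μ := setLIntegral_mono measurable_const (hc j)
    _ = c j * μ (layer μ Φ j) := setLIntegral_const _ _
    _ ≤ _ := mul_le_mul_right (measure_layer _ _) _

/-- One half of the Marcinkiewicz argument: the rearrangement of a piece controlled in `L^r` by the part of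
`Φ` living on the layers in `P`. -/
lemma rr_piece {p r : ℝ} (hp : 0 < p) (hr : 1 ≤ r) {q : ℝ≥0∞} (hq : 1 ≤ q) {Φ : α → ℝ≥0∞} (hΦ : Measurable Φ)
    (hN : nrm μ p q Φ ≠ ∞) {C : ℝ≥0∞} {u : α → ℝ≥0∞} (hu : Measurable u) {S : Set α} (hS : MeasurableSet S)
    (h : ∫⁻ x, u x ^ r ∂μ ≤ C * ∫⁻ x in S, Φ x ^ r ∂μ) (P : ℤ → Prop) [DecidablePred P]
    (hP : ∀ j, ∀ x ∈ layer μ Φ j, x ∈ S → P j) (k : ℤ) :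
    rr μ u (tw k) ≤ (C ^ (1 / r) * 2) * ∑' j : ℤ, (if P j then tw ((j - k) * (1 / r)) * rr μ Φ (tw j) else 0) := by
  have hr0 : 0 < r := by linarith
  have hr1 : 1 / r ≤ 1 := by rw [div_le_one hr0]; exact hr
  have h1 : ∫⁻ x in S, Φ x ^ r ∂μ ≤ ∑' j : ℤ, (if P j then rr μ Φ (tw j) ^ r else 0) * tw ((j + 1 : ℤ) : ℝ) := by
    rw [← lintegral_indicator hS]
    refine lintegral_le_sum hp hq hΦ hN ((hΦ.pow_const r).indicator hS) (fun x hx => ?_) fun j x hx => ?_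
    · by_cases hxS : x ∈ S
      · rw [Set.indicator_of_mem hxS, hx, ENNReal.zero_rpow_of_pos hr0]
      · rw [Set.indicator_of_notMem hxS]
    · by_cases hxS : x ∈ S
      · rw [Set.indicator_of_mem hxS, if_pos (hP j x hx hxS)]
        exact ENNReal.rpow_le_rpow hx.2 hr0.le
      · rw [Set.indicator_of_notMem hxS]; exact bot_le
  have hpt : ∀ j : ℤ, ((tw k)⁻¹ * (C * ((if P j then rr μ Φ (tw j) ^ r else 0) * tw ((j + 1 : ℤ) : ℝ)))) ^ (1 / r) ≤
      (C ^ (1 / r) * 2) * (if P j then tw ((j - k) * (1 / r)) * rr μ Φ (tw j) else 0) := by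
    intro j
    by_cases hj : P j
    · rw [if_pos hj, if_pos hj]
      have e : (tw k)⁻¹ = tw (-k) := (ENNReal.rpow_neg _ _).symm
      have hnn : 0 ≤ 1 / r := by positivity
      rw [e, ENNReal.mul_rpow_of_nonneg _ _ hnn, ENNReal.mul_rpow_of_nonneg _ _ hnn, ENNReal.mul_rpow_of_nonneg _ _ hnn,
        ← ENNReal.rpow_mul, mul_one_div_cancel hr0.ne', ENNReal.rpow_one, tw_rpow, tw_rpow]
      have e2 : tw (-(k:ℝ) * (1 / r)) * tw (((j + 1 : ℤ) : ℝ) * (1 / r)) = tw ((j - k) * (1 / r)) * tw (1 / r) := by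
        rw [← tw_add, ← tw_add]; congr 1; push_cast; ring
      have h3 : tw (1 / r) ≤ 2 := by rw [← tw_one]; exact tw_mono hr1
      calc _ = C ^ (1 / r) * rr μ Φ (tw j) * (tw (-(k:ℝ) * (1 / r)) * tw (((j + 1 : ℤ) : ℝ) * (1 / r))) := by ring
        _ = (C ^ (1 / r) * tw (1 / r)) * (tw ((j - k) * (1 / r)) * rr μ Φ (tw j)) := by rw [e2]; ring
        _ ≤ _ := by gcongr
    · rw [if_neg hj]; simp [hr0]
  calc rr μ u (tw k) ≤ ((∫⁻ x, u x ^ r ∂μ) / tw k) ^ (1 / r) := rr_le_of_lintegral hr0 hu (tw_ne_zero _) (tw_ne_top _)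
    _ ≤ (∑' j : ℤ, (tw k)⁻¹ * (C * ((if P j then rr μ Φ (tw j) ^ r else 0) * tw ((j + 1 : ℤ) : ℝ)))) ^ (1 / r) := by
        refine ENNReal.rpow_le_rpow ?_ (by positivity)
        rw [ENNReal.tsum_mul_left, ENNReal.tsum_mul_left, ENNReal.div_eq_inv_mul]
        exact mul_le_mul_right (h.trans (mul_le_mul_right h1 _)) _
    _ ≤ _ := tsum_rpow_le (by positivity) hr1 _
    _ ≤ _ := by
        rw [← ENNReal.tsum_mul_left]
        exact ENNReal.tsum_le_tsum hpt

/-- Marcinkiewicz interpolation in Lorentz spaces, phrased through a splitting of `u` at each level of `Φ`. -/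
lemma marcinkiewicz {p p0 p1 : ℝ} (h0 : 1 ≤ p0) (h01 : p0 < p) (h11 : p < p1) {q : ℝ≥0∞} (hq : 1 ≤ q)
    {A C : ℝ≥0∞} (hA : A ≠ ∞) (hC : C ≠ ∞) :
    ∃ K : ℝ≥0∞, K ≠ ∞ ∧ ∀ u Φ : α → ℝ≥0∞, Measurable Φ →
      (∀ l : ℝ≥0∞, ∃ u1 u2 : α → ℝ≥0∞, Measurable u1 ∧ Measurable u2 ∧ (∀ x, u x ≤ A * (u1 x + u2 x)) ∧
        ∫⁻ x, u1 x ^ p0 ∂μ ≤ C * ∫⁻ x in {x | l < Φ x}, Φ x ^ p0 ∂μ ∧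
        ∫⁻ x, u2 x ^ p1 ∂μ ≤ C * ∫⁻ x in {x | Φ x ≤ l}, Φ x ^ p1 ∂μ) →
      nrm μ p q u ≤ K * nrm μ p q Φ := by
  have i0 : 1 / p < 1 / p0 := one_div_lt_one_div_of_lt (by linarith) h01
  have i1 : 1 / p1 < 1 / p := one_div_lt_one_div_of_lt (by linarith) h11
  set D := A * (C ^ (1 / p0) * 2 + C ^ (1 / p1) * 2) with hD
  have hDt : D ≠ ∞ := by
    refine ENNReal.mul_ne_top hA (ENNReal.add_ne_top.2 ⟨?_, ?_⟩)
    · exact ENNReal.mul_ne_top (ENNReal.rpow_ne_top_of_nonneg (by positivity) hC) (by norm_num)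
    · exact ENNReal.mul_ne_top (ENNReal.rpow_ne_top_of_nonneg (one_div_nonneg.2 (by linarith)) hC) (by norm_num)
  obtain ⟨K, hK, hcal⟩ := calderon (α := α) (μ := μ) i0 i1 hq hDt
  refine ⟨K + 1, ENNReal.add_ne_top.2 ⟨hK, by norm_num⟩, ?_⟩
  intro u Φ hΦ hsp
  by_cases hN : nrm μ p q Φ = ∞
  · rw [hN, ENNReal.mul_top (by simp)]; exact le_top
  refine (hcal u Φ fun k => ?_).trans (mul_le_mul_left le_self_add _)
  obtain ⟨u1, u2, hu1, hu2, hle, hb1, hb2⟩ := hsp (rr μ Φ (tw k))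
  have hp : 0 < p := by linarith
  have hc1 := rr_piece hp h0 hq hΦ hN hu1 (measurableSet_lt measurable_const hΦ) hb1 (fun j => j < k)
    (fun j x hx hxS => by
      by_contra hj
      push Not at hj
      have : rr μ Φ (tw j) ≤ rr μ Φ (tw k) := rr_anti Φ (tw_mono (by exact_mod_cast hj))
      exact absurd (hx.2.trans this) (not_le.2 hxS)) k
  have hc2 := rr_piece hp (by linarith) hq hΦ hN hu2 (measurableSet_le hΦ measurable_const) hb2 (fun j => k ≤ j)
    (fun j x hx hxS => by
      by_contra hj
      push Not at hj
      have : rr μ Φ (tw k) ≤ rr μ Φ (tw ((j + 1 : ℤ) : ℝ)) := rr_anti Φ (tw_mono (by exact_mod_cast hj))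
      exact absurd (hxS.trans this) (not_le.2 hx.1)) k
  set X := ∑' j : ℤ, min (tw ((j - k) * (1 / p0))) (tw ((j - k) * (1 / p1))) * rr μ Φ (tw j) with hX
  have b1 : rr μ u1 (tw k) ≤ (C ^ (1 / p0) * 2) * X := by
    refine hc1.trans (mul_le_mul_right (ENNReal.tsum_le_tsum fun j => ?_) _)
    split_ifs with hj
    · refine mul_le_mul_left (le_min le_rfl (tw_mono ?_)) _
      have : (j:ℝ) ≤ k := by exact_mod_cast hj.le
      exact mul_le_mul_of_nonpos_left (by linarith) (by linarith)
    · exact bot_le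
  have b2 : rr μ u2 (tw k) ≤ (C ^ (1 / p1) * 2) * X := by
    refine hc2.trans (mul_le_mul_right (ENNReal.tsum_le_tsum fun j => ?_) _)
    split_ifs with hj
    · refine mul_le_mul_left (le_min (tw_mono ?_) le_rfl) _
      have : (k:ℝ) ≤ j := by exact_mod_cast hj
      exact mul_le_mul_of_nonneg_left (by linarith) (by linarith)
    · exact bot_le
  calc rr μ u (tw ((k + 1 : ℤ) : ℝ)) ≤ A * rr μ (fun x => u1 x + u2 x) (tw ((k + 1 : ℤ) : ℝ)) :=
        (rr_mono hle _).trans (rr_const_mul _ _ _)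
    _ ≤ A * (rr μ u1 (tw k) + rr μ u2 (tw k)) := by
        rw [tw_succ]; exact mul_le_mul_right (rr_add _ _ _ _) _
    _ ≤ A * ((C ^ (1 / p0) * 2) * X + (C ^ (1 / p1) * 2) * X) := mul_le_mul_right (add_le_add b1 b2) _
    _ = _ := by rw [hD]; ring

/-- Interpolation by duality: if `u` is tested on sets `E` against functions `Ψ_E` which are controlled in two
spaces `L^a`, then `u` is controlled by `Φ` in Lorentz spaces. -/
lemma dual_interp [SigmaFinite μ] {p a0 a1 : ℝ} (hp : 0 < p) (ha0 : 1 < a0) (ha1 : 1 < a1) (h0 : 1 / p < 1 - 1 / a0) (h1 : 1 - 1 / a1 < 1 / p)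
    {q : ℝ≥0∞} (hq : 1 ≤ q) {C : ℝ≥0∞} (hC : C ≠ ∞) :
    ∃ K : ℝ≥0∞, K ≠ ∞ ∧ ∀ u Φ : α → ℝ≥0∞, Measurable u → Measurable Φ →
      (∀ l : ℝ≥0∞, ∀ E : Set α, MeasurableSet E → μ E ≠ ∞ → (∀ x ∈ E, l < u x) →
        ∃ Ψ : α → ℝ≥0∞, Measurable Ψ ∧ l * μ E ≤ ∫⁻ x, Φ x * Ψ x ∂μ ∧
          ∫⁻ x, Ψ x ^ a0 ∂μ ≤ C * μ E ∧ ∫⁻ x, Ψ x ^ a1 ∂μ ≤ C * μ E) →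
      nrm μ p q u ≤ K * nrm μ p q Φ := by
  set D := C ^ (1 / a0) * 2 + C ^ (1 / a1) * 2 with hD
  have hDt : D ≠ ∞ := by
    refine ENNReal.add_ne_top.2 ⟨?_, ?_⟩
    · exact ENNReal.mul_ne_top (ENNReal.rpow_ne_top_of_nonneg (by positivity) hC) (by norm_num)
    · exact ENNReal.mul_ne_top (ENNReal.rpow_ne_top_of_nonneg (by positivity) hC) (by norm_num)
  obtain ⟨K, hK, hcal⟩ := calderon (α := α) (μ := μ) h0 h1 hq hDt
  refine ⟨K + 1, ENNReal.add_ne_top.2 ⟨hK, by norm_num⟩, ?_⟩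
  intro u Φ hu hΦ hsp
  by_cases hN : nrm μ p q Φ = ∞
  · rw [hN, ENNReal.mul_top (by simp)]; exact le_top
  refine (hcal u Φ fun k => ?_).trans (mul_le_mul_left le_self_add _)
  refine le_of_forall_lt_imp_le_of_dense fun l hl => ?_
  -- A set `E ⊂ {u > l}` with `2^{k+1} < μ E < ∞`.
  obtain ⟨E, hE, hEu, hEk, hEt⟩ := Measure.exists_subset_measure_lt_top (measurableSet_lt measurable_const hu) (lt_rr_iff.1 hl)
  obtain ⟨Ψ, hΨ, hle, hb0, hb1⟩ := hsp l E hE hEt.ne fun x hx => hEu hx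
  set X := ∑' j : ℤ, min (tw ((j - k) * (1 - 1 / a0))) (tw ((j - k) * (1 - 1 / a1))) * rr μ Φ (tw j) with hX
  have hE0 : μ E ≠ 0 := (bot_le.trans_lt hEk).ne'
  -- Hölder's inequality for `Ψ` on each layer of `Φ`.
  have hpiece : ∀ a : ℝ, 1 < a → ∫⁻ x, Ψ x ^ a ∂μ ≤ C * μ E → ∀ j : ℤ,
      ∫⁻ x in layer μ Φ j, Ψ x ∂μ ≤ (C ^ (1 / a) * 2) * tw ((j - k) * (1 - 1 / a)) * μ E := by
    intro a ha hb j
    have ha0 : 0 < a := by linarith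
    have hia : 1 / a < 1 := by rw [div_lt_one ha0]; exact ha
    have hia0 : 0 < 1 / a := by positivity
    have hβ : 0 < 1 - 1 / a := by linarith
    have hconj : (1 / (1 - 1 / a)).HolderConjugate a := by
      rw [Real.holderConjugate_iff]
      refine ⟨by rw [lt_div_iff₀ hβ]; linarith, ?_⟩
      rw [one_div, inv_inv]; rw [one_div]; ring
    have hH := ENNReal.lintegral_mul_le_Lp_mul_Lq (μ.restrict (layer μ Φ j)) hconj (f := fun _ => 1) (g := Ψ)
      aemeasurable_const hΨ.aemeasurable
    simp only [Pi.mul_apply, one_mul, ENNReal.one_rpow, lintegral_const, Measure.restrict_apply_univ, one_div_one_div] at hH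
    refine hH.trans ?_
    have s1 : μ (layer μ Φ j) ^ (1 - 1 / a) ≤ tw (((j + 1 : ℤ) : ℝ) * (1 - 1 / a)) := by
      rw [← tw_rpow]; exact ENNReal.rpow_le_rpow (measure_layer _ _) hβ.le
    have s2 : (∫⁻ x in layer μ Φ j, Ψ x ^ a ∂μ) ^ (1 / a) ≤ C ^ (1 / a) * μ E ^ (1 / a) := by
      rw [← ENNReal.mul_rpow_of_nonneg _ _ hia0.le]
      exact ENNReal.rpow_le_rpow ((setLIntegral_le_lintegral _ _).trans hb) hia0.le
    have s3 : tw (((k + 1 : ℤ) : ℝ) * (1 - 1 / a)) ≤ μ E ^ (1 - 1 / a) := by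
      rw [← tw_rpow]; exact ENNReal.rpow_le_rpow hEk.le hβ.le
    have s4 : μ E = μ E ^ (1 - 1 / a) * μ E ^ (1 / a) := by
      rw [← ENNReal.rpow_add _ _ hE0 hEt.ne]; simp
    have s5 : tw (((j + 1 : ℤ) : ℝ) * (1 - 1 / a)) = tw ((j - k) * (1 - 1 / a)) * tw (((k + 1 : ℤ) : ℝ) * (1 - 1 / a)) := by
      rw [← tw_add]; congr 1; push_cast; ring
    calc _ ≤ tw (((j + 1 : ℤ) : ℝ) * (1 - 1 / a)) * (C ^ (1 / a) * μ E ^ (1 / a)) := mul_le_mul' s1 s2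
      _ = C ^ (1 / a) * tw ((j - k) * (1 - 1 / a)) * (tw (((k + 1 : ℤ) : ℝ) * (1 - 1 / a)) * μ E ^ (1 / a)) := by rw [s5]; ring
      _ ≤ C ^ (1 / a) * tw ((j - k) * (1 - 1 / a)) * (μ E ^ (1 - 1 / a) * μ E ^ (1 / a)) := mul_le_mul_right (mul_le_mul_left s3 _) _
      _ = C ^ (1 / a) * tw ((j - k) * (1 - 1 / a)) * μ E := by rw [← s4]
      _ ≤ _ := mul_le_mul_left (mul_le_mul_left (le_mul_of_one_le_right bot_le (by norm_num)) _) _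
  have hmain : l * μ E ≤ (D * X) * μ E := by
    refine (hle.trans (lintegral_le_layers hp hq hΦ hN (hΦ.mul hΨ) fun x hx => by rw [hx, zero_mul])).trans ?_
    rw [hX, ← ENNReal.tsum_mul_left, ← ENNReal.tsum_mul_right]
    refine ENNReal.tsum_le_tsum fun j => ?_
    calc ∫⁻ x in layer μ Φ j, Φ x * Ψ x ∂μ ≤ ∫⁻ x in layer μ Φ j, rr μ Φ (tw j) * Ψ x ∂μ :=
          setLIntegral_mono (measurable_const.mul hΨ) fun x hx => mul_le_mul_left hx.2 _
      _ = rr μ Φ (tw j) * ∫⁻ x in layer μ Φ j, Ψ x ∂μ := lintegral_const_mul _ hΨ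
      _ ≤ rr μ Φ (tw j) * (D * min (tw ((j - k) * (1 - 1 / a0))) (tw ((j - k) * (1 - 1 / a1))) * μ E) := by
          refine mul_le_mul_right ?_ _
          rcases min_choice (tw ((j - k) * (1 - 1 / a0))) (tw ((j - k) * (1 - 1 / a1))) with h | h
          · rw [h]
            exact (hpiece a0 ha0 hb0 j).trans (mul_le_mul_left (mul_le_mul_left le_self_add _) _)
          · rw [h]
            exact (hpiece a1 ha1 hb1 j).trans (mul_le_mul_left (mul_le_mul_left le_add_self _) _)
      _ = _ := by ring
  exact (ENNReal.mul_le_mul_iff_left hE0 hEt.ne).1 hmain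

end LorentzInterp

/-! ### Comparison with the Lorentz quasinorm -/

noncomputable section LorentzCompare
variable {n : ℕ}

/-- The real-valued rearrangement agrees with `rr` for bounded functions. Boundedness keeps the set in
the defining real infimum nonempty; otherwise that infimum takes the junk value `0`. -/
lemma ofReal_rearr {f : Eu n → ℂ} {B : ℝ} (hB : ∀ x, ‖f x‖ ≤ B) (t : ℝ) :
    ENNReal.ofReal (rearr f t) = rr volume (fun x => ‖f x‖ₑ) (ENNReal.ofReal t) := by
  have hconv : ∀ l : ℝ, 0 < l → volume {x | ENNReal.ofReal l < ‖f x‖ₑ} = distFn f l := by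
    intro l hl
    unfold distFn
    congr 1
    ext x
    simp only [Set.mem_ofPred_eq]
    rw [← ofReal_norm, ENNReal.ofReal_lt_ofReal_iff_of_nonneg hl.le]
  set S := {l : ℝ | 0 < l ∧ distFn f l ≤ ENNReal.ofReal t} with hS
  have hbdd : BddBelow S := ⟨0, fun l hl => hl.1.le⟩
  have hne : S.Nonempty := by
    refine ⟨|B| + 1, by positivity, ?_⟩
    have : {x | |B| + 1 < ‖f x‖} = ∅ := by
      ext x
      simp only [Set.mem_ofPred_eq, Set.mem_empty_iff_false, iff_false, not_lt]
      linarith [hB x, le_abs_self B]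
    unfold distFn
    rw [this]; simp
  apply le_antisymm
  · by_contra hlt
    push Not at hlt
    obtain ⟨l, hl1, hl2⟩ := exists_between hlt
    have hlt : l ≠ ∞ := hl2.ne_top
    have hl0 : 0 < l.toReal := ENNReal.toReal_pos (bot_le.trans_lt hl1).ne' hlt
    have : l.toReal ∈ S := by
      refine ⟨hl0, ?_⟩
      rw [← hconv _ hl0, ENNReal.ofReal_toReal hlt]
      exact rr_le_iff.1 hl1.le
    have h3 : rearr f t ≤ l.toReal := csInf_le hbdd this
    have h4 := ENNReal.ofReal_le_ofReal h3
    rw [ENNReal.ofReal_toReal hlt] at h4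
    exact absurd h4 (not_le.2 hl2)
  · by_contra hlt
    push Not at hlt
    obtain ⟨l, hl1, hl2⟩ := exists_between hlt
    have hlt : l ≠ ∞ := hl2.ne_top
    have : rearr f t < l.toReal := by
      by_contra h
      push Not at h
      have := ENNReal.ofReal_le_ofReal h
      rw [ENNReal.ofReal_toReal hlt] at this
      exact absurd this (not_le.2 hl1)
    obtain ⟨l', hl', h2⟩ := exists_lt_of_csInf_lt hne this
    have h5 : rr volume (fun x => ‖f x‖ₑ) (ENNReal.ofReal t) ≤ ENNReal.ofReal l' := by
      rw [rr_le_iff, hconv _ hl'.1]; exact hl'.2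
    have h6 := ENNReal.ofReal_le_ofReal h2.le
    rw [ENNReal.ofReal_toReal hlt] at h6
    exact absurd (h5.trans h6) (not_le.2 hl2)

/-- The weighted rearrangement `t^{1/p} Φ*(t)`. -/
def wrr (p : ℝ) (Φ : Eu n → ℝ≥0∞) (t : ℝ) : ℝ≥0∞ :=
  ENNReal.ofReal (t ^ (1 / p)) * rr volume Φ (ENNReal.ofReal t)

lemma measurable_wrr (p : ℝ) (Φ : Eu n → ℝ≥0∞) : Measurable (wrr p Φ) := by
  unfold wrr
  refine Measurable.mul (by fun_prop) ?_
  have : Antitone fun t : ℝ => rr volume Φ (ENNReal.ofReal t) := fun s t h =>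
    rr_anti Φ (ENNReal.ofReal_le_ofReal h)
  exact this.measurable

lemma ofReal_zpow_two (k : ℤ) : ENNReal.ofReal ((2:ℝ) ^ k) = tw k := by
  rw [tw_eq, Real.rpow_intCast]

lemma ofReal_zpow_rpow (k : ℤ) (p : ℝ) : ENNReal.ofReal (((2:ℝ) ^ k) ^ (1 / p)) = tw (k / p) := by
  rw [tw_eq, ← Real.rpow_intCast, ← Real.rpow_mul (by norm_num)]
  congr 2; ring

lemma wrr_le {p : ℝ} (hp : 1 ≤ p) (Φ : Eu n → ℝ≥0∞) (k : ℤ) {θ : ℝ} (h1 : 1 ≤ θ) (h2 : θ ≤ 2) :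
    wrr p Φ (2 ^ k * θ) ≤ 2 * (tw (k / p) * rr volume Φ (tw k)) := by
  have hk : (0:ℝ) < 2 ^ k := by positivity
  have hp0 : 0 < p := by linarith
  unfold wrr
  rw [← mul_assoc]
  refine mul_le_mul' ?_ (rr_anti Φ ?_)
  · rw [Real.mul_rpow hk.le (by linarith), ENNReal.ofReal_mul (by positivity), ofReal_zpow_rpow, mul_comm]
    refine mul_le_mul_left ?_ _
    rw [show (2:ℝ≥0∞) = ENNReal.ofReal 2 by norm_num]
    apply ENNReal.ofReal_le_ofReal
    calc θ ^ (1 / p) ≤ θ ^ (1:ℝ) := Real.rpow_le_rpow_of_exponent_le h1 (by rw [div_le_one hp0]; exact hp)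
      _ ≤ 2 := by rw [Real.rpow_one]; exact h2
  · rw [← ofReal_zpow_two]
    apply ENNReal.ofReal_le_ofReal
    nlinarith

lemma le_wrr {p : ℝ} (hp : 1 ≤ p) (Φ : Eu n → ℝ≥0∞) (k : ℤ) {θ : ℝ} (h1 : 1 ≤ θ) (h2 : θ ≤ 2) :
    tw (((k + 1 : ℤ) : ℝ) / p) * rr volume Φ (tw ((k + 1 : ℤ) : ℝ)) ≤ 2 * wrr p Φ (2 ^ k * θ) := by
  have hk : (0:ℝ) < 2 ^ k := by positivity
  have hp0 : 0 < p := by linarith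
  unfold wrr
  rw [← mul_assoc]
  refine mul_le_mul' ?_ (rr_anti Φ ?_)
  · have : ((k + 1 : ℤ) : ℝ) / p = 1 / p + k / p := by push_cast; ring
    rw [this, tw_add]
    refine mul_le_mul' ?_ ?_
    · rw [← tw_one]; exact tw_mono (by rw [div_le_one hp0]; exact hp)
    · rw [← ofReal_zpow_rpow]
      apply ENNReal.ofReal_le_ofReal
      apply Real.rpow_le_rpow hk.le (by nlinarith) (by positivity)
  · rw [tw_succ, ← ofReal_zpow_two, ← ENNReal.ofReal_add hk.le hk.le]
    apply ENNReal.ofReal_le_ofReal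
    nlinarith

lemma exists_dyadic {t : ℝ} (ht : 0 < t) : ∃ k : ℤ, ∃ θ : ℝ, 1 ≤ θ ∧ θ ≤ 2 ∧ t = 2 ^ k * θ := by
  obtain ⟨k, hk1, hk2⟩ := exists_mem_Ico_zpow ht (by norm_num : (1:ℝ) < 2)
  have hk : (0:ℝ) < 2 ^ k := by positivity
  refine ⟨k, t / 2 ^ k, by rw [le_div_iff₀ hk]; linarith, ?_, by field_simp⟩
  rw [div_le_iff₀ hk]
  rw [zpow_add₀ (by norm_num)] at hk2
  linarith

lemma lorentz_eq_wrr {p : ℝ} {q : ℝ≥0∞} {f : Eu n → ℂ} {B : ℝ} (hB : ∀ x, ‖f x‖ ≤ B) :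
    lorentz p q f = if q = ∞ then ⨆ t ∈ Set.Ioi (0:ℝ), wrr p (fun x => ‖f x‖ₑ) t
      else (∫⁻ t in Set.Ioi (0:ℝ), wrr p (fun x => ‖f x‖ₑ) t ^ q.toReal * ENNReal.ofReal t⁻¹) ^ (1 / q.toReal) := by
  have e : ∀ t ∈ Set.Ioi (0:ℝ), ENNReal.ofReal (t ^ (1 / p) * rearr f t) = wrr p (fun x => ‖f x‖ₑ) t := by
    intro t ht
    have ht' : (0:ℝ) < t := ht
    rw [ENNReal.ofReal_mul (by positivity), ofReal_rearr hB]; rfl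
  unfold lorentz
  split_ifs with h
  · exact iSup_congr fun t => iSup_congr fun ht => e t ht
  · congr 1
    refine setLIntegral_congr_fun measurableSet_Ioi fun t ht => ?_
    have ht' : (0:ℝ) < t := ht
    show ENNReal.ofReal (t ^ (1 / p) * rearr f t) ^ q.toReal / ENNReal.ofReal t = _
    rw [e t ht, ENNReal.ofReal_inv_of_pos ht', div_eq_mul_inv]

/-- The Lorentz quasinorm is dominated by the dyadic one, since rearrangements decrease. -/
lemma lorentz_le_nrm {p : ℝ} (hp : 1 ≤ p) {q : ℝ≥0∞} (hq : 1 ≤ q) {f : Eu n → ℂ} {B : ℝ} (hB : ∀ x, ‖f x‖ ≤ B) :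
    lorentz p q f ≤ 2 * nrm volume p q (fun x => ‖f x‖ₑ) := by
  rw [lorentz_eq_wrr hB]
  unfold nrm
  rw [← lq_const_mul hq]
  unfold lq
  split_ifs with h
  · refine iSup₂_le fun t ht => ?_
    obtain ⟨k, θ, h1, h2, rfl⟩ := exists_dyadic ht
    exact (wrr_le hp _ k h1 h2).trans (le_iSup (fun k : ℤ => 2 * (tw (k / p) * rr volume (fun x => ‖f x‖ₑ) (tw k))) k)
  · refine ENNReal.rpow_le_rpow ?_ (by positivity)
    rw [lintegral_Ioi_dyadic ((measurable_wrr p _).pow_const _)]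
    set S := ∑' k : ℤ, (2 * (tw (k / p) * rr volume (fun x => ‖f x‖ₑ) (tw k))) ^ q.toReal with hS
    calc _ ≤ ∫⁻ θ in Set.Ico (1:ℝ) 2, S := by
          refine setLIntegral_mono measurable_const fun θ hθ => ?_
          have : ENNReal.ofReal θ⁻¹ ≤ 1 := by
            rw [ENNReal.ofReal_le_one]; exact inv_le_one_of_one_le₀ hθ.1
          calc _ ≤ S * 1 := by
                refine mul_le_mul' (ENNReal.tsum_le_tsum fun k => ?_) this
                exact ENNReal.rpow_le_rpow (wrr_le hp _ k hθ.1 hθ.2.le) ENNReal.toReal_nonneg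
            _ = S := mul_one _
      _ = S := by rw [setLIntegral_const, Real.volume_Ico]; norm_num

/-- The dyadic quasinorm is dominated by the Lorentz quasinorm. -/
lemma nrm_le_lorentz {p : ℝ} (hp : 1 ≤ p) {q : ℝ≥0∞} (hq : 1 ≤ q) {f : Eu n → ℂ} {B : ℝ} (hB : ∀ x, ‖f x‖ ≤ B) :
    nrm volume p q (fun x => ‖f x‖ₑ) ≤ 4 * lorentz p q f := by
  rw [lorentz_eq_wrr hB]
  unfold nrm
  rw [← lq_shift q _ 1]
  set a : ℤ → ℝ≥0∞ := fun k => tw (((k + 1 : ℤ) : ℝ) / p) * rr volume (fun x => ‖f x‖ₑ) (tw ((k + 1 : ℤ) : ℝ)) with ha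
  unfold lq
  split_ifs with h
  · refine iSup_le fun k => ?_
    have := le_wrr hp (fun x => ‖f x‖ₑ) k le_rfl one_le_two
    refine this.trans (mul_le_mul' (by norm_num) ?_)
    rw [mul_one]
    exact le_iSup₂ (f := fun (t : ℝ) (_ : t ∈ Set.Ioi (0:ℝ)) => wrr p (fun x => ‖f x‖ₑ) t) ((2:ℝ) ^ k) (by
      show (0:ℝ) < 2 ^ k
      positivity)
  · have hr := toReal_ge_one hq h
    set r := q.toReal with hrdef
    set I := ∫⁻ t in Set.Ioi (0:ℝ), wrr p (fun x => ‖f x‖ₑ) t ^ r * ENNReal.ofReal t⁻¹ with hI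
    have h1 : ∑' k, a k ^ r ≤ 2 ^ r * (2 * I) := by
      rw [hI, lintegral_Ioi_dyadic ((measurable_wrr p _).pow_const _)]
      set S := ∑' k, a k ^ r with hS
      have h2 : S = 2 * ∫⁻ θ in Set.Ico (1:ℝ) 2, S * ENNReal.ofReal (2:ℝ)⁻¹ := by
        rw [setLIntegral_const, Real.volume_Ico, ENNReal.ofReal_inv_of_pos (by norm_num)]
        norm_num
        rw [mul_comm, mul_assoc, ENNReal.inv_mul_cancel (by norm_num) (by norm_num), mul_one]
      calc S = 2 * ∫⁻ θ in Set.Ico (1:ℝ) 2, S * ENNReal.ofReal (2:ℝ)⁻¹ := h2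
        _ ≤ 2 * ∫⁻ θ in Set.Ico (1:ℝ) 2, 2 ^ r * ((∑' k : ℤ, wrr p (fun x => ‖f x‖ₑ) (2 ^ k * θ) ^ r) * ENNReal.ofReal θ⁻¹) := by
            refine mul_le_mul_right (setLIntegral_mono' measurableSet_Ico fun θ hθ => ?_) _
            rw [← mul_assoc]
            refine mul_le_mul' ?_ (ENNReal.ofReal_le_ofReal ?_)
            · rw [hS, ← ENNReal.tsum_mul_left]
              refine ENNReal.tsum_le_tsum fun k => ?_
              rw [← ENNReal.mul_rpow_of_nonneg _ _ (by linarith)]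
              exact ENNReal.rpow_le_rpow (le_wrr hp _ k hθ.1 hθ.2.le) (by linarith)
            · exact inv_anti₀ (by linarith [hθ.1]) hθ.2.le
        _ = _ := by
            rw [lintegral_const_mul' _ _ (ENNReal.rpow_ne_top_of_nonneg (by linarith) (by norm_num))]
            ring
    calc _ ≤ (2 ^ r * (2 * I)) ^ (1 / r) := ENNReal.rpow_le_rpow h1 (by positivity)
      _ = 2 * (2 ^ (1 / r) * I ^ (1 / r)) := by
          rw [ENNReal.mul_rpow_of_nonneg _ _ (by positivity), ENNReal.mul_rpow_of_nonneg _ _ (by positivity),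
            ← ENNReal.rpow_mul, mul_one_div_cancel (by linarith), ENNReal.rpow_one]
      _ ≤ 2 * (2 * I ^ (1 / r)) := by
          refine mul_le_mul_right (mul_le_mul_left ?_ _) _
          calc (2:ℝ≥0∞) ^ (1 / r) ≤ 2 ^ (1:ℝ) := ENNReal.rpow_le_rpow_of_exponent_le (by norm_num) (by rw [div_le_one (by linarith)]; exact hr)
            _ = 2 := ENNReal.rpow_one _
      _ = _ := by rw [← mul_assoc]; norm_num

end LorentzCompare

/-! ### Square and maximal functions on Lorentz spaces -/

noncomputable section LorentzOps
variable {n : ℕ}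

/-- The square function `(∫₀^∞ t^{|L|} |Q_{L,t} f|² dt/t)^{1/2}`. -/
def Sf (L : List (Fin n)) (f : Eu n → ℂ) (x : Eu n) : ℝ≥0∞ := Sq L f x ^ (1 / 2 : ℝ)

lemma measurable_Sf (L : List (Fin n)) {f : Eu n → ℂ} (hf : Measurable f) : Measurable (Sf L f) :=
  (measurable_Sq L hf).pow_const _

lemma Sf_rpow (L : List (Fin n)) (f : Eu n → ℂ) (x : Eu n) (p : ℝ) : Sf L f x ^ p = Sq L f x ^ (p / 2) := by
  unfold Sf
  rw [← ENNReal.rpow_mul]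
  congr 1; ring

lemma Sf_add_le (L : List (Fin n)) {f g : Eu n → ℂ} (hf : Bdd f) (hg : Bdd g) (x : Eu n) :
    Sf L (fun y => f y + g y) x ≤ 2 * (Sf L f x + Sf L g x) := by
  unfold Sf
  calc _ ≤ (2 * Sq L f x + 2 * Sq L g x) ^ (1 / 2 : ℝ) := ENNReal.rpow_le_rpow (Sq_add_le L hf hg x) (by norm_num)
    _ ≤ (2 * Sq L f x) ^ (1 / 2 : ℝ) + (2 * Sq L g x) ^ (1 / 2 : ℝ) :=
        ENNReal.rpow_add_le_add_rpow _ _ (by norm_num) (by norm_num)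
    _ = 2 ^ (1 / 2 : ℝ) * (Sq L f x ^ (1 / 2 : ℝ) + Sq L g x ^ (1 / 2 : ℝ)) := by
        rw [ENNReal.mul_rpow_of_nonneg _ _ (by norm_num), ENNReal.mul_rpow_of_nonneg _ _ (by norm_num)]; ring
    _ ≤ _ := by
        refine mul_le_mul_left ?_ _
        calc (2:ℝ≥0∞) ^ (1 / 2 : ℝ) ≤ 2 ^ (1:ℝ) := ENNReal.rpow_le_rpow_of_exponent_le (by norm_num) (by norm_num)
          _ = 2 := ENNReal.rpow_one _

lemma exists_even_gt (p : ℝ) : ∃ m : ℕ, 2 ≤ m ∧ p < 2 * m := by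
  obtain ⟨m, hm⟩ := exists_nat_gt p
  refine ⟨m + 2, by omega, ?_⟩
  push_cast
  have : (0:ℝ) ≤ m := by positivity
  linarith

/-- Square functions on Lorentz spaces: `marcinkiewicz` between an exponent below `min 2 p` and an even
exponent `2m > p`, with `f` split at height `l`. -/
lemma Sf_lorentz (hn : 1 ≤ n) {L : List (Fin n)} (hL : L ≠ []) {p : ℝ} (hp : 1 < p) {q : ℝ≥0∞} (hq : 1 ≤ q) :
    ∃ K : ℝ≥0∞, K ≠ ∞ ∧ ∀ f : Eu n → ℂ, Bdd f →
      nrm volume p q (Sf L f) ≤ K * nrm volume p q (fun x => ‖f x‖ₑ) := by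
  obtain ⟨m, hm2, hm⟩ := exists_even_gt p
  set p0 := (1 + min 2 p) / 2 with hp0
  have h01 : 1 < p0 := by
    have : 1 < min 2 p := lt_min (by norm_num) hp
    rw [hp0]; linarith
  have h02 : p0 < 2 := by
    have : min 2 p ≤ 2 := min_le_left _ _
    rw [hp0]; linarith
  have h03 : p0 < p := by
    have : min 2 p ≤ p := min_le_right _ _
    rw [hp0]; linarith
  obtain ⟨C0, hC0, hb0⟩ := sq_strong hn hL (Or.inl ⟨h01, h02⟩ : GoodExp p0)
  obtain ⟨C1, hC1, hb1⟩ := sq_strong hn hL (Or.inr ⟨m, hm2, rfl⟩ : GoodExp (2 * m))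
  obtain ⟨K, hK, h⟩ := marcinkiewicz (α := Eu n) (μ := volume) h01.le h03 hm hq (A := 2) (C := ENNReal.ofReal C0 + ENNReal.ofReal C1)
    (by norm_num) (by simp)
  refine ⟨K, hK, fun f hf => h _ _ hf.meas.enorm fun l => ?_⟩
  obtain ⟨B, hB⟩ := hf.bdd
  have hm1 : MeasurableSet {x | l < ‖f x‖ₑ} := measurableSet_lt measurable_const hf.meas.enorm
  have hm3 : MeasurableSet {x | ‖f x‖ₑ ≤ l} := measurableSet_le hf.meas.enorm measurable_const
  have hind : ∀ S : Set (Eu n), MeasurableSet S → Bdd (S.indicator f) := fun S hS =>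
    ⟨hf.meas.indicator hS, B, fun x => (norm_indicator_le_norm_self f x).trans (hB x)⟩
  have hpow : ∀ S : Set (Eu n), MeasurableSet S → ∀ r : ℝ, 0 < r →
      ∫⁻ x, ‖S.indicator f x‖ₑ ^ r = ∫⁻ x in S, ‖f x‖ₑ ^ r := by
    intro S hS r hr
    rw [← lintegral_indicator hS]
    congr 1; funext x
    by_cases hx : x ∈ S
    · rw [Set.indicator_of_mem hx, Set.indicator_of_mem hx]
    · rw [Set.indicator_of_notMem hx, Set.indicator_of_notMem hx]; simp [hr]
  refine ⟨Sf L ({x | l < ‖f x‖ₑ}.indicator f), Sf L ({x | ‖f x‖ₑ ≤ l}.indicator f), measurable_Sf L (hind _ hm1).meas,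
    measurable_Sf L (hind _ hm3).meas, fun x => ?_, ?_, ?_⟩
  · refine le_trans (le_of_eq ?_) (Sf_add_le L (hind _ hm1) (hind _ hm3) x)
    congr 1; funext y
    by_cases hy : l < ‖f y‖ₑ
    · rw [Set.indicator_of_mem (by exact hy), Set.indicator_of_notMem (by simpa using hy), add_zero]
    · rw [Set.indicator_of_notMem (by exact hy), Set.indicator_of_mem (by simpa using hy), zero_add]
  · simp_rw [Sf_rpow]
    refine (hb0 _ (hind _ hm1)).trans ?_
    rw [hpow _ hm1 _ (by linarith)]
    exact mul_le_mul_left le_self_add _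
  · simp_rw [Sf_rpow]
    refine (hb1 _ (hind _ hm3)).trans ?_
    rw [hpow _ hm3 _ (by linarith)]
    exact mul_le_mul_left le_add_self _

/-- The maximal function on Lorentz spaces: `marcinkiewicz` between the exponents `(1+p)/2` and `p+1`. -/
lemma Mx_lorentz (hn : 1 ≤ n) {p : ℝ} (hp : 1 < p) {q : ℝ≥0∞} (hq : 1 ≤ q) :
    ∃ K : ℝ≥0∞, K ≠ ∞ ∧ ∀ f : Eu n → ℂ, Bdd f →
      nrm volume p q (Mx fun x => ‖f x‖ₑ) ≤ K * nrm volume p q (fun x => ‖f x‖ₑ) := by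
  obtain ⟨C0, hC0, hb0⟩ := strong_Mx hn (show 1 < (1 + p) / 2 by linarith)
  obtain ⟨C1, hC1, hb1⟩ := strong_Mx hn (show 1 < p + 1 by linarith)
  obtain ⟨K, hK, h⟩ := marcinkiewicz (α := Eu n) (μ := volume) (p := p) (p0 := (1 + p) / 2) (p1 := p + 1) (by linarith) (by linarith) (by linarith) hq
    (A := 1) (C := ENNReal.ofReal C0 + ENNReal.ofReal C1) (by norm_num) (by simp)
  refine ⟨K, hK, fun f hf => h _ _ hf.meas.enorm fun l => ?_⟩
  obtain ⟨B, hB⟩ := hf.bdd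
  set F : Eu n → ℝ≥0∞ := fun x => ‖f x‖ₑ with hF
  have hFm : Measurable F := hf.meas.enorm
  have hFB : ∀ x, F x ≤ ENNReal.ofReal B := fun x => by
    rw [hF]; show ‖f x‖ₑ ≤ _
    rw [← ofReal_norm]; exact ENNReal.ofReal_le_ofReal (hB x)
  have hm1 : MeasurableSet {x | l < F x} := measurableSet_lt measurable_const hFm
  have hm3 : MeasurableSet {x | F x ≤ l} := measurableSet_le hFm measurable_const
  have hind : ∀ S : Set (Eu n), ∃ B : ℝ, ∀ x, S.indicator F x ≤ ENNReal.ofReal B := fun S =>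
    ⟨B, fun x => (Set.indicator_le_self S F x).trans (hFB x)⟩
  have hpow : ∀ S : Set (Eu n), MeasurableSet S → ∀ r : ℝ, 0 < r →
      ∫⁻ x, S.indicator F x ^ r = ∫⁻ x in S, F x ^ r := by
    intro S hS r hr
    rw [← lintegral_indicator hS]
    congr 1; funext x
    by_cases hx : x ∈ S
    · rw [Set.indicator_of_mem hx, Set.indicator_of_mem hx]
    · rw [Set.indicator_of_notMem hx, Set.indicator_of_notMem hx]; simp [hr]
  refine ⟨Mx ({x | l < F x}.indicator F), Mx ({x | F x ≤ l}.indicator F), measurable_Mx _, measurable_Mx _, fun x => ?_, ?_, ?_⟩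
  · rw [one_mul]
    refine le_trans (Mx_mono (fun y => ?_) x) (Mx_add (hFm.indicator hm1) x)
    by_cases hy : l < F y
    · rw [Set.indicator_of_mem (by exact hy)]; exact le_self_add
    · rw [Set.indicator_of_mem (s := {x | F x ≤ l}) (by simpa using hy)]; exact le_add_self
  · refine (hb0 _ (hFm.indicator hm1) (hind _)).trans ?_
    rw [hpow _ hm1 _ (by linarith)]
    exact mul_le_mul_left le_self_add _
  · refine (hb1 _ (hFm.indicator hm3) (hind _)).trans ?_
    rw [hpow _ hm3 _ (by linarith)]
    exact mul_le_mul_left le_add_self _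

end LorentzOps

/-! ### Subordination and Hardy's inequality -/

noncomputable section KernelTools

/-- If `∫ k(x,·) dx = w`, the pairing with `w` is at most the integral in `x` of the pairings with
`k(x,·)`, by Fubini's theorem. -/
lemma kernel_fubini {X Y : Type*} [MeasurableSpace X] [MeasurableSpace Y] {μ : Measure X} {ν : Measure Y}
    [SFinite μ] [SFinite ν] {k : X → Y → ℝ} {H : Y → ℂ} {w : Y → ℝ}
    (hk : Measurable fun z : X × Y => k z.1 z.2) (hk0 : ∀ᵐ x ∂μ, ∀ y, 0 ≤ k x y) (hH : AEStronglyMeasurable H ν)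
    (hw0 : ∀ y, 0 ≤ w y)
    (hw : ∀ᵐ y ∂ν, ∫⁻ x, ENNReal.ofReal (k x y) ∂μ = ENNReal.ofReal (w y))
    (hi : Integrable (fun y => (w y : ℂ) * H y) ν) :
    ‖∫ y, (w y : ℂ) * H y ∂ν‖ₑ ≤ ∫⁻ x, ‖∫ y, (k x y : ℂ) * H y ∂ν‖ₑ ∂μ := by
  have hki : ∀ᵐ y ∂ν, Integrable (fun x => k x y) μ ∧ ∫ x, k x y ∂μ = w y := by
    filter_upwards [hw] with y hy
    have h0 : 0 ≤ᵐ[μ] fun x => k x y := by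
      filter_upwards [hk0] with x hx using hx y
    have hm : AEStronglyMeasurable (fun x => k x y) μ :=
      (hk.comp (measurable_id.prodMk measurable_const)).aestronglyMeasurable
    refine ⟨(lintegral_ofReal_ne_top_iff_integrable hm h0).1 (hy ▸ ENNReal.ofReal_ne_top), ?_⟩
    rw [integral_eq_lintegral_of_nonneg_ae h0 hm, hy, ENNReal.toReal_ofReal (hw0 y)]
  have hI : Integrable (Function.uncurry fun y x => (k x y : ℂ) * H y) (ν.prod μ) := by
    have hm : AEStronglyMeasurable (Function.uncurry fun y x => (k x y : ℂ) * H y) (ν.prod μ) := by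
      refine AEStronglyMeasurable.mul ?_ (hH.comp_fst)
      exact (Complex.measurable_ofReal.comp (hk.comp measurable_swap)).aestronglyMeasurable
    rw [integrable_prod_iff hm]
    refine ⟨?_, ?_⟩
    · filter_upwards [hki] with y hy
      exact (hy.1.ofReal (𝕜 := ℂ)).mul_const (H y)
    · refine hi.norm.congr ?_
      filter_upwards [hki] with y hy
      simp only [Function.uncurry, norm_mul, Complex.norm_real]
      rw [integral_mul_const, Real.norm_of_nonneg (hw0 y), ← hy.2]
      congr 1
      refine integral_congr_ae ?_
      filter_upwards [hk0] with x hx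
      rw [Real.norm_of_nonneg (hx y)]
  have e : ∫ y, (w y : ℂ) * H y ∂ν = ∫ x, ∫ y, (k x y : ℂ) * H y ∂ν ∂μ := by
    rw [← integral_integral_swap hI]
    refine integral_congr_ae ?_
    filter_upwards [hki] with y hy
    rw [integral_mul_const, integral_complex_ofReal, hy.2]
  rw [e]
  exact enorm_integral_le_lintegral_enorm _

/-- The Gamma integral `∫₀^∞ r^{σ-1} e^{-br} dr = Γ(σ) b^{-σ}`. -/
lemma lintegral_gamma {σ b : ℝ} (hσ : 0 < σ) (hb : 0 < b) :
    ∫⁻ r in Set.Ioi (0:ℝ), ENNReal.ofReal (r ^ (σ - 1) * exp (-(b * r))) =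
      ENNReal.ofReal (Gamma σ * b ^ (-σ)) := by
  have h := Real.integral_rpow_mul_exp_neg_mul_Ioi hσ hb
  have hpos : 0 < (1 / b) ^ σ * Gamma σ := mul_pos (by positivity) (Gamma_pos_of_pos hσ)
  have hi : Integrable (fun t : ℝ => t ^ (σ - 1) * exp (-(b * t))) (volume.restrict (Set.Ioi 0)) := by
    by_contra hn
    rw [integral_undef hn] at h
    exact hpos.ne h
  rw [← ofReal_integral_eq_lintegral_ofReal hi, h]
  · congr 1
    rw [one_div, inv_rpow hb.le, rpow_neg hb.le]; ring
  · filter_upwards [ae_restrict_mem measurableSet_Ioi] with t ht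
    have : 0 < t := ht
    simp only [Pi.zero_apply]; positivity

/-- Finiteness of the Beta-type integral that is the constant in Hardy's inequality. -/
lemma hardy_const {σ κ : ℝ} (hσ : 0 < σ) (hκ : σ < κ) :
    ∫⁻ ρ in Set.Ioi (0:ℝ), ENNReal.ofReal (ρ ^ (σ - 1) * (1 + ρ) ^ (-κ)) ≠ ∞ := by
  have hU : Set.Ioi (0:ℝ) = Set.Ioc 0 1 ∪ Set.Ioi 1 := (Set.Ioc_union_Ioi_eq_Ioi zero_le_one).symm
  rw [hU]
  refine ne_top_of_le_ne_top ?_ (lintegral_union_le _ _ _)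
  refine ENNReal.add_ne_top.2 ⟨?_, ?_⟩
  · have h1 : IntegrableOn (fun x : ℝ => x ^ (σ - 1)) (Set.Ioc 0 1) :=
      (intervalIntegrable_iff_integrableOn_Ioc_of_le zero_le_one).1
        (intervalIntegral.intervalIntegrable_rpow' (by linarith))
    refine ne_top_of_le_ne_top h1.lintegral_lt_top.ne (setLIntegral_mono_ae' measurableSet_Ioc ?_)
    refine Filter.Eventually.of_forall fun x hx => ENNReal.ofReal_le_ofReal ?_
    have h0 : (0:ℝ) < x := hx.1
    have : (1 + x) ^ (-κ) ≤ 1 := Real.rpow_le_one_of_one_le_of_nonpos (by linarith) (by linarith)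
    have h2 : 0 ≤ x ^ (σ - 1) := by positivity
    nlinarith
  · have h1 : IntegrableOn (fun x : ℝ => x ^ (σ - 1 - κ)) (Set.Ioi 1) :=
      integrableOn_Ioi_rpow_of_lt (by linarith) zero_lt_one
    refine ne_top_of_le_ne_top h1.lintegral_lt_top.ne (setLIntegral_mono_ae' measurableSet_Ioi ?_)
    refine Filter.Eventually.of_forall fun x hx => ENNReal.ofReal_le_ofReal ?_
    have h0 : (0:ℝ) < x := lt_trans zero_lt_one hx
    rw [sub_eq_add_neg (σ - 1) κ, rpow_add h0]
    have : (1 + x) ^ (-κ) ≤ x ^ (-κ) := Real.rpow_le_rpow_of_nonpos h0 (by linarith) (by linarith)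
    gcongr

/-- Hardy's inequality for the tail operator `a ↦ ∫₀^∞ r^{σ-1} a(t+r) dr`, in weighted
`L²(dt/t)`. -/
lemma hardy {σ κ : ℝ} (hσ : 0 < σ) (hκ : σ < κ) : ∃ K : ℝ≥0∞, K ≠ ∞ ∧ ∀ a : ℝ → ℝ≥0∞, Measurable a →
    ∫⁻ t in Set.Ioi (0:ℝ), (ENNReal.ofReal (t ^ (κ - σ)) *
        ∫⁻ r in Set.Ioi (0:ℝ), ENNReal.ofReal (r ^ (σ - 1)) * a (t + r)) ^ 2 * ENNReal.ofReal t⁻¹ ≤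
      K * ∫⁻ t in Set.Ioi (0:ℝ), ENNReal.ofReal (t ^ (2 * κ)) * a t ^ 2 * ENNReal.ofReal t⁻¹ := by
  set w : ℝ → ℝ≥0∞ := fun ρ => ENNReal.ofReal (ρ ^ (σ - 1) * (1 + ρ) ^ (-κ)) with hw
  have hwm : Measurable w := by unfold w; fun_prop
  set I := ∫⁻ ρ in Set.Ioi (0:ℝ), w ρ with hI
  have hIt : I ≠ ∞ := hardy_const hσ hκ
  refine ⟨I * I, ENNReal.mul_ne_top hIt hIt, fun a ha => ?_⟩
  set b : ℝ → ℝ≥0∞ := fun t => ENNReal.ofReal (t ^ κ) * a t with hb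
  have hbm : Measurable b := by unfold b; fun_prop
  have h1 : ∀ t ∈ Set.Ioi (0:ℝ), (ENNReal.ofReal (t ^ (κ - σ)) *
        ∫⁻ r in Set.Ioi (0:ℝ), ENNReal.ofReal (r ^ (σ - 1)) * a (t + r)) =
        ∫⁻ ρ in Set.Ioi (0:ℝ), w ρ * b ((1 + ρ) * t) := by
    intro t ht
    have ht : 0 < t := ht
    -- substitution `r = tρ`, expressed through the scale invariance of `dr/r`
    have e1 : ∫⁻ r in Set.Ioi (0:ℝ), ENNReal.ofReal (r ^ (σ - 1)) * a (t + r) =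
        ∫⁻ r in Set.Ioi (0:ℝ), (ENNReal.ofReal (r ^ σ) * a (t + r)) * ENNReal.ofReal r⁻¹ := by
      refine setLIntegral_congr_fun measurableSet_Ioi fun r hr => ?_
      have hr : 0 < r := hr
      rw [rpow_sub_one hr.ne', div_eq_mul_inv, ENNReal.ofReal_mul (by positivity)]
      ring
    rw [e1, ← lintegral_Ioi_scale ht, ← lintegral_const_mul _ (by fun_prop)]
    refine setLIntegral_congr_fun measurableSet_Ioi fun r hr => ?_
    have hr : 0 < r := hr
    simp only [w, b]
    rw [show t + t * r = (1 + r) * t by ring]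
    calc _ = ENNReal.ofReal (t ^ (κ - σ) * (t * r) ^ σ * r⁻¹) * a ((1 + r) * t) := by
            rw [ENNReal.ofReal_mul (by positivity), ENNReal.ofReal_mul (by positivity)]; ring
      _ = ENNReal.ofReal (r ^ (σ - 1) * (1 + r) ^ (-κ) * ((1 + r) * t) ^ κ) * a ((1 + r) * t) := by
            congr 2
            rw [mul_rpow ht.le hr.le, mul_rpow (by linarith) ht.le, rpow_sub ht, rpow_sub_one hr.ne',
              rpow_neg (by linarith)]
            have := rpow_pos_of_pos ht σ
            have := rpow_pos_of_pos (show 0 < 1 + r by linarith) κ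
            field_simp
      _ = _ := by rw [ENNReal.ofReal_mul (by positivity)]; ring
  calc _ = ∫⁻ t in Set.Ioi (0:ℝ), (∫⁻ ρ in Set.Ioi (0:ℝ), w ρ * b ((1 + ρ) * t)) ^ 2 * ENNReal.ofReal t⁻¹ :=
        setLIntegral_congr_fun measurableSet_Ioi fun t ht => by rw [h1 t ht]
    _ ≤ ∫⁻ t in Set.Ioi (0:ℝ), (I * ∫⁻ ρ in Set.Ioi (0:ℝ), w ρ * b ((1 + ρ) * t) ^ 2) * ENNReal.ofReal t⁻¹ := by
        refine lintegral_mono fun t => mul_le_mul_left (cs_weight hwm (by fun_prop)) _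
    _ = I * ∫⁻ t in Set.Ioi (0:ℝ), ∫⁻ ρ in Set.Ioi (0:ℝ), w ρ * (b ((1 + ρ) * t) ^ 2 * ENNReal.ofReal t⁻¹) := by
        rw [← lintegral_const_mul' _ _ hIt]
        refine lintegral_congr fun t => ?_
        rw [mul_assoc]
        congr 1
        rw [← lintegral_mul_const _ (by fun_prop)]
        exact lintegral_congr fun ρ => mul_assoc _ _ _
    _ = I * ∫⁻ ρ in Set.Ioi (0:ℝ), ∫⁻ t in Set.Ioi (0:ℝ), w ρ * (b ((1 + ρ) * t) ^ 2 * ENNReal.ofReal t⁻¹) := by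
        rw [lintegral_lintegral_swap]
        exact (by fun_prop : Measurable _).aemeasurable
    _ = I * ∫⁻ ρ in Set.Ioi (0:ℝ), w ρ * ∫⁻ t in Set.Ioi (0:ℝ), b t ^ 2 * ENNReal.ofReal t⁻¹ := by
        congr 1
        refine setLIntegral_congr_fun measurableSet_Ioi fun ρ hρ => ?_
        have hρ : 0 < ρ := hρ
        rw [lintegral_const_mul _ (by fun_prop), lintegral_Ioi_scale (show 0 < 1 + ρ by linarith) (fun u => b u ^ 2)]
    _ = I * I * ∫⁻ t in Set.Ioi (0:ℝ), b t ^ 2 * ENNReal.ofReal t⁻¹ := by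
        rw [lintegral_mul_const _ hwm, mul_assoc]
    _ = _ := by
        congr 1
        refine setLIntegral_congr_fun measurableSet_Ioi fun t ht => ?_
        have ht : 0 < t := ht
        simp only [b]
        rw [mul_pow, ← ENNReal.ofReal_pow (by positivity), ← rpow_natCast (t ^ κ) 2, ← rpow_mul ht.le]
        norm_num [mul_comm]

end KernelTools

/-! ### Fourier-side identities -/

noncomputable section FourierSide

variable {n : ℕ}

lemma norm_fourierInv_le (a : Eu n → ℂ) (x : Eu n) : ‖𝓕⁻ a x‖ ≤ ∫ ξ, ‖a ξ‖ := by
  rw [Real.fourierInv_eq]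
  refine (norm_integral_le_integral_norm _).trans (le_of_eq ?_)
  congr 1; funext v
  rw [Circle.norm_smul]

lemma Bdd.fourierInv {a : Eu n → ℂ} (ha : Integrable a) : Bdd (𝓕⁻ a) :=
  ⟨(continuous_fourierInv ha).measurable, _, norm_fourierInv_le a⟩

lemma Qop_fourierInv (L : List (Fin n)) {t : ℝ} (ht : 0 < t) {a : Eu n → ℂ} (ha : Integrable a) (x : Eu n) :
    Qop L t (𝓕⁻ a) x = 𝓕⁻ (fun ξ => gsym L t ξ * a ξ) x := by
  unfold Qop
  rw [conv_fourierInv (integrable_kap L ht) ha, fourier_kap L ht]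

lemma gsym_bdd (L : List (Fin n)) {t : ℝ} (ht : 0 < t) : ∃ B, ∀ ξ, ‖gsym L t ξ‖ ≤ B := by
  obtain ⟨C, hC, h⟩ := pow_mul_exp_le L.length ht
  refine ⟨C, fun ξ => (norm_gsym_le L t ξ).trans ((h _ (norm_nonneg _)).trans ?_)⟩
  have : exp (-(t / 2) * ‖ξ‖ ^ 2) ≤ 1 := by
    rw [exp_le_one_iff]; nlinarith [sq_nonneg ‖ξ‖]
  nlinarith

lemma integrable_gsym_mul (L : List (Fin n)) {t : ℝ} (ht : 0 < t) {a : Eu n → ℂ} (ha : Integrable a) :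
    Integrable (fun ξ => gsym L t ξ * a ξ) := by
  obtain ⟨B, hB⟩ := gsym_bdd L ht
  exact ha.bdd_mul (continuous_gsym L t).aestronglyMeasurable (Filter.Eventually.of_forall hB)

lemma continuous_char (x : Eu n) : Continuous fun ξ : Eu n => (𝐞 (inner ℝ ξ x) : ℂ) := by
  have := Real.continuous_fourierChar
  fun_prop

lemma ae_ne_zero (hn : 1 ≤ n) : ∀ᵐ ξ : Eu n, ξ ≠ 0 := by
  have : Nonempty (Fin n) := ⟨⟨0, hn⟩⟩
  rw [ae_iff]
  simp

/-- The operator `Q_{L,t}` applied to `f` is controlled by the `Q_{L,t+ρ}` applied to the fractional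
derivative of `f`, because `|ξ|^{-s}` is a superposition of the Gaussians `e^{-ρ|ξ|²}`. -/
lemma plane_wave (hn : 1 ≤ n) {s : ℝ} (hs : 0 < s) (L : List (Fin n)) {t : ℝ} (ht : 0 < t) {a : Eu n → ℂ}
    (ha : Integrable a) (has : Integrable (fun ξ => ((‖ξ‖ ^ s : ℝ) : ℂ) * a ξ)) (x : Eu n) :
    ENNReal.ofReal (Gamma (s / 2)) * ‖Qop L t (𝓕⁻ a) x‖ₑ ≤
      ∫⁻ r in Set.Ioi (0:ℝ), ENNReal.ofReal (r ^ (s / 2 - 1)) *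
        ‖Qop L (t + r) (𝓕⁻ (fun ξ => ((‖ξ‖ ^ s : ℝ) : ℂ) * a ξ)) x‖ₑ := by
  have hG : 0 < Gamma (s / 2) := Gamma_pos_of_pos (by linarith)
  set H : Eu n → ℂ := fun ξ => (𝐞 (inner ℝ ξ x) : ℂ) * (gsym L t ξ * (((‖ξ‖ ^ s : ℝ) : ℂ) * a ξ)) with hH
  set w : Eu n → ℝ := fun ξ => Gamma (s / 2) * (‖ξ‖ ^ 2) ^ (-(s / 2)) with hw
  have hwH : ∀ ξ ≠ 0, (w ξ : ℂ) * H ξ = Gamma (s / 2) * ((𝐞 (inner ℝ ξ x) : ℂ) * (gsym L t ξ * a ξ)) := by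
    intro ξ hξ
    have h1 : (‖ξ‖ ^ 2) ^ (-(s / 2)) * ‖ξ‖ ^ s = 1 := by
      have h0 : 0 < ‖ξ‖ := norm_pos_iff.2 hξ
      rw [← rpow_natCast ‖ξ‖ 2, ← rpow_mul h0.le, ← rpow_add h0]
      rw [show ((2:ℕ):ℝ) * (-(s / 2)) + s = 0 by push_cast; ring, rpow_zero]
    have h2 : (((‖ξ‖ ^ 2) ^ (-(s / 2)) : ℝ) : ℂ) * ((‖ξ‖ ^ s : ℝ) : ℂ) = 1 := by
      rw [← Complex.ofReal_mul, h1, Complex.ofReal_one]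
    simp only [w, H, Complex.ofReal_mul]
    linear_combination (Gamma (s / 2) * ((𝐞 (inner ℝ ξ x) : ℂ) * (gsym L t ξ * a ξ))) * h2
  have hae : (fun ξ => (w ξ : ℂ) * H ξ) =ᵐ[volume]
      fun ξ => (Gamma (s / 2) : ℂ) * ((𝐞 (inner ℝ ξ x) : ℂ) * (gsym L t ξ * a ξ)) := by
    filter_upwards [ae_ne_zero hn] with ξ hξ using hwH ξ hξ
  have hchar : ∀ {m : Eu n → ℂ}, Integrable m → Integrable fun ξ => (𝐞 (inner ℝ ξ x) : ℂ) * m ξ := fun hm =>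
    hm.bdd_mul (c := 1) (continuous_char x).aestronglyMeasurable
      (Filter.Eventually.of_forall fun ξ => (Circle.norm_coe _).le)
  have key := kernel_fubini (μ := volume.restrict (Set.Ioi (0:ℝ))) (ν := (volume : Measure (Eu n)))
    (k := fun r ξ => r ^ (s / 2 - 1) * exp (-(‖ξ‖ ^ 2 * r))) (H := H) (w := w) (by fun_prop) ?_
    (hchar (integrable_gsym_mul L ht has)).1 (fun ξ => by simp only [w]; positivity) ?_ ?_
  · rw [integral_congr_ae hae, integral_const_mul, enorm_mul] at key
    have e0 : ‖(Gamma (s / 2) : ℂ)‖ₑ = ENNReal.ofReal (Gamma (s / 2)) := by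
      rw [← ofReal_norm, Complex.norm_real, Real.norm_of_nonneg hG.le]
    have e1 : Qop L t (𝓕⁻ a) x = ∫ ξ, (𝐞 (inner ℝ ξ x) : ℂ) * (gsym L t ξ * a ξ) := by
      rw [Qop_fourierInv L ht ha, Real.fourierInv_eq]; rfl
    rw [e0, ← e1] at key
    refine key.trans (le_of_eq (setLIntegral_congr_fun measurableSet_Ioi fun r hr => ?_))
    have hr : 0 < r := hr
    have e2 : ∀ ξ, ((r ^ (s / 2 - 1) * exp (-(‖ξ‖ ^ 2 * r)) : ℝ) : ℂ) * H ξ =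
        ((r ^ (s / 2 - 1) : ℝ) : ℂ) * ((𝐞 (inner ℝ ξ x) : ℂ) * (gsym L (t + r) ξ * (((‖ξ‖ ^ s : ℝ) : ℂ) * a ξ))) := by
      intro ξ
      have : ((exp (-(‖ξ‖ ^ 2 * r)) : ℝ) : ℂ) * gsym L t ξ = gsym L (t + r) ξ := by
        simp only [gsym]
        rw [← Complex.ofReal_mul]
        congr 1
        rw [show -(t + r) * ‖ξ‖ ^ 2 = -t * ‖ξ‖ ^ 2 + -(‖ξ‖ ^ 2 * r) by ring, exp_add]; ring
      rw [← this, Complex.ofReal_mul]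
      simp only [H]; ring
    simp_rw [e2]
    rw [integral_const_mul, enorm_mul, Qop_fourierInv L (by positivity) has, Real.fourierInv_eq,
      ← ofReal_norm ((r ^ (s / 2 - 1) : ℝ) : ℂ), Complex.norm_real, Real.norm_of_nonneg (by positivity)]
    rfl
  · filter_upwards [ae_restrict_mem measurableSet_Ioi] with r hr ξ
    have : 0 < r := hr
    positivity
  · filter_upwards [ae_ne_zero hn] with ξ hξ
    have : 0 < ‖ξ‖ := norm_pos_iff.2 hξ
    exact lintegral_gamma (by linarith) (by positivity)
  · exact ((hchar (integrable_gsym_mul L ht ha)).const_mul _).congr hae.symm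

lemma fourierInv_swap {a v : Eu n → ℂ} (ha : Integrable a) (hv : Integrable v) :
    ∫ x, 𝓕⁻ a x * v x = ∫ ξ, a ξ * 𝓕⁻ v ξ := by
  simp only [Real.fourierInv_eq, Circle.smul_def, smul_eq_mul]
  simp_rw [← integral_mul_const, ← integral_const_mul]
  rw [integral_integral_swap]
  · refine integral_congr_ae (Filter.Eventually.of_forall fun ξ => ?_)
    refine integral_congr_ae (Filter.Eventually.of_forall fun x => ?_)
    simp only
    rw [real_inner_comm]; ring
  · refine (hv.mul_prod ha).mono ?_ (Filter.Eventually.of_forall fun p => ?_)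
    · have hc : Continuous (fun p : Eu n × Eu n => (𝐞 (inner ℝ p.2 p.1) : ℂ)) := by
        have := Real.continuous_fourierChar
        fun_prop
      refine (hc.aestronglyMeasurable.mul (hv.mul_prod ha).1).congr (Filter.Eventually.of_forall fun p => ?_)
      simp only [Pi.mul_apply, Function.uncurry]; ring
    · simp only [Function.uncurry, norm_mul]
      rw [show ‖(𝐞 (inner ℝ p.2 p.1) : ℂ)‖ = 1 from Circle.norm_coe _]
      rw [one_mul, mul_comm]

/-- The trilinear Fourier identity: a double frequency integral at total frequency `ξ + η` is the
integral of a triple product in space. -/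
lemma trilinear {a b h : Eu n → ℂ} (ha : Integrable a) (hb : Integrable b) (hh : Integrable h) :
    ∫ z : Eu n × Eu n, a z.1 * b z.2 * 𝓕⁻ h (z.1 + z.2) = ∫ x, 𝓕⁻ a x * 𝓕⁻ b x * h x := by
  have hab : Integrable (fun z : Eu n × Eu n => a z.1 * b z.2) (volume.prod volume) := ha.mul_prod hb
  have e1 : ∀ z : Eu n × Eu n, a z.1 * b z.2 * 𝓕⁻ h (z.1 + z.2) =
      ∫ x, a z.1 * b z.2 * ((𝐞 (inner ℝ x (z.1 + z.2)) : ℂ) * h x) := by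
    intro z
    rw [integral_const_mul, Real.fourierInv_eq]; rfl
  simp_rw [e1]
  rw [integral_integral_swap]
  · refine integral_congr_ae (Filter.Eventually.of_forall fun x => ?_)
    simp only
    have e2 : ∀ z : Eu n × Eu n, a z.1 * b z.2 * ((𝐞 (inner ℝ x (z.1 + z.2)) : ℂ) * h x) =
        ((𝐞 (inner ℝ z.1 x) : ℂ) * a z.1) * ((𝐞 (inner ℝ z.2 x) : ℂ) * b z.2) * h x := by
      intro z
      rw [inner_add_right, AddChar.map_add_eq_mul, Circle.coe_mul, real_inner_comm x, real_inner_comm x]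
      ring
    simp_rw [e2]
    rw [integral_mul_const]
    have := integral_prod_mul (μ := (volume : Measure (Eu n))) (ν := (volume : Measure (Eu n)))
      (fun y : Eu n => (𝐞 (inner ℝ y x) : ℂ) * a y)
      (fun y : Eu n => (𝐞 (inner ℝ y x) : ℂ) * b y)
    rw [Measure.volume_eq_prod, this, Real.fourierInv_eq, Real.fourierInv_eq]
    rfl
  · refine (hab.mul_prod hh).mono ?_ (Filter.Eventually.of_forall fun p => ?_)
    · have hc : Continuous (fun p : (Eu n × Eu n) × Eu n => (𝐞 (inner ℝ p.2 (p.1.1 + p.1.2)) : ℂ)) := by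
        have := Real.continuous_fourierChar
        fun_prop
      refine (hc.aestronglyMeasurable.mul (hab.mul_prod hh).1).congr (Filter.Eventually.of_forall fun p => ?_)
      simp only [Pi.mul_apply, Function.uncurry]; ring
    · simp only [Function.uncurry, norm_mul]
      rw [show ‖(𝐞 (inner ℝ p.2 (p.1.1 + p.1.2)) : ℂ)‖ = 1 from Circle.norm_coe _, one_mul]

lemma mon_neg_even {M : List (Fin n)} (hM : Even M.length) (ξ : Eu n) : mon M (-ξ) = mon M ξ := by
  have : ∀ M : List (Fin n), mon M (-ξ) = (-1) ^ M.length * mon M ξ := by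
    intro M
    induction M with
    | nil => simp [mon_nil]
    | cons j M ih => rw [mon_cons, ih, mon_cons, List.length_cons, pow_succ]; simp; ring
  rw [this, hM.neg_one_pow, one_mul]

lemma integrable_Qop (M : List (Fin n)) {t : ℝ} (ht : 0 < t) {h : Eu n → ℂ} (hh : Integrable h) :
    Integrable (Qop M t h) := by
  have h1 := (hh.convolution_integrand (ContinuousLinearMap.mul ℝ ℂ) (integrable_kap M ht)).integral_prod_left
  refine h1.congr (Filter.Eventually.of_forall fun x => ?_)
  simp only [ContinuousLinearMap.mul_apply', Qop]
  congr 1; funext y; ring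

/-- `Q_{M,t}` acts on the inverse Fourier transform as its multiplier; the length of `M` is even, so
that `ξ^M` is an even function and the change of sign between `𝓕` and `𝓕⁻` is harmless. -/
lemma fourierInv_Qop {M : List (Fin n)} (hM : Even M.length) {t : ℝ} (ht : 0 < t) {h : Eu n → ℂ}
    (hh : Integrable h) (ζ : Eu n) : 𝓕⁻ (Qop M t h) ζ = gsym M t ζ * 𝓕⁻ h ζ := by
  have e := Real.fourier_mul_convolution_eq hh (integrable_kap M ht) (-ζ)
  rw [Real.fourierInv_eq_fourier_neg, Real.fourierInv_eq_fourier_neg]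
  have e2 : Qop M t h = convolution h (kap M t) (ContinuousLinearMap.mul ℂ ℂ) volume := by
    funext x
    simp only [Qop, convolution, ContinuousLinearMap.mul_apply']
    congr 1; funext y; ring
  rw [e2, e, fourier_kap M ht, mul_comm]
  congr 1
  simp only [gsym, mon_neg_even hM, norm_neg]

end FourierSide

/-! ### The bilinear multiplier of `(-Δ)^{s/2}(fg)` -/

noncomputable section ProductMultiplier

variable {n : ℕ}

/-- The regularity of `f` used below: `f`, its Fourier transform and the symbol `|ξ|^s 𝓕 f` of its
fractional derivative are integrable, and Fourier inversion holds pointwise. -/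
structure Nice (s : ℝ) (f : Eu n → ℂ) : Prop where
  int : Integrable f
  int_hat : Integrable (𝓕 f)
  int_s : Integrable (fun ξ => ((‖ξ‖ ^ s : ℝ) : ℂ) * 𝓕 f ξ)
  inv : 𝓕⁻ (𝓕 f) = f

/-- The Fourier transform of a product is the convolution of the transforms. -/
lemma fourier_mul {s : ℝ} {f g : Eu n → ℂ} (hf : Nice s f) (hg : Integrable g) (ζ : Eu n) :
    𝓕 (fun x => f x * g x) ζ = ∫ ξ, 𝓕 f ξ * 𝓕 g (ζ - ξ) := by
  set v : Eu n → ℂ := fun x => (𝐞 (inner ℝ x (-ζ)) : ℂ) * g x with hv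
  have hvi : Integrable v := by
    have hc : Continuous fun x : Eu n => (𝐞 (inner ℝ x (-ζ)) : ℂ) := continuous_char _
    exact hg.bdd_mul (c := 1) hc.aestronglyMeasurable
      (Filter.Eventually.of_forall fun ξ => (Circle.norm_coe _).le)
  have e := fourierInv_swap hf.int_hat hvi
  rw [hf.inv] at e
  have e1 : 𝓕 (fun x => f x * g x) ζ = ∫ x, f x * v x := by
    rw [Real.fourier_eq]
    congr 1; funext x
    simp only [v, Circle.smul_def, smul_eq_mul, inner_neg_right]
    ring
  rw [e1, e]
  congr 1; funext ξ
  congr 1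
  rw [Real.fourierInv_eq, Real.fourier_eq]
  congr 1; funext x
  simp only [v, Circle.smul_def, smul_eq_mul]
  rw [← mul_assoc, ← Circle.coe_mul, ← AddChar.map_add_eq_mul, inner_neg_right, inner_sub_right]
  congr 3; ring

lemma add_rpow_le' {s : ℝ} (hs : 0 ≤ s) (ξ η : Eu n) : ‖ξ + η‖ ^ s ≤ 2 ^ s * (‖ξ‖ ^ s + ‖η‖ ^ s) := by
  have h1 : ‖ξ + η‖ ≤ 2 * max ‖ξ‖ ‖η‖ := by
    have := norm_add_le ξ η
    have := le_max_left ‖ξ‖ ‖η‖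
    have := le_max_right ‖ξ‖ ‖η‖
    linarith
  calc ‖ξ + η‖ ^ s ≤ (2 * max ‖ξ‖ ‖η‖) ^ s := by gcongr
    _ = 2 ^ s * max ‖ξ‖ ‖η‖ ^ s := mul_rpow (by norm_num) (by positivity)
    _ ≤ _ := by
        gcongr
        rcases max_cases ‖ξ‖ ‖η‖ with ⟨h, _⟩ | ⟨h, _⟩ <;> rw [h]
        · have : 0 ≤ ‖η‖ ^ s := by positivity
          linarith
        · have : 0 ≤ ‖ξ‖ ^ s := by positivity
          linarith

lemma norm_weight (s : ℝ) (ξ : Eu n) (c : ℂ) : ‖((‖ξ‖ ^ s : ℝ) : ℂ) * c‖ = ‖ξ‖ ^ s * ‖c‖ := by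
  rw [norm_mul, Complex.norm_real, Real.norm_of_nonneg (by positivity)]

lemma continuous_weight {s : ℝ} (hs : 0 ≤ s) : Continuous fun ξ : Eu n => ((‖ξ‖ ^ s : ℝ) : ℂ) :=
  Complex.continuous_ofReal.comp (continuous_norm.rpow_const fun _ => Or.inr hs)

lemma integrable_weight_prod {s : ℝ} (hs : 0 ≤ s) {f g : Eu n → ℂ} (hf : Nice s f) (hg : Nice s g) :
    Integrable (fun z : Eu n × Eu n => ((‖z.1 + z.2‖ ^ s : ℝ) : ℂ) * (𝓕 f z.1 * 𝓕 g z.2)) (volume.prod volume) := by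
  have i1 := (hf.int_s.mul_prod hg.int_hat (μ := volume) (ν := volume)).norm
  have i2 := (hf.int_hat.mul_prod hg.int_s (μ := volume) (ν := volume)).norm
  refine ((i1.add i2).const_mul (2 ^ s)).mono' ?_ (Filter.Eventually.of_forall fun z => ?_)
  · refine AEStronglyMeasurable.mul ?_ (hf.int_hat.mul_prod hg.int_hat).1
    exact ((continuous_weight hs).comp (continuous_fst.add continuous_snd)).aestronglyMeasurable
  · simp only [norm_mul, Pi.add_apply, Complex.norm_real]
    repeat rw [Real.norm_of_nonneg (by positivity)]
    calc _ ≤ (2 ^ s * (‖z.1‖ ^ s + ‖z.2‖ ^ s)) * (‖𝓕 f z.1‖ * ‖𝓕 g z.2‖) := by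
          gcongr; exact add_rpow_le' hs _ _
      _ = _ := by ring

lemma integrable_weight_conv {s : ℝ} (hs : 0 ≤ s) {f g : Eu n → ℂ} (hf : Nice s f) (hg : Nice s g) :
    Integrable (fun z : Eu n × Eu n => ((‖z.1‖ ^ s : ℝ) : ℂ) * (𝓕 f z.2 * 𝓕 g (z.1 - z.2)))
      (volume.prod volume) := by
  have i1 := (hf.int_s.convolution_integrand (ContinuousLinearMap.mul ℝ ℂ) hg.int_hat (μ := volume) (ν := volume)).norm
  have i2 := (hf.int_hat.convolution_integrand (ContinuousLinearMap.mul ℝ ℂ) hg.int_s (μ := volume) (ν := volume)).norm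
  have i3 := (hf.int_hat.convolution_integrand (ContinuousLinearMap.mul ℝ ℂ) hg.int_hat (μ := volume) (ν := volume))
  refine ((i1.add i2).const_mul (2 ^ s)).mono' ?_ (Filter.Eventually.of_forall fun z => ?_)
  · refine AEStronglyMeasurable.mul ?_ (by simpa only [ContinuousLinearMap.mul_apply'] using i3.1)
    exact ((continuous_weight hs).comp continuous_fst).aestronglyMeasurable
  · simp only [norm_mul, Pi.add_apply, ContinuousLinearMap.mul_apply', Complex.norm_real]
    repeat rw [Real.norm_of_nonneg (by positivity)]
    have := add_rpow_le' hs z.2 (z.1 - z.2)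
    rw [add_sub_cancel] at this
    calc _ ≤ (2 ^ s * (‖z.2‖ ^ s + ‖z.1 - z.2‖ ^ s)) * (‖𝓕 f z.2‖ * ‖𝓕 g (z.1 - z.2)‖) := by
          gcongr
      _ = _ := by ring

lemma integrable_fracLap_symbol {s : ℝ} (hs : 0 ≤ s) {f g : Eu n → ℂ} (hf : Nice s f) (hg : Nice s g) :
    Integrable (fun ζ => ((‖ζ‖ ^ s : ℝ) : ℂ) * 𝓕 (fun x => f x * g x) ζ) := by
  refine (integrable_weight_conv hs hf hg).integral_prod_left.congr (Filter.Eventually.of_forall fun ζ => ?_)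
  simp only
  rw [integral_const_mul, fourier_mul hf hg.int]

/-- The pairing of `(-Δ)^{s/2}(fg)` with `h`, written as a double integral over the frequencies of
`f` and `g`. -/
lemma fracLap_mul_pair {s : ℝ} (hs : 0 ≤ s) {f g h : Eu n → ℂ} (hf : Nice s f) (hg : Nice s g)
    (hh : Integrable h) :
    ∫ x, 𝓕⁻ (fun ζ => ((‖ζ‖ ^ s : ℝ) : ℂ) * 𝓕 (fun x => f x * g x) ζ) x * h x =
      ∫ z : Eu n × Eu n, ((‖z.1 + z.2‖ ^ s : ℝ) : ℂ) * (𝓕 f z.1 * 𝓕 g z.2 * 𝓕⁻ h (z.1 + z.2)) := by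
  have hhb : ∀ z, ‖𝓕⁻ h z‖ ≤ ∫ ξ, ‖h ξ‖ := norm_fourierInv_le h
  have hhc := continuous_fourierInv hh
  rw [fourierInv_swap (integrable_fracLap_symbol hs hf hg) hh]
  have e1 : ∀ ζ, ((‖ζ‖ ^ s : ℝ) : ℂ) * 𝓕 (fun x => f x * g x) ζ * 𝓕⁻ h ζ =
      ∫ ξ, ((‖ζ‖ ^ s : ℝ) : ℂ) * (𝓕 f ξ * 𝓕 g (ζ - ξ)) * 𝓕⁻ h ζ := by
    intro ζ
    rw [fourier_mul hf hg.int, integral_mul_const, integral_const_mul]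
  simp_rw [e1]
  rw [integral_integral_swap]
  · have e2 : ∀ ξ, ∫ ζ, ((‖ζ‖ ^ s : ℝ) : ℂ) * (𝓕 f ξ * 𝓕 g (ζ - ξ)) * 𝓕⁻ h ζ =
        ∫ η, ((‖ξ + η‖ ^ s : ℝ) : ℂ) * (𝓕 f ξ * 𝓕 g η * 𝓕⁻ h (ξ + η)) := by
      intro ξ
      rw [← integral_add_left_eq_self (fun ζ => ((‖ζ‖ ^ s : ℝ) : ℂ) * (𝓕 f ξ * 𝓕 g (ζ - ξ)) * 𝓕⁻ h ζ) ξ]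
      congr 1; funext η
      rw [add_sub_cancel_left]; ring
    simp_rw [e2]
    rw [Measure.volume_eq_prod, integral_prod]
    have hm : AEStronglyMeasurable (fun z : Eu n × Eu n => 𝓕⁻ h (z.1 + z.2)) (volume.prod volume) := by
      have : Continuous (fun z : Eu n × Eu n => 𝓕⁻ h (z.1 + z.2)) := hhc.comp (continuous_fst.add continuous_snd)
      exact this.aestronglyMeasurable
    have hI := integrable_weight_prod hs hf hg
    have := hI.mul_bdd (c := ∫ ξ, ‖h ξ‖) hm (Filter.Eventually.of_forall fun z => hhb _)
    refine this.congr (Filter.Eventually.of_forall fun z => ?_)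
    simp only; ring
  · have hm : AEStronglyMeasurable (fun z : Eu n × Eu n => 𝓕⁻ h z.1) (volume.prod volume) := by
      have : Continuous (fun z : Eu n × Eu n => 𝓕⁻ h z.1) := hhc.comp continuous_fst
      exact this.aestronglyMeasurable
    have hI := integrable_weight_conv hs hf hg
    exact hI.mul_bdd (c := ∫ ξ, ‖h ξ‖) hm (Filter.Eventually.of_forall fun z => hhb _)

/-- `(|ξ|² + |η|² + ξ·η)^N` as a sum of products of monomials of total degree `2N`. -/
lemma exists_expand (N : ℕ) : ∃ (ι : Type) (_ : Fintype ι) (L1 L2 : ι → List (Fin n)),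
    (∀ i, (L1 i).length + (L2 i).length = 2 * N) ∧ ∀ ξ η : Eu n,
      (∑ l, (ξ l ^ 2 + η l ^ 2 + ξ l * η l)) ^ N = ∑ i, mon (L1 i) ξ * mon (L2 i) η := by
  induction N with
  | zero => exact ⟨Unit, inferInstance, fun _ => [], fun _ => [], by simp, by simp [mon_nil]⟩
  | succ N ih =>
    obtain ⟨ι, _, L1, L2, hlen, h⟩ := ih
    refine ⟨ι × Fin n × Fin 3, inferInstance,
      fun i => if i.2.2 = 0 then i.2.1 :: i.2.1 :: L1 i.1 else if i.2.2 = 1 then L1 i.1 else i.2.1 :: L1 i.1,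
      fun i => if i.2.2 = 0 then L2 i.1 else if i.2.2 = 1 then i.2.1 :: i.2.1 :: L2 i.1 else i.2.1 :: L2 i.1,
      ?_, ?_⟩
    · rintro ⟨i, l, c⟩
      have := hlen i
      fin_cases c <;> simp <;> omega
    · intro ξ η
      rw [pow_succ, h, Fintype.sum_prod_type, Finset.sum_mul]
      refine Finset.sum_congr rfl fun i _ => ?_
      rw [Fintype.sum_prod_type, Finset.mul_sum]
      refine Finset.sum_congr rfl fun l _ => ?_
      simp only [Fin.sum_univ_three]
      simp [mon_cons]
      ring

/-- `|ζ|^{2N}` as a sum of monomials of degree `2N`. -/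
lemma exists_expand_norm (N : ℕ) : ∃ (ι : Type) (_ : Fintype ι) (M : ι → List (Fin n)),
    (∀ i, (M i).length = 2 * N) ∧ ∀ ζ : Eu n, (‖ζ‖ ^ 2) ^ N = ∑ i, mon (M i) ζ := by
  induction N with
  | zero => exact ⟨Unit, inferInstance, fun _ => [], by simp, by simp [mon_nil]⟩
  | succ N ih =>
    obtain ⟨ι, _, M, hlen, h⟩ := ih
    refine ⟨ι × Fin n, inferInstance, fun i => i.2 :: i.2 :: M i.1, ?_, ?_⟩
    · rintro ⟨i, l⟩
      have := hlen i
      simp; omega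
    · intro ζ
      rw [pow_succ, h, Fintype.sum_prod_type, Finset.sum_mul]
      refine Finset.sum_congr rfl fun i _ => ?_
      rw [EuclideanSpace.norm_sq_eq, Finset.mul_sum]
      refine Finset.sum_congr rfl fun l _ => ?_
      simp [mon_cons]
      ring

end ProductMultiplier

/-! ### Gaussian representation of `|ξ+η|^s` -/

noncomputable section KernelIdentity

variable {n : ℕ}

lemma Nice.cont {s : ℝ} {f : Eu n → ℂ} (hf : Nice s f) : Continuous f := by
  rw [← hf.inv]; exact continuous_fourierInv hf.int_hat

lemma Nice.Bdd {s : ℝ} {f : Eu n → ℂ} (hf : Nice s f) : Bdd f := by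
  rw [← hf.inv]; exact _root_.Bdd.fourierInv hf.int_hat

/-- Lebesgue measure on the parameter quadrant `(0,∞) × (0,∞)`. -/
def quad : Measure (ℝ × ℝ) := (volume.restrict (Set.Ioi (0:ℝ))).prod (volume.restrict (Set.Ioi (0:ℝ)))

instance : SFinite quad := by unfold quad; infer_instance

lemma ae_quad : ∀ᵐ z ∂quad, 0 < z.1 ∧ 0 < z.2 := by
  unfold quad
  rw [Measure.prod_restrict]
  filter_upwards [ae_restrict_mem (measurableSet_Ioi.prod measurableSet_Ioi)] with z hz
  exact hz

/-- Half of `|ξ|² + |η|² + |ξ+η|²`. -/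
def qf (ξ η : Eu n) : ℝ := ∑ l, (ξ l ^ 2 + η l ^ 2 + ξ l * η l)

lemma two_qf (ξ η : Eu n) : 2 * qf ξ η = ‖ξ‖ ^ 2 + ‖η‖ ^ 2 + ‖ξ + η‖ ^ 2 := by
  unfold qf
  simp only [EuclideanSpace.norm_sq_eq, Real.norm_eq_abs, sq_abs, PiLp.add_apply]
  rw [← Finset.sum_add_distrib, ← Finset.sum_add_distrib, Finset.mul_sum]
  exact Finset.sum_congr rfl fun l _ => by ring

lemma continuous_qf : Continuous fun z : Eu n × Eu n => qf z.1 z.2 := by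
  have : (fun z : Eu n × Eu n => qf z.1 z.2) =
      fun z => (‖z.1‖ ^ 2 + ‖z.2‖ ^ 2 + ‖z.1 + z.2‖ ^ 2) / 2 := by
    funext z; rw [← two_qf]; ring
  rw [this]; fun_prop

lemma qf_nonneg (ξ η : Eu n) : 0 ≤ qf ξ η := by
  have := two_qf ξ η
  have : 0 ≤ ‖ξ‖ ^ 2 + ‖η‖ ^ 2 + ‖ξ + η‖ ^ 2 := by positivity
  linarith

/-- The kernel whose integral over the quadrant is a multiple of `|ξ+η|^s`. -/
def ker (N : ℕ) (σ : ℝ) (z : ℝ × ℝ) (w : Eu n × Eu n) : ℝ :=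
  z.1 ^ ((N:ℝ) - 1) * z.2 ^ (σ - 1) * (qf w.1 w.2 ^ N * (‖w.1 + w.2‖ ^ 2) ^ N *
    (exp (-z.1 * ‖w.1‖ ^ 2) * exp (-z.1 * ‖w.2‖ ^ 2) * exp (-(z.1 + z.2) * ‖w.1 + w.2‖ ^ 2)))

/-- The Gaussian representation of `|ξ+η|^s`: with `σ = N - s/2`, the `t`-integral gives
`Γ(N)(2 qf)^{-N}` and the `r`-integral gives `Γ(σ)|ξ+η|^{-2σ}`. -/
lemma lintegral_ker {N : ℕ} (hN : 1 ≤ N) {s : ℝ} (hs : 0 < s) (hsN : s / 2 < N) (w : Eu n × Eu n) :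
    ∫⁻ z, ENNReal.ofReal (ker N (N - s / 2) z w) ∂quad =
      ENNReal.ofReal ((1 / 2) ^ N * Gamma N * Gamma (N - s / 2) * ‖w.1 + w.2‖ ^ s) := by
  by_cases h0 : w.1 + w.2 = 0
  · simp [ker, h0, hs.ne', show N ≠ 0 by omega]
  have hζ : 0 < ‖w.1 + w.2‖ := norm_pos_iff.2 h0
  set σ := (N:ℝ) - s / 2 with hσ
  have hσ0 : 0 < σ := by linarith
  have hN0 : (0:ℝ) < N := by exact_mod_cast hN
  have hq : 0 < qf w.1 w.2 := by
    have := two_qf w.1 w.2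
    have : 0 < ‖w.1‖ ^ 2 + ‖w.2‖ ^ 2 + ‖w.1 + w.2‖ ^ 2 := by positivity
    linarith
  have e : ∀ᵐ z ∂quad, ENNReal.ofReal (ker N σ z w) =
      ENNReal.ofReal (qf w.1 w.2 ^ N * (‖w.1 + w.2‖ ^ 2) ^ N) *
      (ENNReal.ofReal (z.1 ^ ((N:ℝ) - 1) * exp (-(2 * qf w.1 w.2 * z.1))) *
        ENNReal.ofReal (z.2 ^ (σ - 1) * exp (-(‖w.1 + w.2‖ ^ 2 * z.2)))) := by
    filter_upwards [ae_quad] with z hz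
    have := hz.1
    have := hz.2
    rw [← ENNReal.ofReal_mul (by positivity), ← ENNReal.ofReal_mul (by positivity)]
    congr 1
    unfold ker
    rw [← exp_add, ← exp_add]
    have h1 : -z.1 * ‖w.1‖ ^ 2 + -z.1 * ‖w.2‖ ^ 2 + -(z.1 + z.2) * ‖w.1 + w.2‖ ^ 2 =
      -(2 * qf w.1 w.2 * z.1) + -(‖w.1 + w.2‖ ^ 2 * z.2) := by
        rw [two_qf]; ring
    rw [h1, exp_add]; ring
  rw [lintegral_congr_ae e, lintegral_const_mul' _ _ ENNReal.ofReal_ne_top, quad,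
    lintegral_prod_mul (f := fun t : ℝ => ENNReal.ofReal (t ^ ((N:ℝ) - 1) * exp (-(2 * qf w.1 w.2 * t))))
      (g := fun t : ℝ => ENNReal.ofReal (t ^ (σ - 1) * exp (-(‖w.1 + w.2‖ ^ 2 * t)))) (by fun_prop) (by fun_prop),
    lintegral_gamma hN0 (by positivity), lintegral_gamma hσ0 (by positivity),
    ← ENNReal.ofReal_mul (mul_nonneg (Gamma_pos_of_pos hN0).le (by positivity)),
    ← ENNReal.ofReal_mul (by positivity)]
  congr 1
  have e1 : (2 * qf w.1 w.2) ^ (-(N:ℝ)) = (1 / 2) ^ N * (qf w.1 w.2 ^ N)⁻¹ := by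
    rw [rpow_neg (by positivity), rpow_natCast, mul_pow, mul_inv]; simp
  have e2 : (‖w.1 + w.2‖ ^ 2) ^ N * (‖w.1 + w.2‖ ^ 2) ^ (-σ) = ‖w.1 + w.2‖ ^ s := by
    rw [← rpow_natCast (‖w.1 + w.2‖ ^ 2) N, ← rpow_add (by positivity), ← rpow_natCast ‖w.1 + w.2‖ 2,
      ← rpow_mul hζ.le]
    congr 1
    rw [hσ]; push_cast; ring
  rw [e1, ← e2]
  field_simp

/-- The trilinear form to which the pairing is reduced. -/
def Tri (L1 L2 M : List (Fin n)) (f g h : Eu n → ℂ) (z : ℝ × ℝ) : ℝ≥0∞ :=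
  ∫⁻ x, ‖Qop L1 z.1 f x‖ₑ * ‖Qop L2 z.1 g x‖ₑ * ‖Qop M (z.1 + z.2) h x‖ₑ

lemma measurable_Tri_integrand (L1 L2 M : List (Fin n)) {f g h : Eu n → ℂ} (hf : Measurable f) (hg : Measurable g)
    (hh : Measurable h) : Measurable fun w : (ℝ × ℝ) × Eu n =>
      ‖Qop L1 w.1.1 f w.2‖ₑ * ‖Qop L2 w.1.1 g w.2‖ₑ * ‖Qop M (w.1.1 + w.1.2) h w.2‖ₑ := by
  have m1 := measurable_Qop_comp L1 hf (measurable_fst.comp (measurable_fst (α := ℝ × ℝ) (β := Eu n))) measurable_snd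
  have m2 := measurable_Qop_comp L2 hg (measurable_fst.comp (measurable_fst (α := ℝ × ℝ) (β := Eu n))) measurable_snd
  have m3 := measurable_Qop_comp M hh ((measurable_fst.comp (measurable_fst (α := ℝ × ℝ) (β := Eu n))).add
    (measurable_snd.comp (measurable_fst (α := ℝ × ℝ) (β := Eu n)))) measurable_snd
  exact (m1.enorm.mul m2.enorm).mul m3.enorm

lemma measurable_Tri (L1 L2 M : List (Fin n)) {f g h : Eu n → ℂ} (hf : Measurable f) (hg : Measurable g)
    (hh : Measurable h) : Measurable (Tri L1 L2 M f g h) :=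
  (measurable_Tri_integrand L1 L2 M hf hg hh).lintegral_prod_right'

lemma integrable_trilinear {a b h : Eu n → ℂ} (ha : Integrable a) (hb : Integrable b) (hh : Integrable h) :
    Integrable (fun z : Eu n × Eu n => a z.1 * b z.2 * 𝓕⁻ h (z.1 + z.2)) := by
  have hm : Continuous (fun z : Eu n × Eu n => 𝓕⁻ h (z.1 + z.2)) :=
    (continuous_fourierInv hh).comp (continuous_fst.add continuous_snd)
  have hI : Integrable (fun z : Eu n × Eu n => a z.1 * b z.2) := ha.mul_prod hb
  exact hI.mul_bdd (c := ∫ ξ, ‖h ξ‖) hm.aestronglyMeasurable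
    (Filter.Eventually.of_forall fun z => norm_fourierInv_le h _)

lemma integrable_weighted_trilinear {s : ℝ} (hs : 0 ≤ s) {f g h : Eu n → ℂ} (hf : Nice s f) (hg : Nice s g)
    (hh : Integrable h) : Integrable fun z : Eu n × Eu n =>
      ((‖z.1 + z.2‖ ^ s : ℝ) : ℂ) * (𝓕 f z.1 * 𝓕 g z.2 * 𝓕⁻ h (z.1 + z.2)) := by
  have hm : Continuous (fun z : Eu n × Eu n => 𝓕⁻ h (z.1 + z.2)) :=
    (continuous_fourierInv hh).comp (continuous_fst.add continuous_snd)
  have hI : Integrable (fun z : Eu n × Eu n => ((‖z.1 + z.2‖ ^ s : ℝ) : ℂ) * (𝓕 f z.1 * 𝓕 g z.2)) :=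
    integrable_weight_prod hs hf hg
  refine (hI.mul_bdd (c := ∫ ξ, ‖h ξ‖) hm.aestronglyMeasurable
    (Filter.Eventually.of_forall fun z => norm_fourierInv_le h _)).congr (Filter.Eventually.of_forall fun z => ?_)
  simp only; ring

/-- The summand of the Gaussian expansion of the kernel, as a function of the two frequencies. -/
def gterm (L1 L2 M : List (Fin n)) (f g h : Eu n → ℂ) (z : ℝ × ℝ) (w : Eu n × Eu n) : ℂ :=
  (gsym L1 z.1 w.1 * 𝓕 f w.1) * (gsym L2 z.1 w.2 * 𝓕 g w.2) * 𝓕⁻ (Qop M (z.1 + z.2) h) (w.1 + w.2)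

lemma integrable_gterm {s : ℝ} (L1 L2 M : List (Fin n)) {f g h : Eu n → ℂ} (hf : Nice s f) (hg : Nice s g)
    (hh : Integrable h) {z : ℝ × ℝ} (hz : 0 < z.1 ∧ 0 < z.2) : Integrable (gterm L1 L2 M f g h z) := by
  have h1 := integrable_gsym_mul L1 hz.1 hf.int_hat
  have h2 := integrable_gsym_mul L2 hz.1 hg.int_hat
  have h3 := integrable_Qop M (add_pos hz.1 hz.2) hh
  unfold gterm
  exact integrable_trilinear (a := fun ξ => gsym L1 z.1 ξ * 𝓕 f ξ) (b := fun ξ => gsym L2 z.1 ξ * 𝓕 g ξ) h1 h2 h3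

/-- The frequency integral of one term is at most the trilinear form `Tri`, by `trilinear`. -/
lemma enorm_integral_gterm_le {s : ℝ} (L1 L2 M : List (Fin n)) {f g h : Eu n → ℂ} (hf : Nice s f) (hg : Nice s g)
    (hh : Integrable h) {z : ℝ × ℝ} (hz : 0 < z.1 ∧ 0 < z.2) :
    ‖∫ w, gterm L1 L2 M f g h z w‖ₑ ≤ Tri L1 L2 M f g h z := by
  unfold gterm
  rw [trilinear (a := fun ξ => gsym L1 z.1 ξ * 𝓕 f ξ) (b := fun ξ => gsym L2 z.1 ξ * 𝓕 g ξ)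
    (integrable_gsym_mul L1 hz.1 hf.int_hat) (integrable_gsym_mul L2 hz.1 hg.int_hat)
    (integrable_Qop M (add_pos hz.1 hz.2) hh)]
  refine (enorm_integral_le_lintegral_enorm _).trans (le_of_eq ?_)
  unfold Tri
  congr 1; funext x
  rw [← Qop_fourierInv _ hz.1 hf.int_hat, ← Qop_fourierInv _ hz.1 hg.int_hat, hf.inv, hg.inv, enorm_mul, enorm_mul]

/-- Expanding the polynomial factors of `ker` into monomials splits the frequency integrand into the
terms `gterm`. -/
lemma ker_expand {N : ℕ} {ι κ : Type} [Fintype ι] [Fintype κ]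
    {L1 L2 : ι → List (Fin n)} {M : κ → List (Fin n)}
    (hLe : ∀ ξ η : Eu n, (∑ l, (ξ l ^ 2 + η l ^ 2 + ξ l * η l)) ^ N = ∑ i, mon (L1 i) ξ * mon (L2 i) η)
    (hM : ∀ j, (M j).length = 2 * N) (hMe : ∀ ζ : Eu n, (‖ζ‖ ^ 2) ^ N = ∑ j, mon (M j) ζ) (σ : ℝ)
    (f g : Eu n → ℂ) {h : Eu n → ℂ} (hh : Integrable h) {z : ℝ × ℝ} (hz : 0 < z.1 ∧ 0 < z.2) (w : Eu n × Eu n) :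
    (ker N σ z w : ℂ) * (𝓕 f w.1 * 𝓕 g w.2 * 𝓕⁻ h (w.1 + w.2)) =
      ((z.1 ^ ((N:ℝ) - 1) * z.2 ^ (σ - 1) : ℝ) : ℂ) *
        ∑ i, ∑ j, gterm (L1 i) (L2 i) (M j) f g h z w := by
  have e2 : ∀ i j, gterm (L1 i) (L2 i) (M j) f g h z w =
      ((mon (L1 i) w.1 * mon (L2 i) w.2 * mon (M j) (w.1 + w.2) : ℝ) : ℂ) *
      (((exp (-z.1 * ‖w.1‖ ^ 2) * exp (-z.1 * ‖w.2‖ ^ 2) * exp (-(z.1 + z.2) * ‖w.1 + w.2‖ ^ 2) : ℝ) : ℂ) *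
        (𝓕 f w.1 * 𝓕 g w.2 * 𝓕⁻ h (w.1 + w.2))) := by
    intro i j
    unfold gterm
    rw [fourierInv_Qop (by rw [hM]; exact even_two_mul N) (add_pos hz.1 hz.2) hh]
    simp only [gsym, Complex.ofReal_mul]
    ring
  simp_rw [e2, ← Finset.sum_mul, ← Complex.ofReal_sum, ← Finset.mul_sum, ← Finset.sum_mul]
  rw [← hLe, ← hMe]
  unfold ker qf
  simp only [Complex.ofReal_mul]
  ring

lemma enorm_ofReal_coe {r : ℝ} (hr : 0 ≤ r) : ‖(r : ℂ)‖ₑ = ENNReal.ofReal r := by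
  rw [← ofReal_norm, Complex.norm_real, Real.norm_of_nonneg hr]

/-- Reduction of the pairing of `(-Δ)^{s/2}(fg)` with `h` to finitely many trilinear forms built from
the operators `Q_{L,t}`. -/
lemma pairing_le {N : ℕ} (hN : 1 ≤ N) {s : ℝ} (hs : 0 < s) (hsN : s / 2 < N) {ι κ : Type} [Fintype ι] [Fintype κ]
    {L1 L2 : ι → List (Fin n)} {M : κ → List (Fin n)}
    (hLe : ∀ ξ η : Eu n, (∑ l, (ξ l ^ 2 + η l ^ 2 + ξ l * η l)) ^ N = ∑ i, mon (L1 i) ξ * mon (L2 i) η)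
    (hM : ∀ j, (M j).length = 2 * N) (hMe : ∀ ζ : Eu n, (‖ζ‖ ^ 2) ^ N = ∑ j, mon (M j) ζ)
    {f g h : Eu n → ℂ} (hf : Nice s f) (hg : Nice s g) (hhm : Measurable h) (hh : Integrable h) :
    ENNReal.ofReal ((1 / 2) ^ N * Gamma N * Gamma (N - s / 2)) *
      ‖∫ x, 𝓕⁻ (fun ζ => ((‖ζ‖ ^ s : ℝ) : ℂ) * 𝓕 (fun x => f x * g x) ζ) x * h x‖ₑ ≤
    ∑ i, ∑ j, ∫⁻ z, ENNReal.ofReal (z.1 ^ ((N:ℝ) - 1) * z.2 ^ ((N:ℝ) - s / 2 - 1)) * Tri (L1 i) (L2 i) (M j) f g h z ∂quad := by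
  set σ := (N:ℝ) - s / 2 with hσ
  have hσ0 : 0 < σ := by linarith
  have hN0 : (0:ℝ) < N := by exact_mod_cast hN
  set c := (1 / 2) ^ N * Gamma N * Gamma σ with hc
  have hc0 : 0 < c := mul_pos (mul_pos (by positivity) (Gamma_pos_of_pos hN0)) (Gamma_pos_of_pos hσ0)
  set H : Eu n × Eu n → ℂ := fun z => 𝓕 f z.1 * 𝓕 g z.2 * 𝓕⁻ h (z.1 + z.2) with hH
  have hwi : Integrable fun z : Eu n × Eu n => ((‖z.1 + z.2‖ ^ s : ℝ) : ℂ) * H z :=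
    integrable_weighted_trilinear hs.le hf hg hh
  have hHi : Integrable H := integrable_trilinear hf.int_hat hg.int_hat hh
  have e0 : (fun z : Eu n × Eu n => ((c * ‖z.1 + z.2‖ ^ s : ℝ) : ℂ) * H z) =
      fun z => (c : ℂ) * (((‖z.1 + z.2‖ ^ s : ℝ) : ℂ) * H z) := by
    funext z; rw [Complex.ofReal_mul, mul_assoc]
  have hkm : Measurable fun w : (ℝ × ℝ) × (Eu n × Eu n) => ker N σ w.1 w.2 := by
    have hq : Measurable fun w : (ℝ × ℝ) × (Eu n × Eu n) => qf w.2.1 w.2.2 :=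
      continuous_qf.measurable.comp measurable_snd
    unfold ker
    fun_prop
  have hk0 : ∀ᵐ z ∂quad, ∀ w : Eu n × Eu n, 0 ≤ ker N σ z w := by
    filter_upwards [ae_quad] with z hz w
    have h1 := qf_nonneg w.1 w.2
    have := hz.1
    have := hz.2
    unfold ker
    positivity
  have key := kernel_fubini (μ := quad) (ν := (volume : Measure (Eu n × Eu n))) (k := ker N σ) (H := H)
    (w := fun z => c * ‖z.1 + z.2‖ ^ s) hkm hk0 hHi.1 (fun y => by positivity)
    (Filter.Eventually.of_forall fun w => lintegral_ker hN hs hsN w) (by rw [e0]; exact hwi.const_mul _)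
  rw [e0, integral_const_mul, ← fracLap_mul_pair hs.le hf hg hh, enorm_mul, enorm_ofReal_coe hc0.le] at key
  refine key.trans ?_
  have hmeas : ∀ i j, Measurable fun z : ℝ × ℝ => ENNReal.ofReal (z.1 ^ ((N:ℝ) - 1) * z.2 ^ (σ - 1)) *
      Tri (L1 i) (L2 i) (M j) f g h z := fun i j =>
    (by fun_prop : Measurable fun z : ℝ × ℝ => ENNReal.ofReal (z.1 ^ ((N:ℝ) - 1) * z.2 ^ (σ - 1))).mul
      (measurable_Tri _ _ _ hf.cont.measurable hg.cont.measurable hhm)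
  have e3 : ∀ i, ∑ j, ∫⁻ z, ENNReal.ofReal (z.1 ^ ((N:ℝ) - 1) * z.2 ^ (σ - 1)) *
      Tri (L1 i) (L2 i) (M j) f g h z ∂quad = ∫⁻ z, ∑ j, ENNReal.ofReal (z.1 ^ ((N:ℝ) - 1) * z.2 ^ (σ - 1)) *
      Tri (L1 i) (L2 i) (M j) f g h z ∂quad := fun i => (lintegral_finsetSum Finset.univ (fun j _ => hmeas i j)).symm
  rw [Finset.sum_congr rfl fun i _ => e3 i,
    ← lintegral_finsetSum Finset.univ (fun i _ => Finset.measurable_sum _ fun j _ => hmeas i j)]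
  refine lintegral_mono_ae ?_
  filter_upwards [ae_quad] with z hz
  have e1 : ∀ w, (ker N σ z w : ℂ) * H w = _ := ker_expand hLe hM hMe σ f g hh hz
  have hw0 : 0 ≤ z.1 ^ ((N:ℝ) - 1) * z.2 ^ (σ - 1) := by
    have := hz.1
    have := hz.2
    positivity
  rw [integral_congr_ae (Filter.Eventually.of_forall e1), integral_const_mul,
    integral_finsetSum _ (fun i _ => integrable_finsetSum _ fun j _ => integrable_gterm _ _ _ hf hg hh hz),
    enorm_mul, enorm_ofReal_coe hw0]
  simp_rw [← Finset.mul_sum]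
  refine mul_le_mul_right ?_ _
  refine (enorm_sum_le _ _).trans (Finset.sum_le_sum fun i _ => ?_)
  rw [integral_finsetSum _ (fun j _ => integrable_gterm _ _ _ hf hg hh hz)]
  exact (enorm_sum_le _ _).trans (Finset.sum_le_sum fun j _ => enorm_integral_gterm_le _ _ _ hf hg hh hz)

end KernelIdentity

/-! ### The trilinear bound -/

noncomputable section TrilinearBound

variable {n : ℕ}

/-- The Cauchy–Schwarz inequality in `L²(dt/t)`. -/
lemma cs_dt {P Q : ℝ → ℝ≥0∞} (hP : Measurable P) (hQ : Measurable Q) :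
    ∫⁻ t in Set.Ioi (0:ℝ), P t * Q t * ENNReal.ofReal t⁻¹ ≤
      (∫⁻ t in Set.Ioi (0:ℝ), P t ^ 2 * ENNReal.ofReal t⁻¹) ^ (1 / 2 : ℝ) *
      (∫⁻ t in Set.Ioi (0:ℝ), Q t ^ 2 * ENNReal.ofReal t⁻¹) ^ (1 / 2 : ℝ) := by
  have hs : ∀ t : ℝ, ENNReal.ofReal t⁻¹ ^ (1 / 2 : ℝ) * ENNReal.ofReal t⁻¹ ^ (1 / 2 : ℝ) = ENNReal.ofReal t⁻¹ := by
    intro t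
    rw [← ENNReal.rpow_add_of_nonneg _ _ (by norm_num) (by norm_num)]; norm_num
  have h := ENNReal.lintegral_mul_le_Lp_mul_Lq (volume.restrict (Set.Ioi (0:ℝ))) Real.HolderConjugate.two_two
    (f := fun t => P t * ENNReal.ofReal t⁻¹ ^ (1 / 2 : ℝ)) (g := fun t => Q t * ENNReal.ofReal t⁻¹ ^ (1 / 2 : ℝ))
    (by fun_prop) (by fun_prop)
  have e : ∀ (R : ℝ → ℝ≥0∞) (t : ℝ), (R t * ENNReal.ofReal t⁻¹ ^ (1 / 2 : ℝ)) ^ (2:ℝ) = R t ^ 2 * ENNReal.ofReal t⁻¹ := by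
    intro R t
    rw [show (2:ℝ) = ((2:ℕ):ℝ) by norm_num, ENNReal.rpow_natCast, mul_pow]
    congr 1
    rw [sq]
    push_cast
    exact hs t
  simp only [e] at h
  refine le_trans (le_of_eq (lintegral_congr fun t => ?_)) h
  simp only [Pi.mul_apply]
  calc P t * Q t * ENNReal.ofReal t⁻¹
      = P t * Q t * (ENNReal.ofReal t⁻¹ ^ (1 / 2 : ℝ) * ENNReal.ofReal t⁻¹ ^ (1 / 2 : ℝ)) := by rw [hs t]
    _ = _ := by ring

/-- Hardy's inequality for the two fractional integrals combined with Cauchy–Schwarz in `dt/t`. -/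
lemma bilinear_hardy {σ₁ κ₁ σ₂ κ₂ : ℝ} (hσ₁ : 0 < σ₁) (h₁ : σ₁ < κ₁) (hσ₂ : 0 < σ₂) (h₂ : σ₂ < κ₂) :
    ∃ K : ℝ≥0∞, K ≠ ∞ ∧ ∀ A B : ℝ → ℝ≥0∞, Measurable A → Measurable B →
      ∫⁻ t in Set.Ioi (0:ℝ), ENNReal.ofReal (t ^ (κ₁ - σ₁ + (κ₂ - σ₂) - 1)) *
        ((∫⁻ r in Set.Ioi (0:ℝ), ENNReal.ofReal (r ^ (σ₁ - 1)) * A (t + r)) *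
         (∫⁻ r in Set.Ioi (0:ℝ), ENNReal.ofReal (r ^ (σ₂ - 1)) * B (t + r))) ≤
      K * ((∫⁻ t in Set.Ioi (0:ℝ), ENNReal.ofReal (t ^ (2 * κ₁)) * A t ^ 2 * ENNReal.ofReal t⁻¹) ^ (1 / 2 : ℝ) *
        (∫⁻ t in Set.Ioi (0:ℝ), ENNReal.ofReal (t ^ (2 * κ₂)) * B t ^ 2 * ENNReal.ofReal t⁻¹) ^ (1 / 2 : ℝ)) := by
  obtain ⟨K1, hK1, H1⟩ := hardy hσ₁ h₁
  obtain ⟨K2, hK2, H2⟩ := hardy hσ₂ h₂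
  refine ⟨K1 ^ (1 / 2 : ℝ) * K2 ^ (1 / 2 : ℝ), ENNReal.mul_ne_top (ENNReal.rpow_ne_top_of_nonneg (by norm_num) hK1)
    (ENNReal.rpow_ne_top_of_nonneg (by norm_num) hK2), fun A B hA hB => ?_⟩
  have hm : ∀ (σ κ : ℝ) (A : ℝ → ℝ≥0∞), Measurable A → Measurable fun t : ℝ => ENNReal.ofReal (t ^ (κ - σ)) *
      ∫⁻ r in Set.Ioi (0:ℝ), ENNReal.ofReal (r ^ (σ - 1)) * A (t + r) := by
    intro σ κ A hA
    refine Measurable.mul (by fun_prop) ?_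
    exact Measurable.lintegral_prod_right' (f := fun z : ℝ × ℝ => ENNReal.ofReal (z.2 ^ (σ - 1)) * A (z.1 + z.2))
      (by fun_prop)
  calc _ = ∫⁻ t in Set.Ioi (0:ℝ), (ENNReal.ofReal (t ^ (κ₁ - σ₁)) *
          ∫⁻ r in Set.Ioi (0:ℝ), ENNReal.ofReal (r ^ (σ₁ - 1)) * A (t + r)) *
        (ENNReal.ofReal (t ^ (κ₂ - σ₂)) *
          ∫⁻ r in Set.Ioi (0:ℝ), ENNReal.ofReal (r ^ (σ₂ - 1)) * B (t + r)) * ENNReal.ofReal t⁻¹ := by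
        refine setLIntegral_congr_fun measurableSet_Ioi fun t ht => ?_
        have ht : 0 < t := ht
        rw [rpow_sub_one ht.ne', rpow_add ht, div_eq_mul_inv, ENNReal.ofReal_mul (by positivity),
          ENNReal.ofReal_mul (by positivity)]
        ring
    _ ≤ _ := cs_dt (hm σ₁ κ₁ A hA) (hm σ₂ κ₂ B hB)
    _ ≤ _ := mul_le_mul' (ENNReal.rpow_le_rpow (H1 A hA) (by norm_num)) (ENNReal.rpow_le_rpow (H2 B hB) (by norm_num))
    _ = _ := by
        rw [ENNReal.mul_rpow_of_nonneg _ _ (by norm_num), ENNReal.mul_rpow_of_nonneg _ _ (by norm_num)]; ring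

lemma Sf_eq (L : List (Fin n)) (f : Eu n → ℂ) (x : Eu n) : Sf L f x =
    (∫⁻ t in Set.Ioi (0:ℝ), ENNReal.ofReal (t ^ (2 * ((L.length : ℝ) / 2))) * ‖Qop L t f x‖ₑ ^ 2 * ENNReal.ofReal t⁻¹) ^
      (1 / 2 : ℝ) := by
  unfold Sf Sq
  congr 1
  refine lintegral_congr fun t => ?_
  rw [mul_div_cancel₀ _ (two_ne_zero), rpow_natCast]

/-- Tonelli's theorem: the trilinear forms integrated in `t` and `r` first, with `x` fixed. -/
lemma tri_swap (L1 L2 M : List (Fin n)) {f g h : Eu n → ℂ} (hf : Measurable f) (hg : Measurable g)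
    (hh : Measurable h) (α β : ℝ) :
    ∫⁻ z, ENNReal.ofReal (z.1 ^ α * z.2 ^ β) * Tri L1 L2 M f g h z ∂quad =
      ∫⁻ x, ∫⁻ t in Set.Ioi (0:ℝ), ENNReal.ofReal (t ^ α) * (‖Qop L1 t f x‖ₑ * ‖Qop L2 t g x‖ₑ *
        ∫⁻ r in Set.Ioi (0:ℝ), ENNReal.ofReal (r ^ β) * ‖Qop M (t + r) h x‖ₑ) := by
  have hG := measurable_Tri_integrand L1 L2 M hf hg hh
  have hw : Measurable fun z : ℝ × ℝ => ENNReal.ofReal (z.1 ^ α * z.2 ^ β) := by fun_prop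
  have hwG : Measurable fun w : (ℝ × ℝ) × Eu n => ENNReal.ofReal (w.1.1 ^ α * w.1.2 ^ β) *
      (‖Qop L1 w.1.1 f w.2‖ₑ * ‖Qop L2 w.1.1 g w.2‖ₑ * ‖Qop M (w.1.1 + w.1.2) h w.2‖ₑ) :=
    (hw.comp measurable_fst).mul hG
  unfold Tri
  simp_rw [← lintegral_const_mul' _ _ ENNReal.ofReal_ne_top]
  rw [lintegral_lintegral_swap (by exact hwG.aemeasurable)]
  refine lintegral_congr fun x => ?_
  have hx : Measurable fun z : ℝ × ℝ => ENNReal.ofReal (z.1 ^ α * z.2 ^ β) *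
      (‖Qop L1 z.1 f x‖ₑ * ‖Qop L2 z.1 g x‖ₑ * ‖Qop M (z.1 + z.2) h x‖ₑ) :=
    hwG.comp (measurable_id.prodMk measurable_const)
  rw [quad, lintegral_prod _ hx.aemeasurable]
  refine setLIntegral_congr_fun measurableSet_Ioi fun t ht => ?_
  have ht : 0 < t := ht
  have hM : Measurable fun r : ℝ => ENNReal.ofReal (r ^ β) * ‖Qop M (t + r) h x‖ₑ :=
    (by fun_prop : Measurable fun r : ℝ => ENNReal.ofReal (r ^ β)).mul
      (measurable_Qop_comp M hh (measurable_const.add measurable_id) measurable_const).enorm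
  rw [← mul_assoc, ← lintegral_const_mul _ hM]
  refine lintegral_congr fun r => ?_
  rw [ENNReal.ofReal_mul (by positivity)]
  ring

/-- The trilinear estimate when the operator on `f` carries at least half of the derivatives. -/
lemma tri_bound (hn : 1 ≤ n) {N : ℕ} {s : ℝ} (hs : 0 < s) (hsN : s < N) {L1 L2 M : List (Fin n)}
    (hL : L1.length + L2.length = 2 * N) (hM : M.length = 2 * N) (hL1 : N ≤ L1.length) :
    ∃ K : ℝ≥0∞, K ≠ ∞ ∧ ∀ f g h : Eu n → ℂ, Nice s f → Measurable g → Measurable h →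
      ∫⁻ z, ENNReal.ofReal (z.1 ^ ((N:ℝ) - 1) * z.2 ^ ((N:ℝ) - s / 2 - 1)) * Tri L1 L2 M f g h z ∂quad ≤
        K * ∫⁻ x, (Sf L1 (𝓕⁻ (fun ξ => ((‖ξ‖ ^ s : ℝ) : ℂ) * 𝓕 f ξ)) x * Mx (fun y => ‖g y‖ₑ) x) * Sf M h x := by
  have hL1' : (N:ℝ) ≤ L1.length := by exact_mod_cast hL1
  have hM' : (M.length : ℝ) = 2 * N := by exact_mod_cast hM
  have hL' : (L1.length : ℝ) + L2.length = 2 * N := by exact_mod_cast hL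
  -- The exponents satisfy `κ₁ - σ₁ + κ₂ - σ₂ - 1 = N - 1 - |L2|/2`: the power of `t` that remains
  -- after `g` is bounded by its maximal function.
  obtain ⟨K, hK, HK⟩ := bilinear_hardy (σ₁ := s / 2) (κ₁ := (L1.length : ℝ) / 2) (σ₂ := (N:ℝ) - s / 2)
    (κ₂ := (M.length : ℝ) / 2) (by linarith) (by linarith) (by linarith) (by linarith)
  obtain ⟨C, hC, HC⟩ := Qop_le_Mx L2
  have hG : 0 < Gamma (s / 2) := Gamma_pos_of_pos (by linarith)
  set γ := ENNReal.ofReal (Gamma (s / 2)) with hγ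
  have hγ0 : γ ≠ 0 := by simpa [hγ] using hG
  have hγt : γ ≠ ∞ := ENNReal.ofReal_ne_top
  have hKK : ENNReal.ofReal C * γ⁻¹ * K ≠ ∞ :=
    ENNReal.mul_ne_top (ENNReal.mul_ne_top ENNReal.ofReal_ne_top (ENNReal.inv_ne_top.2 hγ0)) hK
  refine ⟨ENNReal.ofReal C * γ⁻¹ * K, hKK, fun f g h hf hg hh => ?_⟩
  rw [tri_swap L1 L2 M hf.cont.measurable hg hh, ← lintegral_const_mul' _ _ hKK]
  refine lintegral_mono fun x => ?_
  set F := 𝓕⁻ (fun ξ => ((‖ξ‖ ^ s : ℝ) : ℂ) * 𝓕 f ξ) with hF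
  have hFm : Measurable F := (continuous_fourierInv hf.int_s).measurable
  have hA : Measurable fun t => ‖Qop L1 t F x‖ₑ := (measurable_Qop_comp L1 hFm measurable_id measurable_const).enorm
  have hB : Measurable fun t => ‖Qop M t h x‖ₑ := (measurable_Qop_comp M hh measurable_id measurable_const).enorm
  have key := HK _ _ hA hB
  rw [← Sf_eq, ← Sf_eq] at key
  set PA : ℝ → ℝ≥0∞ := fun t => ∫⁻ r in Set.Ioi (0:ℝ), ENNReal.ofReal (r ^ (s / 2 - 1)) * ‖Qop L1 (t + r) F x‖ₑ with hPA
  set PB : ℝ → ℝ≥0∞ := fun t => ∫⁻ r in Set.Ioi (0:ℝ), ENNReal.ofReal (r ^ ((N:ℝ) - s / 2 - 1)) * ‖Qop M (t + r) h x‖ₑ with hPB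
  have hPAm : Measurable PA := by
    refine Measurable.lintegral_prod_right' (f := fun z : ℝ × ℝ => ENNReal.ofReal (z.2 ^ (s / 2 - 1)) * ‖Qop L1 (z.1 + z.2) F x‖ₑ) ?_
    exact (by fun_prop : Measurable fun z : ℝ × ℝ => ENNReal.ofReal (z.2 ^ (s / 2 - 1))).mul
      (measurable_Qop_comp L1 hFm (measurable_fst.add measurable_snd) measurable_const).enorm
  have hPBm : Measurable PB := by
    refine Measurable.lintegral_prod_right' (f := fun z : ℝ × ℝ => ENNReal.ofReal (z.2 ^ ((N:ℝ) - s / 2 - 1)) * ‖Qop M (z.1 + z.2) h x‖ₑ) ?_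
    exact (by fun_prop : Measurable fun z : ℝ × ℝ => ENNReal.ofReal (z.2 ^ ((N:ℝ) - s / 2 - 1))).mul
      (measurable_Qop_comp M hh (measurable_fst.add measurable_snd) measurable_const).enorm
  calc _ ≤ ∫⁻ t in Set.Ioi (0:ℝ), (ENNReal.ofReal C * γ⁻¹ * Mx (fun y => ‖g y‖ₑ) x) *
        (ENNReal.ofReal (t ^ ((L1.length : ℝ) / 2 - s / 2 + ((M.length : ℝ) / 2 - ((N:ℝ) - s / 2)) - 1)) * (PA t * PB t)) := by
        refine setLIntegral_mono_ae' measurableSet_Ioi (Filter.Eventually.of_forall fun t ht => ?_)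
        have ht : 0 < t := ht
        have h1 : ‖Qop L1 t f x‖ₑ ≤ γ⁻¹ * PA t := by
          have := plane_wave hn hs L1 ht hf.int_hat hf.int_s x
          rw [hf.inv] at this
          calc ‖Qop L1 t f x‖ₑ = γ⁻¹ * (γ * ‖Qop L1 t f x‖ₑ) := by
                rw [← mul_assoc, ENNReal.inv_mul_cancel hγ0 hγt, one_mul]
            _ ≤ _ := mul_le_mul_right this _
        have h2 := HC t ht g hg x
        have e : t ^ ((L1.length : ℝ) / 2 - s / 2 + ((M.length : ℝ) / 2 - ((N:ℝ) - s / 2)) - 1) =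
            t ^ ((N:ℝ) - 1) * t ^ (-(L2.length : ℝ) / 2) := by
          rw [← rpow_add ht]; congr 1; linarith
        rw [e, ENNReal.ofReal_mul (by positivity)]
        rw [ENNReal.ofReal_mul hC.le] at h2
        calc _ ≤ ENNReal.ofReal (t ^ ((N:ℝ) - 1)) * ((γ⁻¹ * PA t) * (ENNReal.ofReal C * ENNReal.ofReal (t ^ (-(L2.length : ℝ) / 2)) *
              Mx (fun y => ‖g y‖ₑ) x) * PB t) := by gcongr
          _ = _ := by ring
    _ = (ENNReal.ofReal C * γ⁻¹ * Mx (fun y => ‖g y‖ₑ) x) * _ :=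
        lintegral_const_mul _ ((by fun_prop : Measurable fun t : ℝ => ENNReal.ofReal (t ^ ((L1.length : ℝ) / 2 - s / 2 +
          ((M.length : ℝ) / 2 - ((N:ℝ) - s / 2)) - 1))).mul (hPAm.mul hPBm))
    _ ≤ (ENNReal.ofReal C * γ⁻¹ * Mx (fun y => ‖g y‖ₑ) x) * _ := mul_le_mul_right key _
    _ = _ := by ring

/-- The trilinear form is symmetric in `f` and `g`, which reduces the case of few derivatives on `f`
to `tri_bound`. -/
lemma Tri_swap (L1 L2 M : List (Fin n)) (f g h : Eu n → ℂ) : Tri L1 L2 M f g h = Tri L2 L1 M g f h := by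
  funext z
  unfold Tri
  congr 1; funext x; ring

end TrilinearBound

/-! ### The Leibniz rule -/

noncomputable section Assembly

variable {n : ℕ}

/-- Schwartz functions satisfy all the integrability conditions used in the argument. -/
lemma nice_schwartz {s : ℝ} (hs : 0 ≤ s) (f : SchwartzMap (Eu n) ℂ) : Nice s ⇑f := by
  have hhat : Integrable (𝓕 (⇑f)) := by
    rw [← SchwartzMap.fourier_coe]; exact (𝓕 f).integrable
  refine ⟨f.integrable, hhat, ?_, f.continuous.fourierInv_fourier_eq f.integrable hhat⟩
  obtain ⟨k, hk⟩ := exists_nat_ge s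
  have hdom : Integrable (fun ξ => ‖(𝓕 f : SchwartzMap (Eu n) ℂ) ξ‖ + ‖ξ‖ ^ k * ‖(𝓕 f : SchwartzMap (Eu n) ℂ) ξ‖) :=
    (𝓕 f).integrable.norm.add ((𝓕 f).integrable_pow_mul volume k)
  rw [← SchwartzMap.fourier_coe]
  refine hdom.mono' ((continuous_weight hs).mul (𝓕 f).continuous).aestronglyMeasurable
    (Filter.Eventually.of_forall fun ξ => ?_)
  have hw : ‖ξ‖ ^ s ≤ 1 + ‖ξ‖ ^ k := by
    rcases le_total ‖ξ‖ 1 with h | h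
    · have := rpow_le_one (norm_nonneg ξ) h hs
      have := pow_nonneg (norm_nonneg ξ) k
      linarith
    · have := rpow_le_rpow_of_exponent_le h hk
      rw [rpow_natCast] at this
      linarith
  rw [norm_mul, Complex.norm_real, norm_of_nonneg (rpow_nonneg (norm_nonneg _) _)]
  calc _ ≤ (1 + ‖ξ‖ ^ k) * _ := mul_le_mul_of_nonneg_right hw (norm_nonneg _)
    _ = _ := by ring

lemma fracLap_bdd {s : ℝ} {f : Eu n → ℂ} (hf : Nice s f) : Bdd (fracLap s f) := Bdd.fourierInv hf.int_s

/-- The pointwise majorant attached to a term of the expanded symbol: the factor that receives at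
least half of the derivatives is measured by a square function of its fractional Laplacian, the
other one by the maximal function. -/
def Br (s : ℝ) (N : ℕ) (L1 L2 : List (Fin n)) (f g : Eu n → ℂ) (x : Eu n) : ℝ≥0∞ :=
  if N ≤ L1.length then Sf L1 (fracLap s f) x * Mx (fun y => ‖g y‖ₑ) x
  else Sf L2 (fracLap s g) x * Mx (fun y => ‖f y‖ₑ) x

lemma measurable_Br {s : ℝ} (N : ℕ) (L1 L2 : List (Fin n)) {f g : Eu n → ℂ} (hf : Nice s f) (hg : Nice s g) :
    Measurable (Br s N L1 L2 f g) := by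
  unfold Br
  split_ifs
  · exact (measurable_Sf L1 (fracLap_bdd hf).meas).mul (measurable_Mx _)
  · exact (measurable_Sf L2 (fracLap_bdd hg).meas).mul (measurable_Mx _)

/-- The trilinear bound in either case: `|L1| + |L2| = 2N`, so at least one of the operators on `f` and
`g` carries `N` derivatives. -/
lemma tri_le_Br (hn : 1 ≤ n) {N : ℕ} {s : ℝ} (hs : 0 < s) (hsN : s < N) {L1 L2 M : List (Fin n)}
    (hL : L1.length + L2.length = 2 * N) (hM : M.length = 2 * N) :
    ∃ K : ℝ≥0∞, K ≠ ∞ ∧ ∀ f g h : Eu n → ℂ, Nice s f → Nice s g → Measurable h →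
      ∫⁻ z, ENNReal.ofReal (z.1 ^ ((N:ℝ) - 1) * z.2 ^ ((N:ℝ) - s / 2 - 1)) * Tri L1 L2 M f g h z ∂quad ≤
        K * ∫⁻ x, Br s N L1 L2 f g x * Sf M h x := by
  by_cases hL1 : N ≤ L1.length
  · obtain ⟨K, hK, H⟩ := tri_bound hn hs hsN hL hM hL1
    refine ⟨K, hK, fun f g h hf hg hh => ?_⟩
    simp only [Br, if_pos hL1]
    exact H f g h hf hg.cont.measurable hh
  · obtain ⟨K, hK, H⟩ := tri_bound hn hs hsN (L1 := L2) (L2 := L1) (by omega) hM (by omega)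
    refine ⟨K, hK, fun f g h hf hg hh => ?_⟩
    simp only [Br, if_neg hL1]
    rw [Tri_swap]
    exact H g f h hg hf.cont.measurable hh

/-- Hölder's inequality for a square function of `(-Δ)^{s/2} f` times a maximal function of `g`. -/
lemma Sf_Mx_nrm (hn : 1 ≤ n) {s : ℝ} {L : List (Fin n)} (hL : L ≠ [])
    {p p₁ p₂ : ℝ} {q q₁ q₂ : ℝ≥0∞} (hp : 1 < p) (hp1 : 1 < p₁) (hp2 : 1 < p₂)
    (hq : 1 ≤ q) (hq1 : 1 ≤ q₁) (hq2 : 1 ≤ q₂)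
    (hpe : 1 / p = 1 / p₁ + 1 / p₂) (hqe : 1 / q = 1 / q₁ + 1 / q₂) :
    ∃ K : ℝ≥0∞, K ≠ ∞ ∧ ∀ f g : Eu n → ℂ, Nice s f → Nice s g →
      nrm volume p q (fun x => Sf L (fracLap s f) x * Mx (fun y => ‖g y‖ₑ) x) ≤
        K * (lorentz p₁ q₁ (fracLap s f) * lorentz p₂ q₂ g) := by
  obtain ⟨K1, hK1, H1⟩ := Sf_lorentz hn hL hp1 hq1
  obtain ⟨K2, hK2, H2⟩ := Mx_lorentz hn hp2 hq2
  refine ⟨2 * ((K1 * 4) * (K2 * 4)), ENNReal.mul_ne_top (by norm_num) (ENNReal.mul_ne_top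
    (ENNReal.mul_ne_top hK1 (by norm_num)) (ENNReal.mul_ne_top hK2 (by norm_num))), fun f g hf hg => ?_⟩
  obtain ⟨B1, hB1⟩ := (fracLap_bdd hf).bdd
  obtain ⟨B2, hB2⟩ := hg.Bdd.bdd
  have h1 := (H1 _ (fracLap_bdd hf)).trans (mul_le_mul_right (nrm_le_lorentz hp1.le hq1 hB1) K1)
  have h2 := (H2 _ hg.Bdd).trans (mul_le_mul_right (nrm_le_lorentz hp2.le hq2 hB2) K2)
  refine (nrm_mul hp.le hpe hq hq1 hq2 hqe _ _).trans ?_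
  calc _ ≤ 2 * ((K1 * (4 * lorentz p₁ q₁ (fracLap s f))) * (K2 * (4 * lorentz p₂ q₂ g))) :=
        mul_le_mul_right (mul_le_mul' h1 h2) _
    _ = _ := by ring

/-- The functions `Br` obey the Lorentz bound of the Leibniz rule. -/
lemma Br_nrm (hn : 1 ≤ n) {s : ℝ} {N : ℕ} (hN : 1 ≤ N) {L1 L2 : List (Fin n)}
    (hL : L1.length + L2.length = 2 * N) {p p₁ p₂ p₃ p₄ : ℝ} {q q₁ q₂ q₃ q₄ : ℝ≥0∞}
    (hp : 1 < p) (hp1 : 1 < p₁) (hp2 : 1 < p₂) (hp3 : 1 < p₃) (hp4 : 1 < p₄)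
    (hq : 1 ≤ q) (hq1 : 1 ≤ q₁) (hq2 : 1 ≤ q₂) (hq3 : 1 ≤ q₃) (hq4 : 1 ≤ q₄)
    (hpe1 : 1 / p = 1 / p₁ + 1 / p₂) (hpe2 : 1 / p = 1 / p₃ + 1 / p₄)
    (hqe1 : 1 / q = 1 / q₁ + 1 / q₂) (hqe2 : 1 / q = 1 / q₃ + 1 / q₄) :
    ∃ K : ℝ≥0∞, K ≠ ∞ ∧ ∀ f g : Eu n → ℂ, Nice s f → Nice s g →
      nrm volume p q (Br s N L1 L2 f g) ≤ K * (lorentz p₁ q₁ (fracLap s f) * lorentz p₂ q₂ g +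
        lorentz p₃ q₃ f * lorentz p₄ q₄ (fracLap s g)) := by
  by_cases hL1 : N ≤ L1.length
  · obtain ⟨K, hK, H⟩ := Sf_Mx_nrm (s := s) (L := L1) hn (by rintro rfl; simp at hL1; omega)
      hp hp1 hp2 hq hq1 hq2 hpe1 hqe1
    refine ⟨K, hK, fun f g hf hg => ?_⟩
    have e : Br s N L1 L2 f g = fun x => Sf L1 (fracLap s f) x * Mx (fun y => ‖g y‖ₑ) x := by
      funext x; simp only [Br, if_pos hL1]
    rw [e]
    exact (H f g hf hg).trans (mul_le_mul_right le_self_add _)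
  · obtain ⟨K, hK, H⟩ := Sf_Mx_nrm (s := s) (L := L2) hn (by rintro rfl; simp at hL; omega)
      hp hp4 hp3 hq hq4 hq3 (hpe2.trans (add_comm _ _)) (hqe2.trans (add_comm _ _))
    refine ⟨K, hK, fun f g hf hg => ?_⟩
    have e : Br s N L1 L2 f g = fun x => Sf L2 (fracLap s g) x * Mx (fun y => ‖f y‖ₑ) x := by
      funext x; simp only [Br, if_neg hL1]
    rw [e]
    refine (H g f hg hf).trans (mul_le_mul_right ?_ _)
    rw [mul_comm]
    exact le_add_self

/-- The quasi-triangle inequality for finite sums. -/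
lemma nrm_sum {α ι : Type*} [MeasurableSpace α] {μ : Measure α} {p : ℝ} (hp : 1 ≤ p) {q : ℝ≥0∞} (hq : 1 ≤ q)
    (S : Finset ι) : ∃ K : ℝ≥0∞, K ≠ ∞ ∧ ∀ Φ : ι → α → ℝ≥0∞,
      nrm μ p q (fun x => ∑ i ∈ S, Φ i x) ≤ K * ∑ i ∈ S, nrm μ p q (Φ i) := by
  classical
  induction S using Finset.induction_on with
  | empty =>
    refine ⟨0, by simp, fun Φ => ?_⟩
    have := nrm_const_mul (μ := μ) (p := p) hq 0 (fun _ => 0)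
    simpa using this
  | insert a S ha ih =>
    obtain ⟨K, hK, H⟩ := ih
    refine ⟨4 * (1 + K), ENNReal.mul_ne_top (by norm_num) (by simpa using hK), fun Φ => ?_⟩
    simp only [Finset.sum_insert ha]
    refine (nrm_add hp hq _ _).trans ?_
    rw [mul_assoc]
    refine mul_le_mul_right ?_ _
    rw [mul_add, add_mul, add_mul, one_mul, one_mul]
    refine add_le_add le_self_add ((H Φ).trans ?_)
    exact le_add_self

/-- `L^a` bounds for the finite sum of square functions of the test function. -/
lemma sum_Sf_strong (hn : 1 ≤ n) {κ : Type} [Fintype κ] {M : κ → List (Fin n)} (hM : ∀ j, M j ≠ [])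
    {a : ℝ} (ha : GoodExp a) (ha1 : 1 ≤ a) {D : ℝ≥0∞} (hD : D ≠ ∞) :
    ∃ C : ℝ≥0∞, C ≠ ∞ ∧ ∀ h : Eu n → ℂ, Bdd h →
      ∫⁻ x, (D * ∑ j, Sf (M j) h x) ^ a ≤ C * ∫⁻ x, ‖h x‖ₑ ^ a := by
  have hs := fun j => sq_strong hn (hM j) ha
  choose C hC H using hs
  have h0 : 0 ≤ a := by linarith
  have hD' : D ^ a ≠ ∞ := ENNReal.rpow_ne_top_of_nonneg h0 hD
  have hc : ((Finset.univ : Finset κ).card : ℝ≥0∞) ^ (a - 1) ≠ ∞ :=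
    ENNReal.rpow_ne_top_of_nonneg (by linarith) (by simp)
  refine ⟨D ^ a * (((Finset.univ : Finset κ).card : ℝ≥0∞) ^ (a - 1) * ∑ j, ENNReal.ofReal (C j)),
    ENNReal.mul_ne_top hD' (ENNReal.mul_ne_top hc (by simp)), fun h hh => ?_⟩
  have hm : ∀ j, Measurable fun x => Sf (M j) h x ^ a := fun j => (measurable_Sf (M j) hh.meas).pow_const _
  calc _ ≤ ∫⁻ x, D ^ a * (((Finset.univ : Finset κ).card : ℝ≥0∞) ^ (a - 1) * ∑ j, Sf (M j) h x ^ a) := by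
        refine lintegral_mono fun x => ?_
        rw [ENNReal.mul_rpow_of_nonneg _ _ h0]
        exact mul_le_mul_right (ENNReal.rpow_sum_le_const_mul_sum_rpow _ _ ha1) _
    _ = D ^ a * (((Finset.univ : Finset κ).card : ℝ≥0∞) ^ (a - 1) * ∑ j, ∫⁻ x, Sf (M j) h x ^ a) := by
        rw [lintegral_const_mul' _ _ hD', lintegral_const_mul' _ _ hc, lintegral_finsetSum _ (fun j _ => hm j)]
    _ ≤ D ^ a * (((Finset.univ : Finset κ).card : ℝ≥0∞) ^ (a - 1) * ∑ j, ENNReal.ofReal (C j) * ∫⁻ x, ‖h x‖ₑ ^ a) := by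
        refine mul_le_mul_right (mul_le_mul_right (Finset.sum_le_sum fun j _ => ?_) _) _
        simp_rw [Sf_rpow]
        exact H j h hh
    _ = _ := by rw [← Finset.sum_mul]; ring

/-- The test function `1_E · conj F / |F|`, against which `F` integrates to `∫_E |F|`. -/
lemma dual_test {F : Eu n → ℂ} (hF : Bdd F) {E : Set (Eu n)} (hE : MeasurableSet E) (hE' : volume E ≠ ∞)
    {l : ℝ≥0∞} (hl : ∀ x ∈ E, l < ‖F x‖ₑ) :
    ∃ h : Eu n → ℂ, Bdd h ∧ Integrable h ∧ (∀ a : ℝ, 0 < a → ∫⁻ x, ‖h x‖ₑ ^ a ≤ volume E) ∧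
      l * volume E ≤ ‖∫ x, F x * h x‖ₑ := by
  obtain ⟨B, hB⟩ := hF.bdd
  set h : Eu n → ℂ := E.indicator fun x => (starRingEnd ℂ) (F x) / (‖F x‖ : ℂ) with hh
  have hm : Measurable h := by
    refine Measurable.indicator ?_ hE
    have h1 : Measurable fun x => (starRingEnd ℂ) (F x) := Complex.continuous_conj.measurable.comp hF.meas
    have h2 : Measurable fun x => ((‖F x‖ : ℝ) : ℂ) := Complex.continuous_ofReal.measurable.comp hF.meas.norm
    exact h1.div h2
  have hle : ∀ x, ‖h x‖ ≤ E.indicator (fun _ => (1:ℝ)) x := by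
    intro x
    by_cases hx : x ∈ E
    · rw [hh, Set.indicator_of_mem hx, Set.indicator_of_mem hx, norm_div, RCLike.norm_conj, Complex.norm_real, norm_norm]
      exact div_self_le_one _
    · rw [hh, Set.indicator_of_notMem hx, Set.indicator_of_notMem hx, norm_zero]
  have hle1 : ∀ x, ‖h x‖ ≤ 1 := fun x => (hle x).trans (Set.indicator_le_self' (fun _ _ => zero_le_one) x)
  have hi1 : Integrable (E.indicator fun _ : Eu n => (1:ℝ)) :=
    (integrable_indicator_iff hE).2 (integrableOn_const hE')
  have hW : Integrable (E.indicator F) := by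
    refine (hi1.const_mul B).mono' (hF.meas.indicator hE).aestronglyMeasurable (Filter.Eventually.of_forall fun x => ?_)
    by_cases hx : x ∈ E
    · rw [Set.indicator_of_mem hx, Set.indicator_of_mem hx, mul_one]; exact hB x
    · rw [Set.indicator_of_notMem hx, Set.indicator_of_notMem hx]; simp
  refine ⟨h, ⟨hm, 1, hle1⟩, hi1.mono' hm.aestronglyMeasurable (Filter.Eventually.of_forall hle), fun a ha => ?_, ?_⟩
  · calc _ ≤ ∫⁻ x, E.indicator (fun _ => (1:ℝ≥0∞)) x := by
          refine lintegral_mono fun x => ?_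
          by_cases hx : x ∈ E
          · rw [Set.indicator_of_mem hx]
            refine ENNReal.rpow_le_one ?_ ha.le
            rw [← ofReal_norm]
            exact ENNReal.ofReal_le_one.2 (hle1 x)
          · rw [hh, Set.indicator_of_notMem hx]; simp [ha]
      _ = _ := by rw [lintegral_indicator hE]; simp
  · have e : ∀ x, F x * h x = ((‖E.indicator F x‖ : ℝ) : ℂ) := by
      intro x
      by_cases hx : x ∈ E
      · rw [hh, Set.indicator_of_mem hx, Set.indicator_of_mem hx, mul_div_assoc', Complex.mul_conj, Complex.normSq_eq_norm_sq]
        by_cases h0 : ‖F x‖ = 0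
        · simp [h0]
        · have : ((‖F x‖ : ℝ) : ℂ) ≠ 0 := by exact_mod_cast h0
          field_simp
          push_cast
          ring
      · rw [hh, Set.indicator_of_notMem hx, Set.indicator_of_notMem hx]; simp
    simp_rw [e]
    rw [integral_complex_ofReal, ← ofReal_norm, Complex.norm_real,
      norm_of_nonneg (integral_nonneg fun x => norm_nonneg _), ofReal_integral_norm_eq_lintegral_enorm hW]
    calc l * volume E = ∫⁻ x in E, l := by simp
      _ ≤ ∫⁻ x in E, ‖F x‖ₑ := setLIntegral_mono hF.meas.enorm fun x hx => (hl x hx).le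
      _ = ∫⁻ x, E.indicator (fun x => ‖F x‖ₑ) x := (lintegral_indicator hE _).symm
      _ = _ := by
          refine lintegral_congr fun x => ?_
          by_cases hx : x ∈ E
          · rw [Set.indicator_of_mem hx, Set.indicator_of_mem hx]
          · rw [Set.indicator_of_notMem hx, Set.indicator_of_notMem hx]; simp

/-- There are admissible exponents `a0`, `a1` for the square function on both sides of the conjugate
exponent of `p`. -/
lemma exists_dual_exps {p : ℝ} (hp : 1 < p) : ∃ a0 a1 : ℝ, GoodExp a0 ∧ GoodExp a1 ∧ 1 < a0 ∧ 1 < a1 ∧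
    1 / p < 1 - 1 / a0 ∧ 1 - 1 / a1 < 1 / p := by
  have hp0 : 0 < p := by linarith
  obtain ⟨m, hm2, hm⟩ := exists_even_gt (p / (p - 1))
  have hm2' : (2:ℝ) ≤ m := by exact_mod_cast hm2
  have hp1 : 0 < p - 1 := by linarith
  set b := max p 2 + 1 with hb
  have hb1 : p < b := by have := le_max_left p 2; linarith
  have hb2 : 2 < b := by have := le_max_right p 2; linarith
  refine ⟨2 * m, b / (b - 1), Or.inr ⟨m, hm2, rfl⟩, Or.inl ⟨?_, ?_⟩, by linarith, ?_, ?_, ?_⟩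
  · rw [lt_div_iff₀ (by linarith)]; linarith
  · rw [div_lt_iff₀ (by linarith)]; linarith
  · rw [lt_div_iff₀ (by linarith)]; linarith
  · rw [div_lt_iff₀ hp1] at hm
    have hm0 : (0:ℝ) < 2 * m := by linarith
    rw [lt_sub_iff_add_lt, div_add_div _ _ hp0.ne' hm0.ne', div_lt_one (by positivity)]
    linarith
  · have hb0 : 0 < b := by linarith
    rw [one_div_div, sub_div, div_self hb0.ne', sub_sub_cancel]
    exact one_div_lt_one_div_of_lt hp0 hb1

/-- The pairing of `(-Δ)^{s/2}(fg)` with a test function, bounded by the pointwise majorants. -/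
lemma pairing_le_Br (hn : 1 ≤ n) {N : ℕ} (hN : 1 ≤ N) {s : ℝ} (hs : 0 < s) (hsN : s < N)
    {ι κ : Type} [Fintype ι] [Fintype κ] {L1 L2 : ι → List (Fin n)} {M : κ → List (Fin n)}
    (hL : ∀ i, (L1 i).length + (L2 i).length = 2 * N)
    (hLe : ∀ ξ η : Eu n, (∑ l, (ξ l ^ 2 + η l ^ 2 + ξ l * η l)) ^ N = ∑ i, mon (L1 i) ξ * mon (L2 i) η)
    (hM : ∀ j, (M j).length = 2 * N) (hMe : ∀ ζ : Eu n, (‖ζ‖ ^ 2) ^ N = ∑ j, mon (M j) ζ) :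
    ∃ D : ℝ≥0∞, D ≠ ∞ ∧ ∀ f g h : Eu n → ℂ, Nice s f → Nice s g → Measurable h → Integrable h →
      ‖∫ x, fracLap s (fun x => f x * g x) x * h x‖ₑ ≤
        ∫⁻ x, (∑ i, Br s N (L1 i) (L2 i) f g x) * (D * ∑ j, Sf (M j) h x) := by
  have hK := fun i j => tri_le_Br hn hs hsN (hL i) (hM j)
  choose K hK H using hK
  set c := ENNReal.ofReal ((1 / 2) ^ N * Gamma N * Gamma (N - s / 2)) with hc
  have hcpos : 0 < (1 / 2 : ℝ) ^ N * Gamma N * Gamma (N - s / 2) := by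
    have h1 : 0 < Gamma (N:ℝ) := Gamma_pos_of_pos (by linarith)
    have h2 : 0 < Gamma ((N:ℝ) - s / 2) := Gamma_pos_of_pos (by linarith)
    positivity
  have hc0 : c ≠ 0 := by simpa [hc] using hcpos
  have hct : c ≠ ∞ := ENNReal.ofReal_ne_top
  set KK := ∑ i, ∑ j, K i j with hKK
  have hKt : KK ≠ ∞ := by
    rw [hKK]
    exact ENNReal.sum_ne_top.2 fun i _ => ENNReal.sum_ne_top.2 fun j _ => hK i j
  have hKle : ∀ i j, K i j ≤ KK := fun i j =>
    (Finset.single_le_sum (f := fun j => K i j) (fun _ _ => bot_le) (Finset.mem_univ j)).trans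
      (Finset.single_le_sum (f := fun i => ∑ j, K i j) (fun _ _ => bot_le) (Finset.mem_univ i))
  have hD : c⁻¹ * KK ≠ ∞ := ENNReal.mul_ne_top (ENNReal.inv_ne_top.2 hc0) hKt
  refine ⟨c⁻¹ * KK, hD, fun f g h hf hg hhm hh => ?_⟩
  have hBm : ∀ i, Measurable (Br s N (L1 i) (L2 i) f g) := fun i => measurable_Br N _ _ hf hg
  have hSm : ∀ j, Measurable (Sf (M j) h) := fun j => measurable_Sf _ hhm
  have hBSm : ∀ i j, Measurable fun x => Br s N (L1 i) (L2 i) f g x * Sf (M j) h x := fun i j => (hBm i).mul (hSm j)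
  have key := pairing_le hN hs (by linarith : s / 2 < N) hLe hM hMe hf hg hhm hh
  rw [← hc] at key
  have key2 : c * ‖∫ x, fracLap s (fun x => f x * g x) x * h x‖ₑ ≤
      KK * ∑ i, ∑ j, ∫⁻ x, Br s N (L1 i) (L2 i) f g x * Sf (M j) h x := by
    refine le_trans key ?_
    rw [Finset.mul_sum]
    refine Finset.sum_le_sum fun i _ => ?_
    rw [Finset.mul_sum]
    exact Finset.sum_le_sum fun j _ => (H i j f g h hf hg hhm).trans (mul_le_mul_left (hKle i j) _)
  calc _ = c⁻¹ * (c * ‖∫ x, fracLap s (fun x => f x * g x) x * h x‖ₑ) := by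
        rw [← mul_assoc, ENNReal.inv_mul_cancel hc0 hct, one_mul]
    _ ≤ c⁻¹ * (KK * ∑ i, ∑ j, ∫⁻ x, Br s N (L1 i) (L2 i) f g x * Sf (M j) h x) := mul_le_mul_right key2 _
    _ = (c⁻¹ * KK) * ∫⁻ x, ∑ i, ∑ j, Br s N (L1 i) (L2 i) f g x * Sf (M j) h x := by
        rw [lintegral_finsetSum _ (fun i _ => Finset.measurable_fun_sum _ fun j _ => hBSm i j), mul_assoc]
        congr 2
        refine Finset.sum_congr rfl fun i _ => ?_
        rw [lintegral_finsetSum _ (fun j _ => hBSm i j)]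
    _ = _ := by
        rw [← lintegral_const_mul' _ _ hD]
        refine lintegral_congr fun x => ?_
        rw [← Finset.sum_mul_sum]
        ring

/-- The Leibniz rule for `s > 0`: `dual_interp` applied with `u = |(-Δ)^{s/2}(fg)|`, `Φ` the sum of the
functions `Br`, and `Ψ` the sum of the square functions of the test function of `dual_test`. -/
lemma leibniz_pos (hn : 1 ≤ n) {s : ℝ} (hs : 0 < s) {p p₁ p₂ p₃ p₄ : ℝ} {q q₁ q₂ q₃ q₄ : ℝ≥0∞}
    (hp : 1 < p) (hp1 : 1 < p₁) (hp2 : 1 < p₂) (hp3 : 1 < p₃) (hp4 : 1 < p₄)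
    (hq : 1 ≤ q) (hq1 : 1 ≤ q₁) (hq2 : 1 ≤ q₂) (hq3 : 1 ≤ q₃) (hq4 : 1 ≤ q₄)
    (hpe1 : 1 / p = 1 / p₁ + 1 / p₂) (hpe2 : 1 / p = 1 / p₃ + 1 / p₄)
    (hqe1 : 1 / q = 1 / q₁ + 1 / q₂) (hqe2 : 1 / q = 1 / q₃ + 1 / q₄) :
    ∃ K : ℝ≥0∞, K ≠ ∞ ∧ ∀ f g : Eu n → ℂ, Nice s f → Nice s g →
      lorentz p q (fracLap s (fun x => f x * g x)) ≤ K * (lorentz p₁ q₁ (fracLap s f) * lorentz p₂ q₂ g +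
        lorentz p₃ q₃ f * lorentz p₄ q₄ (fracLap s g)) := by
  obtain ⟨N, hsN⟩ := exists_nat_gt s
  have hN : 1 ≤ N := by
    have : (0:ℝ) < N := hs.trans hsN
    exact_mod_cast this
  obtain ⟨ι, _, L1, L2, hL, hLe⟩ := exists_expand (n := n) N
  obtain ⟨κ, _, M, hM, hMe⟩ := exists_expand_norm (n := n) N
  obtain ⟨a0, a1, hg0, hg1, h0, h1, hpa0, hpa1⟩ := exists_dual_exps hp
  obtain ⟨D, hD, HD⟩ := pairing_le_Br hn hN hs hsN hL hLe hM hMe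
  have hMn : ∀ j, M j ≠ [] := fun j hj => by
    have := hM j
    rw [hj] at this
    simp at this
    omega
  obtain ⟨C0, hC0, H0⟩ := sum_Sf_strong hn hMn hg0 h0.le hD
  obtain ⟨C1, hC1, H1⟩ := sum_Sf_strong hn hMn hg1 h1.le hD
  have hC : C0 + C1 ≠ ∞ := ENNReal.add_ne_top.2 ⟨hC0, hC1⟩
  obtain ⟨K, hK, HK⟩ := dual_interp (α := Eu n) (μ := volume) (by linarith : 0 < p) h0 h1 hpa0 hpa1 hq hC
  have hB := fun i => Br_nrm (s := s) hn hN (hL i) hp hp1 hp2 hp3 hp4 hq hq1 hq2 hq3 hq4 hpe1 hpe2 hqe1 hqe2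
  choose B hBt HB using hB
  obtain ⟨S, hS, HS⟩ := nrm_sum (α := Eu n) (μ := volume) hp.le hq (Finset.univ : Finset ι)
  refine ⟨2 * (K * (S * ∑ i, B i)), ENNReal.mul_ne_top (by norm_num) (ENNReal.mul_ne_top hK
    (ENNReal.mul_ne_top hS (ENNReal.sum_ne_top.2 fun i _ => hBt i))), fun f g hf hg => ?_⟩
  set F := fracLap s (fun x => f x * g x) with hF
  have hFb : Bdd F := Bdd.fourierInv (integrable_fracLap_symbol hs.le hf hg)
  obtain ⟨b, hb⟩ := hFb.bdd
  have hΦ : Measurable fun x => ∑ i, Br s N (L1 i) (L2 i) f g x :=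
    Finset.measurable_fun_sum _ fun i _ => measurable_Br N _ _ hf hg
  have hdual := HK (fun x => ‖F x‖ₑ) _ hFb.meas.enorm hΦ fun l E hE hE' hl => by
    obtain ⟨h, hhb, hhi, hha, hhl⟩ := dual_test hFb hE hE' hl
    refine ⟨fun x => D * ∑ j, Sf (M j) h x, ?_, hhl.trans (HD f g h hf hg hhb.meas hhi), ?_, ?_⟩
    · exact (Finset.measurable_fun_sum _ fun j _ => measurable_Sf _ hhb.meas).const_mul D
    · exact (H0 h hhb).trans (mul_le_mul' le_self_add (hha a0 (by linarith)))
    · exact (H1 h hhb).trans (mul_le_mul' le_add_self (hha a1 (by linarith)))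
  set R := lorentz p₁ q₁ (fracLap s f) * lorentz p₂ q₂ g + lorentz p₃ q₃ f * lorentz p₄ q₄ (fracLap s g) with hR
  calc lorentz p q F ≤ 2 * nrm volume p q (fun x => ‖F x‖ₑ) := lorentz_le_nrm hp.le hq hb
    _ ≤ 2 * (K * nrm volume p q fun x => ∑ i, Br s N (L1 i) (L2 i) f g x) := mul_le_mul_right hdual _
    _ ≤ 2 * (K * (S * ∑ i, nrm volume p q (Br s N (L1 i) (L2 i) f g))) :=
        mul_le_mul_right (mul_le_mul_right (HS _) _) _
    _ ≤ 2 * (K * (S * ∑ i, B i * R)) :=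
        mul_le_mul_right (mul_le_mul_right (mul_le_mul_right (Finset.sum_le_sum fun i _ => HB i f g hf hg) _) _) _
    _ = _ := by rw [← Finset.sum_mul]; ring

lemma fracLap_zero {f : Eu n → ℂ} (h : 𝓕⁻ (𝓕 f) = f) : fracLap 0 f = f := by
  unfold fracLap
  simpa using h

/-- The case `s = 0` is Hölder's inequality, since `(-Δ)^0` is the identity. -/
lemma leibniz_zero {p p₁ p₂ : ℝ} {q q₁ q₂ : ℝ≥0∞} (hp : 1 < p) (hp1 : 1 < p₁) (hp2 : 1 < p₂)
    (hq : 1 ≤ q) (hq1 : 1 ≤ q₁) (hq2 : 1 ≤ q₂)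
    (hpe : 1 / p = 1 / p₁ + 1 / p₂) (hqe : 1 / q = 1 / q₁ + 1 / q₂) {f g : Eu n → ℂ}
    (hf : Nice 0 f) (hg : Nice 0 g) :
    lorentz p q (fracLap 0 (fun x => f x * g x)) ≤ 64 * (lorentz p₁ q₁ (fracLap 0 f) * lorentz p₂ q₂ g) := by
  obtain ⟨B1, hB1⟩ := hf.Bdd.bdd
  obtain ⟨B2, hB2⟩ := hg.Bdd.bdd
  have hfg : Integrable fun x => f x * g x :=
    hf.int.mul_bdd (c := B2) hg.cont.aestronglyMeasurable (Filter.Eventually.of_forall hB2)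
  have hhat : Integrable (𝓕 fun x => f x * g x) := by
    simpa using integrable_fracLap_symbol le_rfl hf hg
  have hb : ∀ x, ‖f x * g x‖ ≤ B1 * B2 := fun x => by
    rw [norm_mul]
    exact mul_le_mul (hB1 x) (hB2 x) (norm_nonneg _) ((norm_nonneg _).trans (hB1 x))
  have hinv : 𝓕⁻ (𝓕 fun x => f x * g x) = fun x => f x * g x :=
    (hf.cont.mul hg.cont).fourierInv_fourier_eq hfg hhat
  rw [fracLap_zero hf.inv, fracLap_zero (f := fun x => f x * g x) hinv]
  refine (lorentz_le_nrm hp.le hq hb).trans ?_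
  simp_rw [enorm_mul]
  calc _ ≤ 2 * (2 * ((4 * lorentz p₁ q₁ f) * (4 * lorentz p₂ q₂ g))) :=
        mul_le_mul_right ((nrm_mul hp.le hpe hq hq1 hq2 hqe _ _).trans (mul_le_mul_right
          (mul_le_mul' (nrm_le_lorentz hp1.le hq1 hB1) (nrm_le_lorentz hp2.le hq2 hB2)) _)) _
    _ = _ := by ring

end Assembly

/-- Fractional Leibniz rule in Lorentz spaces. -/
theorem lorentz_leibniz (n : ℕ) (hn : 1 ≤ n) (s p p₁ p₂ p₃ p₄ : ℝ) (q q₁ q₂ q₃ q₄ : ℝ≥0∞)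
    (hs : 0 ≤ s)
    (hp : 1 < p) (hp1 : 1 < p₁) (hp2 : 1 < p₂) (hp3 : 1 < p₃) (hp4 : 1 < p₄)
    (hq : 1 ≤ q) (hq1 : 1 ≤ q₁) (hq2 : 1 ≤ q₂) (hq3 : 1 ≤ q₃) (hq4 : 1 ≤ q₄)
    (hpe1 : 1 / p = 1 / p₁ + 1 / p₂) (hpe2 : 1 / p = 1 / p₃ + 1 / p₄)
    (hqe1 : 1 / q = 1 / q₁ + 1 / q₂) (hqe2 : 1 / q = 1 / q₃ + 1 / q₄) :
    ∃ C > 0, ∀ f g : SchwartzMap (EuclideanSpace ℝ (Fin n)) ℂ,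
      lorentz p q (fracLap s (fun x => f x * g x)) ≤
        ENNReal.ofReal C *
          (lorentz p₁ q₁ (fracLap s ⇑f) * lorentz p₂ q₂ (⇑g) +
            lorentz p₃ q₃ (⇑f) * lorentz p₄ q₄ (fracLap s ⇑g)) := by
  rcases hs.eq_or_lt with rfl | hs'
  · refine ⟨64, by norm_num, fun f g => ?_⟩
    refine (leibniz_zero hp hp1 hp2 hq hq1 hq2 hpe1 hqe1 (nice_schwartz le_rfl f) (nice_schwartz le_rfl g)).trans ?_
    rw [show ENNReal.ofReal 64 = 64 by norm_num]
    exact mul_le_mul_right le_self_add _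
  · obtain ⟨K, hK, H⟩ := leibniz_pos hn hs' hp hp1 hp2 hp3 hp4 hq hq1 hq2 hq3 hq4 hpe1 hpe2 hqe1 hqe2
    refine ⟨K.toReal + 1, by positivity, fun f g => ?_⟩
    refine (H f g (nice_schwartz hs f) (nice_schwartz hs g)).trans (mul_le_mul_left ?_ _)
    calc K = ENNReal.ofReal K.toReal := (ENNReal.ofReal_toReal hK).symm
      _ ≤ _ := ENNReal.ofReal_le_ofReal (by linarith)
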